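/- Under the assumptions of the main theorem (𝒜, ℬ as in the context with Λ_𝒜 spanning, Ω bounded open with 𝓛ⁿ(∂Ω) = 0, ν a Young measure on Ω with λ(∂Ω) = 0 whose barycentre v satisfies 𝒜v = 0 distributionally and which satisfies the a.e. Jensen-type inequalities for 𝒜-quasiconvex integrands of linear growth), the following holds: given ε > 0 there exist t_ε > 0 and, for each t ∈ (0,t_ε], a map ψ = ψ^{(t)} ∈ C_c^∞(Ω,𝕌) with ‖ψ‖_{W^{l−1,1}(Ω,𝕌)} < ε such that | ∫_Ω η(x) ( ⟨Φ, ν_x⟩ + λ^a(x) ⟨Φ^∞, ν_x^∞⟩ ) dx − ∫_Ω η(x) Φ( (φ_t * (ν̄_· + λ^a ν̄_·^∞))(x) + ℬψ(x) ) dx | < ε holds for all t ∈ (0,t_ε], uniformly over all η : Ω̄ → ℝ and Φ ∈ ℍ with ‖η‖_LIP ≤ 1 and ‖TΦ‖_LIP ≤ 1. Here φ_t * (ν̄_· + λ^a ν̄_·^∞) denotes the mollification at scale t of the absolutely continuous part of the barycentre of ν (extended by zero outside Ω). -/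

import Mathlib

open MeasureTheory Filter Topology

noncomputable section

/-! ## Basic PDE setup -/

abbrev Dom (n : ℕ) := Fin n → ℝ

def unitCube (n : ℕ) : Set (Dom n) := Set.univ.pi fun _ => Set.Ioo (-(1/2) : ℝ) (1/2)

def closedUnitCube (n : ℕ) : Set (Dom n) := Set.univ.pi fun _ => Set.Icc (-(1/2) : ℝ) (1/2)

/-- The finite set of multi-indices of degree `k`. -/
def degSet (n k : ℕ) : Finset (Fin n → ℕ) :=
  (Fintype.piFinset fun _ : Fin n => Finset.range (k+1)).filter fun α => (∑ i, α i) = k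

/-- Partial derivative in the `j`-th coordinate direction. -/
def pderivDir {n : ℕ} {V : Type*} [NormedAddCommGroup V] [NormedSpace ℝ V]
    (j : Fin n) (u : Dom n → V) : Dom n → V :=
  fun x => fderiv ℝ u x (Pi.single j 1)

/-- The multi-index partial derivative `∂^α`. -/
def mderiv {n : ℕ} {V : Type*} [NormedAddCommGroup V] [NormedSpace ℝ V]
    (α : Fin n → ℕ) (u : Dom n → V) : Dom n → V :=
  (List.finRange n).foldr (fun j f => (pderivDir j)^[α j] f) u

/-- The action of a homogeneous `k`-th order constant-coefficient operator with
coefficients `A α` on a function. -/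
def opApply {n : ℕ} {V W : Type*} [NormedAddCommGroup V] [NormedSpace ℝ V]
    [NormedAddCommGroup W] [NormedSpace ℝ W]
    (A : (Fin n → ℕ) → (V →L[ℝ] W)) (k : ℕ) (u : Dom n → V) (x : Dom n) : W :=
  ∑ α ∈ degSet n k, A α (mderiv α u x)

/-- The symbol `𝒜(ξ) = Σ_{|α|=k} ξ^α A_α`. -/
def opSymbol {n : ℕ} {V W : Type*} [NormedAddCommGroup V] [NormedSpace ℝ V]
    [NormedAddCommGroup W] [NormedSpace ℝ W]
    (A : (Fin n → ℕ) → (V →L[ℝ] W)) (k : ℕ) (ξ : Dom n) : V →L[ℝ] W :=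
  ∑ α ∈ degSet n k, (∏ i, ξ i ^ α i) • A α

/-- The wave cone `Λ_𝒜 = ⋃_{ξ ≠ 0} ker 𝒜(ξ)`. -/
def waveCone {n : ℕ} {V W : Type*} [NormedAddCommGroup V] [NormedSpace ℝ V]
    [NormedAddCommGroup W] [NormedSpace ℝ W]
    (A : (Fin n → ℕ) → (V →L[ℝ] W)) (k : ℕ) : Set V :=
  {v | ∃ ξ : Dom n, ξ ≠ 0 ∧ opSymbol A k ξ v = 0}

/-- The wave cone is spanning. -/
def SpanningCone {n : ℕ} {V W : Type*} [NormedAddCommGroup V] [NormedSpace ℝ V]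
    [NormedAddCommGroup W] [NormedSpace ℝ W]
    (A : (Fin n → ℕ) → (V →L[ℝ] W)) (k : ℕ) : Prop :=
  Submodule.span ℝ (waveCone A k) = ⊤

/-- `ℬ` is an exact potential of `𝒜`:  `ker 𝒜(ξ) = im ℬ(ξ)` for all `ξ ≠ 0`. -/
def ExactPotential {n : ℕ} {U V W : Type*} [NormedAddCommGroup V] [NormedSpace ℝ V]
    [NormedAddCommGroup W] [NormedSpace ℝ W] [NormedAddCommGroup U] [NormedSpace ℝ U]
    (A : (Fin n → ℕ) → (V →L[ℝ] W)) (k : ℕ)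
    (B : (Fin n → ℕ) → (U →L[ℝ] V)) (l : ℕ) : Prop :=
  ∀ ξ : Dom n, ξ ≠ 0 → LinearMap.ker (opSymbol A k ξ : V →ₗ[ℝ] W) = LinearMap.range (opSymbol B l ξ : U →ₗ[ℝ] V)

/-- `ℤⁿ`-periodicity. -/
def ZPeriodic {n : ℕ} {V : Type*} (v : Dom n → V) : Prop :=
  ∀ (x : Dom n) (m : Fin n → ℤ), v (x + fun i => (m i : ℝ)) = v x

/-- `𝒜`-quasiconvexity of a continuous integrand. -/
def AQuasiconvex {n : ℕ} {V W : Type*} [NormedAddCommGroup V] [NormedSpace ℝ V]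
    [NormedAddCommGroup W] [NormedSpace ℝ W]
    (A : (Fin n → ℕ) → (V →L[ℝ] W)) (k : ℕ) (f : V → ℝ) : Prop :=
  Continuous f ∧ ∀ (z : V) (v : Dom n → V), ContDiff ℝ (⊤ : ℕ∞) v → ZPeriodic v →
    (∫ x in unitCube n, v x) = 0 → (∀ x, opApply A k v x = 0) →
    f z ≤ ∫ x in unitCube n, f (z + v x)

def LinearGrowth {V : Type*} [NormedAddCommGroup V] (f : V → ℝ) : Prop :=
  ∃ c : ℝ, ∀ z, |f z| ≤ c * (1 + ‖z‖)

/-- Upper recession function `f^∞(z) = limsup_{t→∞, z'→z} f(tz')/t`. -/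
def urec {V : Type*} [NormedAddCommGroup V] [NormedSpace ℝ V] (f : V → ℝ) (z : V) : ℝ :=
  limsup (fun p : ℝ × V => f (p.1 • p.2) / p.1) (atTop ×ˢ 𝓝 z)

/-- The radial recession function `z ↦ limsup_{t→∞} f(tz)/t`. -/
def rrec {V : Type*} [NormedAddCommGroup V] [NormedSpace ℝ V] (f : V → ℝ) (z : V) : ℝ :=
  limsup (fun t : ℝ => f (t • z) / t) atTop

/-- `g` is the recession function of `Φ`, the limit being locally uniform. -/
def HasRec {V : Type*} [NormedAddCommGroup V] [NormedSpace ℝ V] (Φ g : V → ℝ) : Prop :=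
  TendstoLocallyUniformly (fun (t : ℝ) (z : V) => Φ (t • z) / t) g atTop

/-- Membership in the class `ℍ`. -/
def MemH {V : Type*} [NormedAddCommGroup V] [NormedSpace ℝ V] (Φ : V → ℝ) : Prop :=
  Continuous Φ ∧ LinearGrowth Φ ∧ ∃ g : V → ℝ, HasRec Φ g

/-- `C_c^∞` functions with support in `Ω`. -/
def CcSmooth {n : ℕ} {U : Type*} [NormedAddCommGroup U] [NormedSpace ℝ U]
    (Ω : Set (Dom n)) (u : Dom n → U) : Prop :=
  ContDiff ℝ (⊤ : ℕ∞) u ∧ HasCompactSupport u ∧ tsupport u ⊆ Ω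

/-- The `W^{l-1,1}` norm : sum of the `L¹` norms of derivatives of order `< l`. -/
def sobNorm {n : ℕ} {U : Type*} [NormedAddCommGroup U] [NormedSpace ℝ U]
    (l : ℕ) (u : Dom n → U) : ℝ :=
  ∑ j ∈ Finset.range l, ∫ x : Dom n, ‖iteratedFDeriv ℝ j u x‖

/-- Membership of a pair `(ν⁰, ν^∞)` in the set `Y(z)` of Young measures generated by
sequences `z + ℬ u_j` with `u_j ∈ C_c^∞(𝕏, 𝕌)` and `‖u_j‖_{W^{l-1,1}} → 0`. -/
def memY {n : ℕ} {U V : Type*} [NormedAddCommGroup V] [InnerProductSpace ℝ V]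
    [FiniteDimensional ℝ V] [MeasurableSpace V] [BorelSpace V]
    [NormedAddCommGroup U] [NormedSpace ℝ U]
    (B : (Fin n → ℕ) → (U →L[ℝ] V)) (l : ℕ) (z : V)
    (nu0 : Measure V) (nuInf : Measure (Metric.sphere (0:V) 1)) : Prop :=
  ∃ u : ℕ → Dom n → U,
    (∀ j, CcSmooth (unitCube n) (u j)) ∧
    Tendsto (fun j => sobNorm l (u j)) atTop (𝓝 0) ∧
    ∀ Φ : V → ℝ, MemH Φ →
      Tendsto (fun j => ∫ x in unitCube n, Φ (z + opApply B l (u j) x)) atTop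
        (𝓝 ((∫ v, Φ v ∂nu0) + ∫ w, rrec Φ (w : V) ∂nuInf))

/-! ## The transform T, Lipschitz test classes, derivative sets, envelopes -/

/-- The transformed integrand on the open unit ball. -/
def transf {V : Type*} [NormedAddCommGroup V] [NormedSpace ℝ V] (Φ : V → ℝ) (zh : V) : ℝ :=
  (1 - ‖zh‖) * Φ ((1 - ‖zh‖)⁻¹ • zh)

/-- The function `TΦ` on the closed unit ball (as a function on `V`). -/
def Tfun {V : Type*} [NormedAddCommGroup V] [NormedSpace ℝ V] (Φ : V → ℝ) (zh : V) : ℝ :=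
  if ‖zh‖ < 1 then transf Φ zh else rrec Φ zh

/-- `‖TΦ‖_LIP ≤ 1` on the closed unit ball. -/
def TLipUnit {V : Type*} [NormedAddCommGroup V] [NormedSpace ℝ V] (Φ : V → ℝ) : Prop :=
  ∃ K : NNReal, LipschitzOnWith K (Tfun Φ) (Metric.closedBall (0:V) 1) ∧
    (⨆ zh ∈ Metric.closedBall (0:V) 1, |Tfun Φ zh|) + (K : ℝ) ≤ 1

/-- `‖η‖_LIP ≤ 1` on `Ω̄` (with the `ℓ^∞` metric on `ℝⁿ`). -/
def etaLipUnit {n : ℕ} (Ω : Set (Dom n)) (η : Dom n → ℝ) : Prop :=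
  ∃ K : NNReal, LipschitzOnWith K η (closure Ω) ∧
    (⨆ x ∈ closure Ω, |η x|) + (K : ℝ) ≤ 1

/-- The set of derivatives `F'(z₀)` of `F` (realized as vectors via the inner product). -/
def derivSet {V : Type*} [NormedAddCommGroup V] [InnerProductSpace ℝ V]
    [FiniteDimensional ℝ V] (F : V → ℝ) : Set V :=
  {ζ : V | ∃ z₀ : V, HasFDerivAt F (InnerProductSpace.toDual ℝ V ζ : V →L[ℝ] ℝ) z₀}

/-- The support function of a set `D ⊂ 𝕍`. -/
def suppFn {V : Type*} [NormedAddCommGroup V] [InnerProductSpace ℝ V]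
    (D : Set V) (w : V) : ℝ :=
  sSup ((fun ζ => (inner ℝ ζ w : ℝ)) '' D)

/-- The `𝒜`-quasiconvex envelope, with values in `[-∞, ∞)` (realized in `EReal`). -/
def qcEnv {n : ℕ} {V W : Type*} [NormedAddCommGroup V] [InnerProductSpace ℝ V]
    [FiniteDimensional ℝ V] [NormedAddCommGroup W] [NormedSpace ℝ W]
    (A : (Fin n → ℕ) → (V →L[ℝ] W)) (k : ℕ) (Φ : V → ℝ) (ξ : V) : EReal :=
  sInf {r : EReal | ∃ v : Dom n → V, ContDiff ℝ (⊤ : ℕ∞) v ∧ ZPeriodic v ∧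
    (∫ x in unitCube n, v x) = 0 ∧ (∀ x, opApply A k v x = 0) ∧
    r = ((∫ x in unitCube n, Φ (ξ + v x) : ℝ) : EReal)}

/-- A standard mollifier: smooth, nonnegative, supported in the closed unit cube,
positive on the open unit cube, with integral one. -/
def IsStdMollifier (n : ℕ) (ρ : Dom n → ℝ) : Prop :=
  ContDiff ℝ (⊤ : ℕ∞) ρ ∧ (∀ x, 0 ≤ ρ x) ∧ tsupport ρ ⊆ closedUnitCube n ∧
    (∀ x ∈ unitCube n, 0 < ρ x) ∧ (∫ x : Dom n, ρ x) = 1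

/-- A mollifier (no interior positivity required). -/
def IsMollifier (n : ℕ) (ρ : Dom n → ℝ) : Prop :=
  ContDiff ℝ (⊤ : ℕ∞) ρ ∧ (∀ x, 0 ≤ ρ x) ∧ tsupport ρ ⊆ closedUnitCube n ∧
    (∫ x : Dom n, ρ x) = 1

/-- The rescaled mollifier kernel `φ_t(x) = t^{-n} φ(x/t)`. -/
def mollK {n : ℕ} (ρ : Dom n → ℝ) (t : ℝ) (x : Dom n) : ℝ := ((t : ℝ) ^ n)⁻¹ * ρ (t⁻¹ • x)

/-! ## Young measures -/

/-- A (generalized) Young measure `ν = ((ν_x), λ, (ν_x^∞))` on `Ω`. -/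
structure YoungMeasure (n : ℕ) (V : Type*) [NormedAddCommGroup V] [InnerProductSpace ℝ V]
    [FiniteDimensional ℝ V] [MeasurableSpace V] [BorelSpace V] (Ω : Set (Dom n)) where
  /-- the oscillation measures `(ν_x)` -/
  osc : Dom n → Measure V
  /-- the concentration measure `λ` -/
  conc : Measure (Dom n)
  /-- the concentration-angle measures `(ν_x^∞)` -/
  ang : Dom n → Measure (Metric.sphere (0:V) 1)
  osc_meas : Measurable osc
  osc_prob : ∀ᵐ x ∂(volume.restrict Ω), IsProbabilityMeasure (osc x)
  moment : (∫⁻ x in Ω, ∫⁻ z, ‖z‖₊ ∂(osc x)) < ⊤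
  conc_finite : IsFiniteMeasure conc
  conc_carrier : conc (closure Ω)ᶜ = 0
  ang_meas : Measurable ang
  ang_prob : ∀ᵐ x ∂conc, IsProbabilityMeasure (ang x)

namespace YoungMeasure

variable {n : ℕ} {V : Type*} [NormedAddCommGroup V] [InnerProductSpace ℝ V]
  [FiniteDimensional ℝ V] [MeasurableSpace V] [BorelSpace V] {Ω : Set (Dom n)}

/-- The barycentre `ν̄_x` of the oscillation measure. -/
def barOsc (Y : YoungMeasure n V Ω) (x : Dom n) : V := ∫ z, z ∂(Y.osc x)

/-- The barycentre `ν̄_x^∞` of the concentration-angle measure. -/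
def barAng (Y : YoungMeasure n V Ω) (x : Dom n) : V := ∫ w, (w : V) ∂(Y.ang x)

/-- The density `λ^a` of the absolutely continuous part of `λ`. -/
def lamA (Y : YoungMeasure n V Ω) (x : Dom n) : ℝ := (Y.conc.rnDeriv volume x).toReal

/-- The singular part `λ^s` of `λ`. -/
def lamS (Y : YoungMeasure n V Ω) : Measure (Dom n) := Y.conc.singularPart volume

/-- The density `ν̄_x + λ^a(x) ν̄_x^∞` of the absolutely continuous part of the barycentre. -/
def baryAC (Y : YoungMeasure n V Ω) (x : Dom n) : V := Y.barOsc x + Y.lamA x • Y.barAng x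

/-- The mollification at scale `t` of the absolutely continuous part of the barycentre
(extended by zero outside `Ω`). -/
def mollACpart (Y : YoungMeasure n V Ω) (ρ : Dom n → ℝ) (t : ℝ) (x : Dom n) : V :=
  ∫ y in Ω, mollK ρ t (x - y) • Y.baryAC y

/-- The mollification at scale `t` of the singular part `ν̄^∞ λ^s` of the barycentre. -/
def mollSingPart (Y : YoungMeasure n V Ω) (ρ : Dom n → ℝ) (t : ℝ) (x : Dom n) : V :=
  ∫ y, mollK ρ t (x - y) • Y.barAng y ∂Y.lamS

/-- The mollification at scale `t` of the barycentre `v` of `Y`. -/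
def mollBary (Y : YoungMeasure n V Ω) (ρ : Dom n → ℝ) (t : ℝ) (x : Dom n) : V :=
  Y.mollACpart ρ t x + Y.mollSingPart ρ t x

/-- The formal adjoint `𝒜^*` applied to a test function. -/
def adjOp {W : Type*} [NormedAddCommGroup W] [InnerProductSpace ℝ W] [FiniteDimensional ℝ W]
    (A : (Fin n → ℕ) → (V →L[ℝ] W)) (k : ℕ) (φ : Dom n → W) (x : Dom n) : V :=
  ∑ α ∈ degSet n k, (ContinuousLinearMap.adjoint (A α)) (mderiv α φ x)

/-- `𝒜 v = 0` in the sense of distributions on `Ω`, where `v` is the barycentre of `Y`. -/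
def AFree {W : Type*} [NormedAddCommGroup W] [InnerProductSpace ℝ W] [FiniteDimensional ℝ W]
    (A : (Fin n → ℕ) → (V →L[ℝ] W)) (k : ℕ) (Y : YoungMeasure n V Ω) : Prop :=
  ∀ φ : Dom n → W, ContDiff ℝ (⊤ : ℕ∞) φ → HasCompactSupport φ → tsupport φ ⊆ Ω →
    (∫ x in Ω, (inner ℝ (adjOp A k φ x) (Y.baryAC x) : ℝ)) +
      (∫ x, (inner ℝ (adjOp A k φ x) (Y.barAng x) : ℝ) ∂Y.lamS) = 0

/-- The a.e. Jensen-type inequalities for `𝒜`-quasiconvex integrands of linear growth. -/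
def JensenAE {W : Type*} [NormedAddCommGroup W] [NormedSpace ℝ W]
    (A : (Fin n → ℕ) → (V →L[ℝ] W)) (k : ℕ) (Y : YoungMeasure n V Ω) : Prop :=
  ∀ f : V → ℝ, AQuasiconvex A k f → LinearGrowth f →
    ∀ᵐ x ∂(volume.restrict Ω),
      f (Y.baryAC x) ≤ (∫ z, f z ∂(Y.osc x)) + Y.lamA x * ∫ w, urec f (w : V) ∂(Y.ang x)

end YoungMeasure

/-- The recession function in the second variable of a non-autonomous integrand. -/
def urecx {n : ℕ} {V : Type*} [NormedAddCommGroup V] [NormedSpace ℝ V]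
    (Φ : Dom n → V → ℝ) (x : Dom n) (z : V) : ℝ :=
  limsup (fun t : ℝ => Φ x (t • z) / t) atTop

/-- Membership in the class `𝔼(Ω, 𝕍)` of non-autonomous integrands. -/
def MemE {n : ℕ} {V : Type*} [NormedAddCommGroup V] [NormedSpace ℝ V]
    (Ω : Set (Dom n)) (Φ : Dom n → V → ℝ) : Prop :=
  Continuous (fun p : Dom n × V => Φ p.1 p.2) ∧
  (∃ c, ∀ x ∈ closure Ω, ∀ z, |Φ x z| ≤ c * (1 + ‖z‖)) ∧
  ∃ g : Dom n → V → ℝ,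
    TendstoUniformlyOn (fun (t : ℝ) (p : Dom n × V) => Φ p.1 (t • p.2) / t)
      (fun p => g p.1 p.2) atTop ((closure Ω) ×ˢ {z : V | ‖z‖ = 1})

/-- A sequence `(w_j 𝓛ⁿ⌞Ω)` of absolutely continuous measures generates the Young measure `Y`. -/
def GeneratesYM {n : ℕ} {V : Type*} [NormedAddCommGroup V] [InnerProductSpace ℝ V]
    [FiniteDimensional ℝ V] [MeasurableSpace V] [BorelSpace V] {Ω : Set (Dom n)}
    (w : ℕ → Dom n → V) (Y : YoungMeasure n V Ω) : Prop :=
  ∀ Φ : Dom n → V → ℝ, MemE Ω Φ →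
    Tendsto (fun j => ∫ x in Ω, Φ x (w j x)) atTop
      (𝓝 ((∫ x in Ω, ∫ z, Φ x z ∂(Y.osc x)) +
        ∫ x, (∫ ζ, urecx Φ x (ζ : V) ∂(Y.ang x)) ∂Y.conc))


section calc1
variable {n : ℕ} {V W : Type*} [NormedAddCommGroup V] [NormedSpace ℝ V]
    [NormedAddCommGroup W] [NormedSpace ℝ W]

lemma pderivDir_contDiff (j : Fin n) {u : Dom n → V} (hu : ContDiff ℝ (⊤ : ℕ∞) u) :
    ContDiff ℝ (⊤ : ℕ∞) (pderivDir j u) := by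
  unfold pderivDir
  exact (hu.fderiv_right (m := (⊤ : ℕ∞)) (by simp)).clm_apply contDiff_const

lemma mderiv_list_induct (P : ℕ → (Dom n → V) → Prop)
    (hP : ∀ m f j, P m f → P (m+1) (pderivDir j f)) (α : Fin n → ℕ) (L : List (Fin n))
    {u : Dom n → V} (h0 : P 0 u) :
    P ((L.map α).sum) (L.foldr (fun j f => (pderivDir j)^[α j] f) u) := by
  induction L with
  | nil => simpa using h0
  | cons a L ih =>
    simp only [List.map_cons, List.sum_cons, List.foldr_cons]
    generalize α a = r
    generalize (L.map α).sum = s at ih ⊢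
    generalize (L.foldr (fun j f => (pderivDir j)^[α j] f) u) = f at ih ⊢
    induction r with
    | zero => simpa using ih
    | succ r ihr =>
      rw [Function.iterate_succ_apply']
      have := hP _ _ a ihr
      convert this using 1
      ring

lemma mderiv_induct (P : ℕ → (Dom n → V) → Prop)
    (hP : ∀ m f j, P m f → P (m+1) (pderivDir j f)) (α : Fin n → ℕ)
    {u : Dom n → V} (h0 : P 0 u) : P (∑ i, α i) (mderiv α u) := by
  have := mderiv_list_induct P hP α (List.finRange n) h0
  rwa [← Fin.sum_univ_def] at this

/-- binary relation version -/
lemma mderiv_list_induct₂ {U : Type*} [NormedAddCommGroup U] [NormedSpace ℝ U]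
    (P : ℕ → (Dom n → V) → (Dom n → U) → Prop)
    (hP : ∀ m f g j, P m f g → P (m+1) (pderivDir j f) (pderivDir j g)) (α : Fin n → ℕ)
    (L : List (Fin n)) {u : Dom n → V} {w : Dom n → U} (h0 : P 0 u w) :
    P ((L.map α).sum) (L.foldr (fun j f => (pderivDir j)^[α j] f) u)
      (L.foldr (fun j f => (pderivDir j)^[α j] f) w) := by
  induction L with
  | nil => simpa using h0
  | cons a L ih =>
    simp only [List.map_cons, List.sum_cons, List.foldr_cons]
    generalize α a = r
    generalize (L.map α).sum = s at ih ⊢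
    generalize (L.foldr (fun j f => (pderivDir j)^[α j] f) u) = f at ih ⊢
    generalize (L.foldr (fun j f => (pderivDir j)^[α j] f) w) = g at ih ⊢
    induction r with
    | zero => simpa using ih
    | succ r ihr =>
      rw [Function.iterate_succ_apply', Function.iterate_succ_apply']
      have := hP _ _ _ a ihr
      convert this using 1
      ring

lemma mderiv_induct₂ {U : Type*} [NormedAddCommGroup U] [NormedSpace ℝ U]
    (P : ℕ → (Dom n → V) → (Dom n → U) → Prop)
    (hP : ∀ m f g j, P m f g → P (m+1) (pderivDir j f) (pderivDir j g)) (α : Fin n → ℕ)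
    {u : Dom n → V} {w : Dom n → U} (h0 : P 0 u w) : P (∑ i, α i) (mderiv α u) (mderiv α w) := by
  have := mderiv_list_induct₂ P hP α (List.finRange n) h0
  rwa [← Fin.sum_univ_def] at this

lemma mderiv_contDiff (α : Fin n → ℕ) {u : Dom n → V} (hu : ContDiff ℝ (⊤ : ℕ∞) u) :
    ContDiff ℝ (⊤ : ℕ∞) (mderiv α u) :=
  mderiv_induct (fun _ f => ContDiff ℝ (⊤ : ℕ∞) f) (fun _ _ j h => pderivDir_contDiff j h) α hu

lemma opApply_contDiff (A : (Fin n → ℕ) → (V →L[ℝ] W)) (k : ℕ) {u : Dom n → V}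
    (hu : ContDiff ℝ (⊤ : ℕ∞) u) : ContDiff ℝ (⊤ : ℕ∞) (opApply A k u) := by
  unfold opApply
  refine ContDiff.sum fun α _ => ?_
  exact (A α).contDiff.comp (mderiv_contDiff α hu)

lemma mderiv_congr (α : Fin n → ℕ) {u w : Dom n → V} {x : Dom n} (h : u =ᶠ[𝓝 x] w) :
    mderiv α u =ᶠ[𝓝 x] mderiv α w := by
  refine mderiv_induct₂ (fun _ f g => f =ᶠ[𝓝 x] g) (fun _ f g j h => ?_) α h
  filter_upwards [h.fderiv (𝕜 := ℝ)] with y hy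
  simp [pderivDir, hy]

lemma opApply_congr (A : (Fin n → ℕ) → (V →L[ℝ] W)) (k : ℕ) {u w : Dom n → V} {x : Dom n}
    (h : u =ᶠ[𝓝 x] w) : opApply A k u x = opApply A k w x := by
  unfold opApply
  refine Finset.sum_congr rfl fun α _ => ?_
  rw [(mderiv_congr α h).eq_of_nhds]

lemma mderiv_zero (α : Fin n → ℕ) : mderiv α (fun _ : Dom n => (0:V)) = fun _ => 0 := by
  refine mderiv_induct (fun _ f => f = fun _ => 0) (fun _ f j h => ?_) α rfl
  subst h; ext x; simp [pderivDir]

lemma opApply_zero (A : (Fin n → ℕ) → (V →L[ℝ] W)) (k : ℕ) (x : Dom n) :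
    opApply A k (fun _ : Dom n => (0:V)) x = 0 := by
  simp [opApply, mderiv_zero]

lemma opApply_eq_zero_of_notMem (A : (Fin n → ℕ) → (V →L[ℝ] W)) (k : ℕ) {u : Dom n → V}
    {x : Dom n} (hx : x ∉ tsupport u) : opApply A k u x = 0 := by
  rw [opApply_congr A k (notMem_tsupport_iff_eventuallyEq.1 hx)]
  exact opApply_zero A k x

lemma mderiv_add (α : Fin n → ℕ) {u w : Dom n → V} (hu : ContDiff ℝ (⊤ : ℕ∞) u)
    (hw : ContDiff ℝ (⊤ : ℕ∞) w) :
    mderiv α (fun x => u x + w x) = fun x => mderiv α u x + mderiv α w x := by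
  -- package the pair
  have key := mderiv_induct₂ (V := V) (U := V × V)
    (fun _ f p => ContDiff ℝ (⊤ : ℕ∞) p ∧ f = fun x => (p x).1 + (p x).2) (fun _ f g j h => by
      obtain ⟨h1, rfl⟩ := h
      refine ⟨pderivDir_contDiff j h1, ?_⟩
      ext x
      have hd : DifferentiableAt ℝ g x := h1.differentiable (by simp) x
      simp only [pderivDir]
      have : HasFDerivAt (fun x => (g x).1 + (g x).2) ((ContinuousLinearMap.fst ℝ V V).comp (fderiv ℝ g x) + (ContinuousLinearMap.snd ℝ V V).comp (fderiv ℝ g x)) x :=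
        hd.hasFDerivAt.fst.add hd.hasFDerivAt.snd
      rw [this.fderiv]
      simp) α (u := fun x => u x + w x) (w := fun x => (u x, w x)) ⟨hu.prodMk hw, rfl⟩
  have k1 := mderiv_induct₂ (V := V) (U := V × V)
    (fun _ f p => ContDiff ℝ (⊤ : ℕ∞) p ∧ f = fun x => (p x).1) (fun _ f g j h => by
      obtain ⟨h1, rfl⟩ := h
      refine ⟨pderivDir_contDiff j h1, ?_⟩
      ext x
      have hd : DifferentiableAt ℝ g x := h1.differentiable (by simp) x
      simp only [pderivDir]
      rw [hd.hasFDerivAt.fst.fderiv]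
      simp) α (u := fun x => u x) (w := fun x => (u x, w x)) ⟨hu.prodMk hw, rfl⟩
  have k2 := mderiv_induct₂ (V := V) (U := V × V)
    (fun _ f p => ContDiff ℝ (⊤ : ℕ∞) p ∧ f = fun x => (p x).2) (fun _ f g j h => by
      obtain ⟨h1, rfl⟩ := h
      refine ⟨pderivDir_contDiff j h1, ?_⟩
      ext x
      have hd : DifferentiableAt ℝ g x := h1.differentiable (by simp) x
      simp only [pderivDir]
      rw [hd.hasFDerivAt.snd.fderiv]
      simp) α (u := fun x => w x) (w := fun x => (u x, w x)) ⟨hu.prodMk hw, rfl⟩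
  rw [key.2]
  ext x
  rw [k1.2, k2.2]

lemma opApply_add (A : (Fin n → ℕ) → (V →L[ℝ] W)) (k : ℕ) {u w : Dom n → V}
    (hu : ContDiff ℝ (⊤ : ℕ∞) u) (hw : ContDiff ℝ (⊤ : ℕ∞) w) (x : Dom n) :
    opApply A k (fun x => u x + w x) x = opApply A k u x + opApply A k w x := by
  simp only [opApply, mderiv_add _ hu hw, map_add, Finset.sum_add_distrib]

lemma opApply_sum (A : (Fin n → ℕ) → (V →L[ℝ] W)) (k : ℕ) {ι : Type*} (F : Finset ι)
    {u : ι → Dom n → V} (hu : ∀ i ∈ F, ContDiff ℝ (⊤ : ℕ∞) (u i)) (x : Dom n) :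
    opApply A k (fun x => ∑ i ∈ F, u i x) x = ∑ i ∈ F, opApply A k (u i) x := by
  classical
  induction F using Finset.induction_on with
  | empty => simp [opApply_zero]
  | insert a F ha ih =>
    simp only [Finset.sum_insert ha]
    rw [opApply_add A k (hu a (by simp)) (ContDiff.sum fun i hi => hu i (by simp [hi])),
      ih fun i hi => hu i (by simp [hi])]

/-- scaling -/
lemma mderiv_scale (α : Fin n → ℕ) (M c : ℝ) (b : Dom n) (u : Dom n → V) :
    mderiv α (fun x => c • u (M • x - b)) =
      fun x => (c * M ^ (∑ i, α i)) • mderiv α u (M • x - b) := by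
  refine mderiv_induct₂ (fun m f g => f = fun x => (c * M ^ m) • g (M • x - b))
    (fun m f g j h => ?_) α (by simp)
  subst h
  ext x
  simp only [pderivDir]
  have h1 : fderiv ℝ (fun x => (c * M ^ m) • g (M • x - b)) x
      = (c * M ^ m) • (M • fderiv ℝ g (M • x - b)) := by
    rw [show (fun x => (c * M ^ m) • g (M • x - b)) = (c * M ^ m) • (fun x => g (M • x - b)) from rfl, fderiv_const_smul_field]
    rw [Pi.smul_apply]; congr 1
    rw [fderiv_comp_smul (f := fun y => g (y - b)), fderiv_comp_sub]
  rw [h1]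
  simp [pow_succ, smul_smul, mul_assoc]

lemma degSet_sum {k : ℕ} {α : Fin n → ℕ} (h : α ∈ degSet n k) : ∑ i, α i = k := by
  simp [degSet] at h; exact h.2

lemma opApply_scale (A : (Fin n → ℕ) → (V →L[ℝ] W)) (k : ℕ) (M c : ℝ) (b : Dom n)
    (u : Dom n → V) (x : Dom n) :
    opApply A k (fun x => c • u (M • x - b)) x = (c * M ^ k) • opApply A k u (M • x - b) := by
  simp only [opApply, mderiv_scale, Finset.smul_sum]
  refine Finset.sum_congr rfl fun α hα => ?_
  rw [degSet_sum hα, map_smul]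

lemma norm_mderiv_le (α : Fin n → ℕ) {u : Dom n → V} (hu : ContDiff ℝ (⊤ : ℕ∞) u) (x : Dom n) :
    ‖mderiv α u x‖ ≤ ‖iteratedFDeriv ℝ (∑ i, α i) u x‖ := by
  have := mderiv_induct (fun m f => ContDiff ℝ (⊤ : ℕ∞) f ∧ ∀ r : ℕ,
    ‖iteratedFDeriv ℝ r f x‖ ≤ ‖iteratedFDeriv ℝ (r + m) u x‖) (fun m f j h => by
      obtain ⟨h1, h2⟩ := h
      refine ⟨pderivDir_contDiff j h1, fun r => ?_⟩
      have h3 := h2 (r+1)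
      rw [← norm_iteratedFDeriv_fderiv] at h3
      rw [show r + (m+1) = r + 1 + m by ring]
      refine le_trans ?_ h3
      have e : pderivDir j f = (ContinuousLinearMap.apply ℝ V (Pi.single j (1:ℝ) : Dom n)) ∘ fderiv ℝ f := rfl
      rw [e]
      have hsm : ContDiff ℝ (⊤ : ℕ∞) (fderiv ℝ f) := h1.fderiv_right (by simp)
      rw [ContinuousLinearMap.iteratedFDeriv_comp_left _ hsm.contDiffAt (by exact_mod_cast le_top)]
      refine (ContinuousLinearMap.norm_compContinuousMultilinearMap_le _ _).trans ?_
      refine mul_le_of_le_one_left (norm_nonneg _) ?_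
      refine ContinuousLinearMap.opNorm_le_bound _ zero_le_one fun g => ?_
      simp only [ContinuousLinearMap.apply_apply, one_mul]
      refine (g.le_opNorm _).trans ?_
      rw [Pi.norm_single]; simp) α (u := u) ⟨hu, fun r => by simp⟩
  have h0 := this.2 0
  rw [zero_add] at h0
  simpa using h0

lemma norm_opApply_le (A : (Fin n → ℕ) → (V →L[ℝ] W)) (k : ℕ) {u : Dom n → V}
    (hu : ContDiff ℝ (⊤ : ℕ∞) u) (x : Dom n) :
    ‖opApply A k u x‖ ≤ (∑ α ∈ degSet n k, ‖A α‖) * ‖iteratedFDeriv ℝ k u x‖ := by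
  unfold opApply
  rw [Finset.sum_mul]
  refine norm_sum_le_of_le _ fun α hα => ?_
  refine ((A α).le_opNorm _).trans ?_
  gcongr
  have := norm_mderiv_le α hu x
  rwa [degSet_sum hα] at this

/-- plane waves -/
lemma mderiv_plane (α : Fin n → ℕ) (h : ℕ → ℝ → ℝ) (hh : ∀ m s, HasDerivAt (h m) (h (m+1) s) s)
    (ξ : Dom n) (a : V) :
    mderiv α (fun x => h 0 (∑ i, ξ i * x i) • a) =
      fun x => ((∏ i, ξ i ^ α i) * h (∑ i, α i) (∑ i, ξ i * x i)) • a := by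
  have step : ∀ (c : ℝ) (m : ℕ) (j : Fin n),
      pderivDir j (fun x : Dom n => (c * h m (∑ i, ξ i * x i)) • a) =
      fun x => ((ξ j * c) * h (m+1) (∑ i, ξ i * x i)) • a := by
    intro c m j
    ext x
    have h1 : HasFDerivAt (fun x : Dom n => ∑ i, ξ i * x i)
        (∑ i, ξ i • (ContinuousLinearMap.proj i : Dom n →L[ℝ] ℝ)) x := by
      refine HasFDerivAt.fun_sum fun i _ => ?_
      exact (ContinuousLinearMap.proj (R := ℝ) (φ := fun _ : Fin n => ℝ) i).hasFDerivAt.const_smul (ξ i)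
    have h2 := (((hh m (∑ i, ξ i * x i)).comp_hasFDerivAt x h1).const_mul c).smul_const a
    simp only [pderivDir]
    rw [show (fun x : Dom n => (c * h m (∑ i, ξ i * x i)) • a) =
      (fun y => (c * (h m ∘ fun x : Dom n => ∑ i, ξ i * x i) y) • a) from rfl, h2.fderiv]
    have : ∑ i, ξ i * (Pi.single j (1:ℝ) : Dom n) i = ξ j := by
      rw [Finset.sum_eq_single j] <;> simp +contextual
    simp [this]
    congr 1; ring
  have main : ∀ L : List (Fin n), L.foldr (fun j f => (pderivDir j)^[α j] f)
      (fun x : Dom n => h 0 (∑ i, ξ i * x i) • a) =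
      fun x => ((L.map fun i => ξ i ^ α i).prod * h ((L.map α).sum) (∑ i, ξ i * x i)) • a := by
    intro L
    induction L with
    | nil => simp
    | cons b L ih =>
      simp only [List.foldr_cons, ih, List.map_cons, List.prod_cons, List.sum_cons]
      generalize (L.map fun i => ξ i ^ α i).prod = c
      generalize (L.map α).sum = s
      generalize α b = r
      induction r with
      | zero => simp
      | succ r ihr =>
        rw [Function.iterate_succ_apply', ihr, step]
        ext x
        rw [pow_succ', mul_assoc, show r + 1 + s = r + s + 1 by ring]
        congr 1; ring
  have := main (List.finRange n)
  rwa [← Fin.sum_univ_def, ← Fin.prod_univ_def] at this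

lemma opApply_plane (A : (Fin n → ℕ) → (V →L[ℝ] W)) (k : ℕ) (h : ℕ → ℝ → ℝ)
    (hh : ∀ m s, HasDerivAt (h m) (h (m+1) s) s) (ξ : Dom n) (a : V) (x : Dom n) :
    opApply A k (fun x => h 0 (∑ i, ξ i * x i) • a) x =
      h k (∑ i, ξ i * x i) • opSymbol A k ξ a := by
  simp only [opApply, opSymbol, mderiv_plane _ h hh, _root_.sum_apply, Finset.smul_sum]
  refine Finset.sum_congr rfl fun α hα => ?_
  rw [degSet_sum hα]
  simp [smul_smul, mul_comm]

end calc1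


section cells
variable {n : ℕ}

def zc (k : Fin n → ℤ) : Dom n := fun i => (k i : ℝ)

def cell (M : ℝ) (k : Fin n → ℤ) : Set (Dom n) := {x | M • x - zc k ∈ unitCube n}

lemma mem_unitCube {x : Dom n} : x ∈ unitCube n ↔ ∀ i, -(1/2) < x i ∧ x i < 1/2 := by
  simp [unitCube, Set.mem_pi]

lemma unitCube_isOpen : IsOpen (unitCube n) :=
  isOpen_set_pi Set.finite_univ fun _ _ => isOpen_Ioo

lemma unitCube_meas : MeasurableSet (unitCube n) := unitCube_isOpen.measurableSet

lemma volume_unitCube : volume (unitCube n) = 1 := by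
  simp [unitCube, Real.volume_pi_Ioo]; norm_num

lemma volumeReal_unitCube : volume.real (unitCube n) = 1 := by
  simp [Measure.real, volume_unitCube]

lemma unitCube_subset_closed : unitCube n ⊆ closedUnitCube n :=
  Set.pi_mono fun _ _ => Set.Ioo_subset_Icc_self

lemma closedUnitCube_compact : IsCompact (closedUnitCube n) :=
  isCompact_univ_pi fun _ => isCompact_Icc

lemma mem_cell {M : ℝ} {k : Fin n → ℤ} {x : Dom n} :
    x ∈ cell M k ↔ ∀ i, -(1/2) < M * x i - k i ∧ M * x i - k i < 1/2 := by
  simp [cell, mem_unitCube, zc]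

lemma cell_isOpen (M : ℝ) (k : Fin n → ℤ) : IsOpen (cell M k) :=
  unitCube_isOpen.preimage (by fun_prop)

lemma cell_meas (M : ℝ) (k : Fin n → ℤ) : MeasurableSet (cell M k) := (cell_isOpen M k).measurableSet

lemma cell_index_unique {M : ℝ} {k k' : Fin n → ℤ} {x : Dom n} (h : x ∈ cell M k)
    (h' : x ∈ cell M k') : k = k' := by
  rw [mem_cell] at h h'
  ext i
  have h1 := h i
  have h2 := h' i
  have : |((k i - k' i : ℤ) : ℝ)| < 1 := by
    rw [abs_lt]; push_cast; constructor <;> linarith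
  have : |k i - k' i| < 1 := by exact_mod_cast this
  rw [Int.abs_lt_one_iff] at this
  omega

lemma cell_disjoint (M : ℝ) {k k' : Fin n → ℤ} (h : k ≠ k') : Disjoint (cell M k) (cell M k') :=
  Set.disjoint_left.2 fun _ hx hx' => h (cell_index_unique hx hx')

lemma integral_cell {E : Type*} [NormedAddCommGroup E] [NormedSpace ℝ E] {M : ℝ} (hM : 0 < M)
    (k : Fin n → ℤ) (f : Dom n → E) :
    ∫ x in cell M k, f (M • x - zc k) = (M ^ n)⁻¹ • ∫ y in unitCube n, f y := by
  rw [← integral_indicator (cell_meas M k), ← integral_indicator unitCube_meas]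
  have : (cell M k).indicator (fun x => f (M • x - zc k)) =
      fun x => (fun y => (unitCube n).indicator f (y - zc k)) (M • x) := by
    ext x
    by_cases hx : x ∈ cell M k
    · have hx' : M • x - zc k ∈ unitCube n := hx
      simp [hx, hx']
    · have hx' : M • x - zc k ∉ unitCube n := hx
      simp [hx, hx']
  rw [this, Measure.integral_comp_smul_of_nonneg volume _ _ (hR := hM.le),
    integral_sub_right_eq_self (fun y => (unitCube n).indicator f y)]
  simp

lemma volumeReal_cell {M : ℝ} (hM : 0 < M) (k : Fin n → ℤ) : volume.real (cell M k) = (M ^ n)⁻¹ := by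
  have := integral_cell hM k (fun _ => (1:ℝ))
  simpa [volumeReal_unitCube] using this

lemma cell_bounded {M : ℝ} (hM : 0 < M) (k : Fin n → ℤ) {x y : Dom n} (hx : x ∈ cell M k)
    (hy : y ∈ cell M k) : dist x y ≤ M⁻¹ := by
  rw [dist_pi_le_iff (by positivity)]
  intro i
  have h1 := mem_cell.1 hx i
  have h2 := mem_cell.1 hy i
  rw [Real.dist_eq, inv_eq_one_div, le_div_iff₀ hM]
  have e : |x i - y i| * M = |M * x i - M * y i| := by
    rw [← mul_sub, abs_mul, abs_of_pos hM, mul_comm]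
  rw [e, abs_le]; constructor <;> linarith

lemma volume_cell_lt_top {M : ℝ} (hM : 0 < M) (k : Fin n → ℤ) : volume (cell M k) < ⊤ := by
  by_contra h
  have h' : volume (cell M k) = ⊤ := by simpa using h
  have h3 := volumeReal_cell hM k
  simp [Measure.real, h'] at h3
  have : 0 < M ^ n := by positivity
  rw [h3] at this
  exact lt_irrefl _ this

lemma ae_mem_cell {M : ℝ} (hM : 0 < M) : ∀ᵐ x : Dom n, ∃ k, x ∈ cell M k := by
  have h : ∀ i : Fin n, ∀ p : ℤ, ∀ᵐ x : Dom n, x i ≠ (p + 1/2) / M := fun i p =>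
    Measure.ae_eval_ne (μ := fun _ : Fin n => (volume : Measure ℝ)) i _
  have h' : ∀ᵐ x : Dom n, ∀ i : Fin n, ∀ p : ℤ, x i ≠ (p + 1/2) / M := by
    rw [ae_all_iff]; intro i; rw [ae_all_iff]; exact h i
  filter_upwards [h'] with x hx
  refine ⟨fun i => round (M * x i), mem_cell.2 fun i => ?_⟩
  have h1 := abs_le.1 (abs_sub_round (M * x i))
  constructor
  · refine lt_of_le_of_ne h1.1 fun he => hx i (round (M * x i) - 1) ?_
    rw [eq_div_iff hM.ne']; push_cast; linarith
  · refine lt_of_le_of_ne h1.2 fun he => hx i (round (M * x i)) ?_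
    rw [eq_div_iff hM.ne']; linarith

def Fm (n m : ℕ) : Finset (Fin n → ℤ) := Fintype.piFinset fun _ => Finset.Icc (-(m:ℤ)) m

lemma Fm_card (m : ℕ) : (Fm n m).card = (2*m+1)^n := by
  simp only [Fm, Fintype.card_piFinset, Int.card_Icc, Finset.prod_const, Finset.card_univ, Fintype.card_fin]
  congr 1; omega

lemma cell_subset_unitCube {m : ℕ} {k : Fin n → ℤ} (hk : k ∈ Fm n m) :
    cell (2*m+1 : ℝ) k ⊆ unitCube n := by
  intro x hx
  rw [mem_unitCube]; rw [mem_cell] at hx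
  intro i
  have h1 := hx i
  simp [Fm] at hk
  have h2 := hk i
  have h3 : (-(m:ℝ)) ≤ k i := by exact_mod_cast h2.1
  have h4 : (k i : ℝ) ≤ m := by exact_mod_cast h2.2
  have hM : (0:ℝ) < 2*m+1 := by positivity
  constructor
  · by_contra hc; push Not at hc
    nlinarith
  · by_contra hc; push Not at hc
    nlinarith

lemma cell_mem_Fm {m : ℕ} {k : Fin n → ℤ} {x : Dom n} (hx : x ∈ cell (2*m+1 : ℝ) k)
    (hxc : x ∈ unitCube n) : k ∈ Fm n m := by
  rw [mem_unitCube] at hxc; rw [mem_cell] at hx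
  simp only [Fm, Fintype.mem_piFinset, Finset.mem_Icc]
  intro i
  have h1 := hx i
  have h2 := hxc i
  have hM : (0:ℝ) < 2*m+1 := by positivity
  constructor
  · have : (-(m:ℝ) - 1) < k i := by nlinarith
    have : (-(m:ℤ) - 1) < k i := by exact_mod_cast this
    omega
  · have : (k i : ℝ) < m + 1 := by nlinarith
    have : k i < (m:ℤ) + 1 := by exact_mod_cast this
    omega

lemma unitCube_ae_eq (m : ℕ) : (⋃ k ∈ Fm n m, cell (2*m+1 : ℝ) k) =ᵐ[volume] unitCube n := by
  have hM : (0:ℝ) < 2*m+1 := by positivity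
  filter_upwards [ae_mem_cell hM] with x ⟨k, hk⟩
  apply propext
  change x ∈ (⋃ k ∈ Fm n m, cell (2*m+1 : ℝ) k) ↔ x ∈ unitCube n
  constructor
  · intro h
    simp only [Set.mem_iUnion] at h
    obtain ⟨k, hk, hx⟩ := h
    exact cell_subset_unitCube hk hx
  · intro h
    simp only [Set.mem_iUnion]
    exact ⟨k, cell_mem_Fm hk h, hk⟩

lemma integral_biUnion_cell {E : Type*} [NormedAddCommGroup E] [NormedSpace ℝ E] (M : ℝ)
    (F : Finset (Fin n → ℤ)) {f : Dom n → E} (hf : ∀ k ∈ F, IntegrableOn f (cell M k)) :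
    ∫ x in ⋃ k ∈ F, cell M k, f x = ∑ k ∈ F, ∫ x in cell M k, f x := by
  refine integral_biUnion_finset F (fun k _ => cell_meas M k) ?_ hf
  intro k _ k' _ h
  exact cell_disjoint M h

lemma integral_unitCube_eq_sum {E : Type*} [NormedAddCommGroup E] [NormedSpace ℝ E] (m : ℕ)
    {f : Dom n → E} (hf : IntegrableOn f (unitCube n)) :
    ∫ x in unitCube n, f x = ∑ k ∈ Fm n m, ∫ x in cell (2*m+1 : ℝ) k, f x := by
  rw [← setIntegral_congr_set (unitCube_ae_eq m)]
  exact integral_biUnion_cell _ _ fun k hk => hf.mono_set (cell_subset_unitCube hk)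

end cells

section insert
variable {n : ℕ} {U V : Type*} [NormedAddCommGroup V] [NormedSpace ℝ V]
    [NormedAddCommGroup U] [NormedSpace ℝ U]

def ins (l : ℕ) (M : ℝ) (F : Finset (Fin n → ℤ)) (u : (Fin n → ℤ) → Dom n → U) : Dom n → U :=
  fun x => ∑ k ∈ F, (M ^ l)⁻¹ • u k (M • x - zc k)

lemma scaled_contDiff {u : Dom n → U} (hu : ContDiff ℝ (⊤ : ℕ∞) u) (c M : ℝ) (b : Dom n) :
    ContDiff ℝ (⊤ : ℕ∞) (fun x => c • u (M • x - b)) :=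
  contDiff_const.smul (hu.comp (by fun_prop))

def affHomeo (M : ℝ) (hM : M ≠ 0) (b : Dom n) : Dom n ≃ₜ Dom n :=
  (Homeomorph.smulOfNeZero M hM).trans (Homeomorph.subRight b)

lemma affHomeo_apply (M : ℝ) (hM : M ≠ 0) (b x : Dom n) : affHomeo M hM b x = M • x - b := rfl

lemma scaled_tsupport {u : Dom n → U} (c M : ℝ) (hM : M ≠ 0) (b : Dom n) :
    tsupport (fun x => c • u (M • x - b)) ⊆ affHomeo M hM b ⁻¹' (tsupport u) := by
  refine closure_minimal ?_ ((isClosed_tsupport u).preimage (affHomeo M hM b).continuous)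
  intro x hx
  apply subset_tsupport
  simp only [Function.mem_support, ne_eq] at hx ⊢
  intro h; apply hx
  rw [affHomeo_apply] at h
  simp [h]

lemma ins_ccSmooth (l : ℕ) {M : ℝ} (hM : 0 < M) {F : Finset (Fin n → ℤ)}
    {u : (Fin n → ℤ) → Dom n → U} (hu : ∀ k ∈ F, CcSmooth (unitCube n) (u k)) {Ω : Set (Dom n)}
    (hΩ : ∀ k ∈ F, cell M k ⊆ Ω) : CcSmooth Ω (ins l M F u) := by
  have hs : tsupport (ins l M F u) ⊆ ⋃ k ∈ F, affHomeo M hM.ne' (zc k) ⁻¹' (tsupport (u k)) := by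
    refine closure_minimal ?_ ?_
    · intro x hx
      simp only [Set.mem_iUnion]
      by_contra hc
      push Not at hc
      apply hx
      refine Finset.sum_eq_zero fun k hk => ?_
      have : M • x - zc k ∉ tsupport (u k) := hc k hk
      rw [image_eq_zero_of_notMem_tsupport this, smul_zero]
    · exact F.finite_toSet.isClosed_biUnion fun k _ =>
        (isClosed_tsupport (u k)).preimage (affHomeo M hM.ne' (zc k)).continuous
  refine ⟨ContDiff.sum fun k hk => scaled_contDiff (hu k hk).1 _ _ _, ?_, ?_⟩
  · refine IsCompact.of_isClosed_subset (F.finite_toSet.isCompact_biUnion fun k hk => ?_)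
      (isClosed_tsupport _) hs
    exact ((affHomeo M hM.ne' (zc k)).isCompact_preimage).2 (hu k hk).2.1
  · refine hs.trans (Set.iUnion₂_subset fun k hk => ?_)
    intro x hx
    exact hΩ k hk ((hu k hk).2.2 hx)

lemma ins_op (B : (Fin n → ℕ) → (U →L[ℝ] V)) (l : ℕ) {M : ℝ} (hM : 0 < M) {F : Finset (Fin n → ℤ)}
    {u : (Fin n → ℤ) → Dom n → U} (hu : ∀ k ∈ F, CcSmooth (unitCube n) (u k)) (x : Dom n) :
    opApply B l (ins l M F u) x = ∑ k ∈ F, opApply B l (u k) (M • x - zc k) := by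
  unfold ins
  rw [opApply_sum B l F fun k hk => scaled_contDiff (hu k hk).1 _ _ _]
  refine Finset.sum_congr rfl fun k hk => ?_
  rw [opApply_scale, inv_mul_cancel₀ (by positivity), one_smul]

lemma ins_op_on (B : (Fin n → ℕ) → (U →L[ℝ] V)) (l : ℕ) {M : ℝ} (hM : 0 < M) {F : Finset (Fin n → ℤ)}
    {u : (Fin n → ℤ) → Dom n → U} (hu : ∀ k ∈ F, CcSmooth (unitCube n) (u k)) {k : Fin n → ℤ}
    (hk : k ∈ F) {x : Dom n} (hx : x ∈ cell M k) :
    opApply B l (ins l M F u) x = opApply B l (u k) (M • x - zc k) := by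
  rw [ins_op B l hM hu, Finset.sum_eq_single k]
  · intro k' hk' hne
    refine opApply_eq_zero_of_notMem B l fun h => ?_
    exact hne (cell_index_unique ((hu k' hk').2.2 h) hx)
  · intro h; exact absurd hk h

lemma ins_op_off (B : (Fin n → ℕ) → (U →L[ℝ] V)) (l : ℕ) {M : ℝ} (hM : 0 < M) {F : Finset (Fin n → ℤ)}
    {u : (Fin n → ℤ) → Dom n → U} (hu : ∀ k ∈ F, CcSmooth (unitCube n) (u k)) 
    {x : Dom n} (hx : ∀ k ∈ F, x ∉ cell M k) :
    opApply B l (ins l M F u) x = 0 := by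
  rw [ins_op B l hM hu]
  refine Finset.sum_eq_zero fun k hk => ?_
  exact opApply_eq_zero_of_notMem B l fun h => hx k hk ((hu k hk).2.2 h)

lemma iteratedFDeriv_scaled {u : Dom n → U} (hu : ContDiff ℝ (⊤ : ℕ∞) u) (c M : ℝ) (b : Dom n)
    (j : ℕ) (x : Dom n) :
    iteratedFDeriv ℝ j (fun x => c • u (M • x - b)) x = (c * M^j) • iteratedFDeriv ℝ j u (M • x - b) := by
  have hu' : ContDiff ℝ j u := hu.of_le (by exact_mod_cast le_top)
  have h1 : ContDiff ℝ j (fun y => u (y - b)) := hu'.comp (contDiff_id.sub contDiff_const)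
  have h2 : ContDiff ℝ j (fun x : Dom n => u (M • x - b)) :=
    hu'.comp (by fun_prop)
  rw [iteratedFDeriv_const_smul_apply' h2.contDiffAt]
  have := congrFun (iteratedFDeriv_comp_const_smul M h1) x
  rw [this, iteratedFDeriv_comp_sub, smul_smul]

lemma integrable_iteratedFDeriv {Ω : Set (Dom n)} {u : Dom n → U} (hu : CcSmooth Ω u) (j : ℕ) :
    Integrable (fun x => ‖iteratedFDeriv ℝ j u x‖) := by
  have hc : Continuous (iteratedFDeriv ℝ j u) := hu.1.continuous_iteratedFDeriv (by exact_mod_cast le_top)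
  exact (hc.integrable_of_hasCompactSupport (hu.2.1.iteratedFDeriv j)).norm

lemma ins_sob (l : ℕ) {M : ℝ} (hM : 1 ≤ M) {F : Finset (Fin n → ℤ)}
    {u : (Fin n → ℤ) → Dom n → U} (hu : ∀ k ∈ F, CcSmooth (unitCube n) (u k)) :
    sobNorm l (ins l M F u) ≤ M⁻¹ * ∑ k ∈ F, (M^n)⁻¹ * sobNorm l (u k) := by
  have hM0 : 0 < M := by linarith
  unfold sobNorm
  have hint : ∀ k ∈ F, ∀ j, Integrable (fun x => ‖iteratedFDeriv ℝ j (u k) (M • x - zc k)‖) := by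
    intro k hk j
    have h1 := (integrable_iteratedFDeriv (hu k hk) j).comp_sub_right (zc k)
    exact (integrable_comp_smul_iff volume _ hM0.ne').2 h1
  have hj : ∀ j ∈ Finset.range l, ∫ x : Dom n, ‖iteratedFDeriv ℝ j (ins l M F u) x‖ ≤
      ∑ k ∈ F, M⁻¹ * ((M^n)⁻¹ * ∫ x : Dom n, ‖iteratedFDeriv ℝ j (u k) x‖) := by
    intro j hj
    have hjl : j + 1 ≤ l := Finset.mem_range.1 hj
    have hb : ∀ x, ‖iteratedFDeriv ℝ j (ins l M F u) x‖ ≤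
        ∑ k ∈ F, M⁻¹ * ‖iteratedFDeriv ℝ j (u k) (M • x - zc k)‖ := by
      intro x
      unfold ins
      rw [iteratedFDeriv_fun_sum_apply fun k hk => 
        ((scaled_contDiff (hu k hk).1 _ _ _).of_le (by exact_mod_cast le_top)).contDiffAt]
      refine norm_sum_le_of_le _ fun k hk => ?_
      rw [iteratedFDeriv_scaled (hu k hk).1, norm_smul]
      gcongr
      rw [Real.norm_eq_abs, abs_of_nonneg (by positivity), inv_mul_eq_div, inv_eq_one_div,
        div_le_div_iff₀ (by positivity) hM0, one_mul, ← pow_succ]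
      exact pow_le_pow_right₀ hM hjl
    calc ∫ x : Dom n, ‖iteratedFDeriv ℝ j (ins l M F u) x‖ 
        ≤ ∫ x : Dom n, ∑ k ∈ F, M⁻¹ * ‖iteratedFDeriv ℝ j (u k) (M • x - zc k)‖ := by
          refine integral_mono_of_nonneg (ae_of_all _ fun _ => norm_nonneg _)
            (integrable_finsetSum F fun k hk => (hint k hk j).const_mul _) (ae_of_all _ hb)
      _ = _ := by
          rw [integral_finsetSum F fun k hk => (hint k hk j).const_mul _]
          refine Finset.sum_congr rfl fun k hk => ?_
          rw [integral_const_mul]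
          congr 1
          rw [Measure.integral_comp_smul_of_nonneg volume
            (fun y => ‖iteratedFDeriv ℝ j (u k) (y - zc k)‖) _ (hR := hM0.le),
            integral_sub_right_eq_self (fun y => ‖iteratedFDeriv ℝ j (u k) y‖)]
          simp
  refine (Finset.sum_le_sum hj).trans (le_of_eq ?_)
  rw [Finset.sum_comm, Finset.mul_sum]
  refine Finset.sum_congr rfl fun k _ => ?_
  rw [Finset.mul_sum, Finset.mul_sum]

lemma sobNorm_nonneg (l : ℕ) (u : Dom n → U) : 0 ≤ sobNorm l u :=
  Finset.sum_nonneg fun _ _ => integral_nonneg fun _ => norm_nonneg _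

end insert


section Qsec
variable {n : ℕ} {U V : Type*} [NormedAddCommGroup V] [NormedSpace ℝ V]
    [NormedAddCommGroup U] [NormedSpace ℝ U]

lemma opApply_integrable (B : (Fin n → ℕ) → (U →L[ℝ] V)) (l : ℕ) {Ω : Set (Dom n)} {u : Dom n → U}
    (hu : CcSmooth Ω u) : Integrable (opApply B l u) := by
  refine (opApply_contDiff B l hu.1).continuous.integrable_of_hasCompactSupport ?_
  refine HasCompactSupport.of_support_subset_isCompact hu.2.1 fun x hx => ?_
  by_contra hc
  exact hx (opApply_eq_zero_of_notMem B l hc)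

lemma lip_abs {K : NNReal} {Φ : V → ℝ} (hΦ : LipschitzWith K Φ) (z w : V) :
    |Φ z - Φ w| ≤ K * ‖z - w‖ := by
  have := hΦ.dist_le_mul z w
  rwa [Real.dist_eq, dist_eq_norm] at this

lemma lip_integrableOn {K : NNReal} {Φ : V → ℝ} (hΦ : LipschitzWith K Φ) {s : Set (Dom n)}
    (hs : volume s < ⊤) {f : Dom n → V} (hf : IntegrableOn f s) :
    IntegrableOn (fun x => Φ (f x)) s := by
  have : IsFiniteMeasure (volume.restrict s) := ⟨by simpa using hs⟩
  refine Integrable.mono' (g := fun x => |Φ 0| + K * ‖f x‖) ?_ ?_ ?_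
  · exact (integrable_const _).add (hf.norm.const_mul _)
  · exact hΦ.continuous.comp_aestronglyMeasurable hf.aestronglyMeasurable
  · refine ae_of_all _ fun x => ?_
    have := lip_abs hΦ (f x) 0
    rw [sub_zero] at this
    rw [Real.norm_eq_abs]
    have h2 : Φ (f x) = Φ 0 + (Φ (f x) - Φ 0) := by ring
    rw [h2]
    exact (abs_add_le _ _).trans (by linarith)

lemma volume_unitCube_lt_top : volume (unitCube n) < ⊤ := by rw [volume_unitCube]; simp

lemma integrableOn_const_add {s : Set (Dom n)} (hs : volume s < ⊤) (a : V) {f : Dom n → V}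
    (hf : IntegrableOn f s) : IntegrableOn (fun x => a + f x) s := by
  have : IsFiniteMeasure (volume.restrict s) := ⟨by simpa using hs⟩
  exact (integrable_const a).add hf

/-- Difference estimate -/
lemma lip_integral_diff {K : NNReal} {Φ : V → ℝ} (hΦ : LipschitzWith K Φ) {s : Set (Dom n)}
    (hs : volume s < ⊤) {f g : Dom n → V} (hf : IntegrableOn f s) (hg : IntegrableOn g s) :
    |(∫ x in s, Φ (f x)) - ∫ x in s, Φ (g x)| ≤ K * ∫ x in s, ‖f x - g x‖ := by
  rw [← integral_sub (lip_integrableOn hΦ hs hf) (lip_integrableOn hΦ hs hg), ← integral_const_mul]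
  rw [← Real.norm_eq_abs]
  refine norm_integral_le_of_norm_le ((hf.sub hg).norm.const_mul _) (ae_of_all _ fun x => ?_)
  exact lip_abs hΦ _ _

def Jf (B : (Fin n → ℕ) → (U →L[ℝ] V)) (l : ℕ) (Φ : V → ℝ) (z : V) (u : Dom n → U) : ℝ :=
  ∫ x in unitCube n, Φ (z + opApply B l u x)

lemma paste (B : (Fin n → ℕ) → (U →L[ℝ] V)) (l : ℕ) {M : ℝ} (hM : 0 < M) {F : Finset (Fin n → ℤ)}
    {u : (Fin n → ℤ) → Dom n → U} (hu : ∀ k ∈ F, CcSmooth (unitCube n) (u k)) {k : Fin n → ℤ}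
    (hk : k ∈ F) {K : NNReal} {Φ : V → ℝ} (hΦ : LipschitzWith K Φ) {z : Dom n → V} (a : V)
    (hz : IntegrableOn z (cell M k)) :
    |(∫ x in cell M k, Φ (z x + opApply B l (ins l M F u) x)) - (M^n)⁻¹ * Jf B l Φ a (u k)|
      ≤ K * ∫ x in cell M k, ‖z x - a‖ := by
  have hfin := volume_cell_lt_top hM k
  have hψ : CcSmooth Set.univ (ins l M F u) := ins_ccSmooth l hM hu fun _ _ => Set.subset_univ _
  have hint := (opApply_integrable B l hψ).integrableOn (s := cell M k)
  have h1 : (M^n)⁻¹ * Jf B l Φ a (u k) = ∫ x in cell M k, Φ (a + opApply B l (ins l M F u) x) := by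
    have := integral_cell hM k (fun y => Φ (a + opApply B l (u k) y))
    rw [smul_eq_mul] at this
    rw [Jf, ← this]
    refine setIntegral_congr_fun (cell_meas M k) fun x hx => ?_
    rw [ins_op_on B l hM hu hk hx]
  rw [h1]
  have := lip_integral_diff hΦ hfin (hz.add hint) (integrableOn_const_add hfin a hint)
  simpa using this

def Qf (B : (Fin n → ℕ) → (U →L[ℝ] V)) (l : ℕ) (Φ : V → ℝ) (z : V) : ℝ :=
  ⨅ u : {u : Dom n → U // CcSmooth (unitCube n) u}, Jf B l Φ z u

def QBdd (B : (Fin n → ℕ) → (U →L[ℝ] V)) (l : ℕ) (Φ : V → ℝ) (z : V) : Prop :=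
  ∃ m : ℝ, ∀ u : Dom n → U, CcSmooth (unitCube n) u → m ≤ Jf B l Φ z u

lemma ccSmooth_zero (Ω : Set (Dom n)) : CcSmooth Ω (fun _ : Dom n => (0:U)) := by
  refine ⟨contDiff_const, HasCompactSupport.zero, ?_⟩
  have : tsupport (fun _ : Dom n => (0:U)) = ∅ := tsupport_eq_empty_iff.2 rfl
  simp [this]

lemma CcSmooth.add {Ω : Set (Dom n)} {u w : Dom n → U} (hu : CcSmooth Ω u) (hw : CcSmooth Ω w) :
    CcSmooth Ω (fun x => u x + w x) :=
  ⟨hu.1.add hw.1, hu.2.1.add hw.2.1, (tsupport_add u w).trans (Set.union_subset hu.2.2 hw.2.2)⟩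

variable (B : (Fin n → ℕ) → (U →L[ℝ] V)) (l : ℕ) {K : NNReal} {Φ : V → ℝ}

lemma Jf_lip (hΦ : LipschitzWith K Φ) {u : Dom n → U} (hu : CcSmooth (unitCube n) u) (z w : V) :
    |Jf B l Φ z u - Jf B l Φ w u| ≤ K * ‖z - w‖ := by
  have hint := (opApply_integrable B l hu).integrableOn (s := unitCube n)
  have := lip_integral_diff hΦ volume_unitCube_lt_top
    (integrableOn_const_add volume_unitCube_lt_top z hint)
    (integrableOn_const_add volume_unitCube_lt_top w hint)
  simpa [Jf, volumeReal_unitCube] using this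

lemma QBdd.all (hΦ : LipschitzWith K Φ) {z : V} (h : QBdd B l Φ z) (w : V) : QBdd B l Φ w := by
  obtain ⟨m, hm⟩ := h
  refine ⟨m - K * ‖z - w‖, fun u hu => ?_⟩
  have h1 := abs_le.1 (Jf_lip B l hΦ hu z w)
  linarith [hm u hu]

variable {B l}

lemma QBdd.bddBelow {z : V} (h : QBdd B l Φ z) :
    BddBelow (Set.range fun u : {u : Dom n → U // CcSmooth (unitCube n) u} => Jf B l Φ z u) := by
  obtain ⟨m, hm⟩ := h
  refine ⟨m, ?_⟩
  rintro _ ⟨u, rfl⟩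
  exact hm u u.2

lemma Qf_le {z : V} (h : QBdd B l Φ z) {u : Dom n → U} (hu : CcSmooth (unitCube n) u) :
    Qf B l Φ z ≤ Jf B l Φ z u :=
  ciInf_le h.bddBelow (⟨u, hu⟩ : {u : Dom n → U // CcSmooth (unitCube n) u})

lemma le_Qf {z : V} {m : ℝ} (h : ∀ u : Dom n → U, CcSmooth (unitCube n) u → m ≤ Jf B l Φ z u) :
    m ≤ Qf B l Φ z := by
  haveI : Nonempty {u : Dom n → U // CcSmooth (unitCube n) u} := ⟨⟨_, ccSmooth_zero _⟩⟩
  exact le_ciInf fun u => h u u.2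

lemma exists_Qf_lt (z : V) {δ : ℝ} (hδ : 0 < δ) :
    ∃ u : Dom n → U, CcSmooth (unitCube n) u ∧ Jf B l Φ z u < Qf B l Φ z + δ := by
  haveI : Nonempty {u : Dom n → U // CcSmooth (unitCube n) u} := ⟨⟨_, ccSmooth_zero _⟩⟩
  obtain ⟨u, hu⟩ := exists_lt_of_ciInf_lt (show Qf B l Φ z < Qf B l Φ z + δ by linarith)
  exact ⟨u, u.2, hu⟩

lemma Qf_le_self {z : V} (h : QBdd B l Φ z) : Qf B l Φ z ≤ Φ z := by
  have := Qf_le h (ccSmooth_zero (U := U) (unitCube n))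
  simpa [Jf, opApply_zero, volumeReal_unitCube] using this

lemma Qf_lip (hΦ : LipschitzWith K Φ) {z0 : V} (h : QBdd B l Φ z0) : LipschitzWith K (Qf B l Φ) := by
  refine LipschitzWith.of_le_add_mul K fun z w => ?_
  rw [dist_eq_norm, ← sub_le_iff_le_add]
  refine le_Qf fun u hu => ?_
  have h1 := abs_le.1 (Jf_lip B l hΦ hu z w)
  have := Qf_le (h.all B l hΦ z) hu
  linarith

lemma insert_cont (hΦ : LipschitzWith K Φ) {z0 : V} (h : QBdd B l Φ z0) {g : Dom n → V}
    (hg : Continuous g) {δ : ℝ} (hδ : 0 < δ) : ∃ ψ : Dom n → U, CcSmooth (unitCube n) ψ ∧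
      ∫ x in unitCube n, Φ (g x + opApply B l ψ x) ≤ (∫ x in unitCube n, Qf B l Φ (g x)) + δ := by
  set d : ℝ := δ / (1 + 2 * K) with hd
  have hd0 : 0 < d := by positivity
  have hQ := Qf_lip hΦ h
  obtain ⟨r, hr, hgr⟩ := Metric.uniformContinuousOn_iff.1
    (closedUnitCube_compact.uniformContinuousOn_of_continuous hg.continuousOn) d hd0
  obtain ⟨m, hm⟩ := exists_nat_gt (r⁻¹)
  set M : ℝ := 2 * m + 1 with hMd
  have hM : 0 < M := by positivity
  have hMr : M⁻¹ < r := by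
    rw [inv_lt_comm₀ hM hr]
    have : (0:ℝ) ≤ m := by positivity
    linarith
  let a : (Fin n → ℤ) → V := fun k => g (M⁻¹ • zc k)
  choose u hu huQ using fun k => exists_Qf_lt (B := B) (l := l) (Φ := Φ) (a k) hd0
  have hcen : ∀ k : Fin n → ℤ, M⁻¹ • zc k ∈ cell M k := by
    intro k; simp only [cell, Set.mem_setOf_eq, smul_inv_smul₀ hM.ne', sub_self]
    rw [mem_unitCube]; intro i; simp
  have hψ : CcSmooth (unitCube n) (ins l M (Fm n m) u) :=
    ins_ccSmooth l hM (fun k _ => hu k) fun k hk => cell_subset_unitCube hk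
  have hgi : IntegrableOn g (unitCube n) :=
    (hg.continuousOn.integrableOn_compact closedUnitCube_compact).mono_set unitCube_subset_closed
  refine ⟨_, hψ, ?_⟩
  have hi1 : IntegrableOn (fun x => Φ (g x + opApply B l (ins l M (Fm n m) u) x)) (unitCube n) :=
    lip_integrableOn hΦ volume_unitCube_lt_top (hgi.add (opApply_integrable B l hψ).integrableOn)
  have hi2 : IntegrableOn (fun x => Qf B l Φ (g x)) (unitCube n) :=
    lip_integrableOn hQ volume_unitCube_lt_top hgi
  rw [integral_unitCube_eq_sum m hi1, integral_unitCube_eq_sum m hi2]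
  have hcell : ∀ k ∈ Fm n m, ∫ x in cell M k, Φ (g x + opApply B l (ins l M (Fm n m) u) x) ≤
      (∫ x in cell M k, Qf B l Φ (g x)) + (M^n)⁻¹ * δ := by
    intro k hk
    have hgk := hgi.mono_set (cell_subset_unitCube hk)
    have hfin := volume_cell_lt_top hM k
    haveI : IsFiniteMeasure (volume.restrict (cell M k)) := ⟨by simpa using hfin⟩
    have h1 := (abs_le.1 (paste B l hM (fun k _ => hu k) hk hΦ (a k) hgk)).2
    have h2 := (abs_le.1 (lip_integral_diff hQ hfin hgk (integrable_const (a k)))).1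
    have hnorm : ∫ x in cell M k, ‖g x - a k‖ ≤ (M^n)⁻¹ * d := by
      have : ∫ x in cell M k, ‖g x - a k‖ ≤ ∫ x in cell M k, d := by
        refine setIntegral_mono_on (hgk.sub (integrable_const _)).norm (integrable_const _)
          (cell_meas M k) fun x hx => ?_
        have := hgr x (unitCube_subset_closed (cell_subset_unitCube hk hx)) _
          (unitCube_subset_closed (cell_subset_unitCube hk (hcen k)))
          ((cell_bounded hM k hx (hcen k)).trans_lt hMr)
        rw [dist_eq_norm] at this
        exact this.le
      simpa [volumeReal_cell hM k] using this
    have h3 : ∫ x in cell M k, Qf B l Φ (a k) = (M^n)⁻¹ * Qf B l Φ (a k) := by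
      simp [volumeReal_cell hM k]
    rw [h3] at h2
    have h4 : (M^n)⁻¹ * Jf B l Φ (a k) (u k) ≤ (M^n)⁻¹ * (Qf B l Φ (a k) + d) :=
      mul_le_mul_of_nonneg_left (huQ k).le (by positivity)
    have h5 : (K:ℝ) * ∫ x in cell M k, ‖g x - a k‖ ≤ K * ((M^n)⁻¹ * d) :=
      mul_le_mul_of_nonneg_left hnorm (by positivity)
    have h6 : (M^n)⁻¹ * δ = (M^n)⁻¹ * d + 2 * (K * ((M^n)⁻¹ * d)) := by
      rw [hd]; field_simp
    rw [h6]
    linarith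
  refine (Finset.sum_le_sum hcell).trans (le_of_eq ?_)
  rw [Finset.sum_add_distrib]
  congr 1
  rw [Finset.sum_const, Fm_card, nsmul_eq_mul]
  push_cast
  rw [← hMd]
  field_simp

/-- bounded periodic -/
lemma zper_bdd {E : Type*} [NormedAddCommGroup E] {f : Dom n → E} (hf : Continuous f)
    (hp : ZPeriodic f) : ∃ C : ℝ, ∀ x, ‖f x‖ ≤ C := by
  obtain ⟨C, hC⟩ := closedUnitCube_compact.exists_bound_of_continuousOn (hf.continuousOn (s := closedUnitCube n))
  refine ⟨C, fun x => ?_⟩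
  have := hC (x + fun i => ((-round (x i) : ℤ) : ℝ)) (by
    intro i _
    have h := abs_le.1 (abs_sub_round (x i))
    simp only [Pi.add_apply, Int.cast_neg, Set.mem_Icc]
    constructor <;> linarith)
  rwa [hp] at this

lemma zper_iteratedFDeriv {u : Dom n → U} (hp : ZPeriodic u) (j : ℕ) :
    ZPeriodic (iteratedFDeriv ℝ j u) := by
  intro x m
  rw [← iteratedFDeriv_comp_add_right]
  congr 1
  ext y; exact hp y m

lemma zper_opApply {u : Dom n → U} (hp : ZPeriodic u) : ZPeriodic (opApply B l u) := by
  intro x m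
  have := opApply_scale B l 1 1 (-(fun i => (m i : ℝ))) u x
  simp only [one_smul, sub_neg_eq_add, one_pow, one_mul] at this
  rw [← this]
  congr 1
  ext y; exact hp y m

lemma exists_cutoff {K0 : Set (Dom n)} (hK : IsCompact K0) (hKs : K0 ⊆ unitCube n) :
    ∃ χ : Dom n → ℝ, CcSmooth (unitCube n) χ ∧ (∀ x ∈ K0, ∀ᶠ y in 𝓝 x, χ y = 1) ∧
      ∀ x, χ x ∈ Set.Icc (0:ℝ) 1 := by
  obtain ⟨f, h0, h1, hf⟩ := exists_contMDiffMap_zero_one_nhds_of_isClosed (n := (⊤ : ℕ∞))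
    (modelWithCornersSelf ℝ (Dom n)) (s := (unitCube n)ᶜ) (t := K0) unitCube_isOpen.isClosed_compl hK.isClosed
    (Set.disjoint_left.2 fun x hx hx' => hx (hKs hx'))
  have hts : tsupport f ⊆ unitCube n := by
    intro x hx
    by_contra hc
    have : ∀ᶠ y in 𝓝 x, f y = 0 := eventually_nhdsSet_iff_forall.1 h0 x hc
    exact (notMem_tsupport_iff_eventuallyEq.2 this) hx
  refine ⟨f, ⟨f.contMDiff.contDiff, ?_, hts⟩, eventually_nhdsSet_iff_forall.1 h1, hf⟩
  exact closedUnitCube_compact.of_isClosed_subset (isClosed_tsupport _) (hts.trans unitCube_subset_closed)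

lemma exists_bound_cc {u : Dom n → U} {Ω : Set (Dom n)} (hu : CcSmooth Ω u) (j : ℕ) :
    ∃ C, ∀ x, ‖iteratedFDeriv ℝ j u x‖ ≤ C := by
  have hc : Continuous (iteratedFDeriv ℝ j u) := hu.1.continuous_iteratedFDeriv (by exact_mod_cast le_top)
  exact hc.bounded_above_of_compact_support (hu.2.1.iteratedFDeriv j)

set_option maxHeartbeats 1000000 in
lemma Qf_le_periodic (hΦ : LipschitzWith K Φ) {z0 : V} (h : QBdd B l Φ z0) (z : V) {u : Dom n → U}
    (hu : ContDiff ℝ (⊤ : ℕ∞) u) (hp : ZPeriodic u) :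
    Qf B l Φ z ≤ ∫ x in unitCube n, Qf B l Φ (z + opApply B l u x) := by
  have hQ := Qf_lip hΦ h
  have hcu : Continuous (opApply B l u) := (opApply_contDiff B l hu).continuous
  -- bounds
  choose C hC using fun j : ℕ => zper_bdd (hu.continuous_iteratedFDeriv (m := j) (by exact_mod_cast le_top))
    (zper_iteratedFDeriv hp j)
  set Cm : ℝ := ∑ j ∈ Finset.range (l+1), |C j| with hCm
  have hCm0 : 0 ≤ Cm := Finset.sum_nonneg fun _ _ => abs_nonneg _
  have hCj : ∀ j ≤ l, ∀ x, ‖iteratedFDeriv ℝ j u x‖ ≤ Cm := fun j hj x =>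
    (hC j x).trans ((le_abs_self _).trans
      (Finset.single_le_sum (f := fun j => |C j|) (fun _ _ => abs_nonneg _) (Finset.mem_range.2 (by omega))))
  set CB : ℝ := ∑ α ∈ degSet n l, ‖B α‖ with hCB
  have hCB0 : 0 ≤ CB := Finset.sum_nonneg fun _ _ => norm_nonneg _
  set R : ℝ := CB * (Cm + 1) with hR
  have hR0 : 0 ≤ R := by positivity
  refine le_of_forall_pos_le_add fun ε hε => ?_
  set θ : ℝ := ε / 2 / (K * (2 * R) + 1) with hθ
  have hθ0 : 0 < θ := by positivity
  obtain ⟨K0, hK0s, hK0c, hK0v⟩ := MeasurableSet.exists_isCompact_sdiff_lt (μ := volume) (unitCube_meas (n := n))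
    volume_unitCube_lt_top.ne (ε := ENNReal.ofReal θ) (by simpa using hθ0)
  obtain ⟨χ, hχ, hχ1, hχI⟩ := exists_cutoff hK0c hK0s
  choose D hD using fun j : ℕ => exists_bound_cc hχ j
  set S : ℝ := ∑ i ∈ Finset.range l, (l.choose (i+1) : ℝ) * |D (i+1)| * Cm with hS
  have hS0 : 0 ≤ S := Finset.sum_nonneg fun _ _ => by positivity
  obtain ⟨m, hm⟩ := exists_nat_gt S
  set M : ℝ := 2 * m + 1 with hMd
  have hM : 0 < M := by positivity
  have hM1 : 1 ≤ M := by have : (0:ℝ) ≤ m := by positivity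
                         linarith
  have hSM : M⁻¹ * S ≤ 1 := by
    rw [inv_mul_le_iff₀ hM]
    have : (0:ℝ) ≤ m := by positivity
    linarith
  let uM : Dom n → U := fun x => (M^l)⁻¹ • u (M • x - 0)
  have huM : ContDiff ℝ (⊤ : ℕ∞) uM := scaled_contDiff hu _ _ _
  have huMd : ∀ j ≤ l, ∀ x, ‖iteratedFDeriv ℝ j uM x‖ ≤ (M^l)⁻¹ * M^j * Cm := by
    intro j hj x
    rw [iteratedFDeriv_scaled hu, norm_smul, Real.norm_eq_abs, abs_of_nonneg (by positivity)]
    exact mul_le_mul_of_nonneg_left (hCj j hj _) (by positivity)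
  have huMop : ∀ x, opApply B l uM x = opApply B l u (M • x) := by
    intro x
    rw [opApply_scale, inv_mul_cancel₀ (by positivity), one_smul, sub_zero]
  let ψ1 : Dom n → U := fun x => χ x • uM x
  have hψ1 : CcSmooth (unitCube n) ψ1 := ⟨hχ.1.smul huM, hχ.2.1.smul_right,
    (tsupport_smul_subset_left χ uM).trans hχ.2.2⟩
  have hψ1K : ∀ x ∈ K0, opApply B l ψ1 x = opApply B l u (M • x) := by
    intro x hx
    rw [← huMop]
    refine opApply_congr B l ?_
    filter_upwards [hχ1 x hx] with y hy
    simp [ψ1, hy]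
  have hψ1b : ∀ x, ‖opApply B l ψ1 x‖ ≤ R := by
    intro x
    refine (norm_opApply_le B l hψ1.1 x).trans ?_
    refine mul_le_mul_of_nonneg_left ?_ hCB0
    refine (norm_iteratedFDeriv_smul_le hχ.1 huM x (n := l) (by exact_mod_cast le_top)).trans ?_
    rw [Finset.sum_range_succ']
    have ht0 : (l.choose 0 : ℝ) * ‖iteratedFDeriv ℝ 0 χ x‖ * ‖iteratedFDeriv ℝ (l - 0) uM x‖ ≤ Cm := by
      have e1 : ‖iteratedFDeriv ℝ 0 χ x‖ ≤ 1 := by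
        rw [norm_iteratedFDeriv_zero, Real.norm_eq_abs, abs_of_nonneg (hχI x).1]; exact (hχI x).2
      have e2 : ‖iteratedFDeriv ℝ (l - 0) uM x‖ ≤ Cm := by
        have := huMd l le_rfl x
        rw [inv_mul_cancel₀ (by positivity), one_mul] at this
        simpa using this
      simp only [Nat.choose_zero_right, Nat.cast_one, one_mul]
      calc _ ≤ 1 * Cm := mul_le_mul e1 e2 (norm_nonneg _) zero_le_one
        _ = Cm := one_mul _
    have hti : ∑ i ∈ Finset.range l, (l.choose (i+1) : ℝ) * ‖iteratedFDeriv ℝ (i+1) χ x‖ *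
        ‖iteratedFDeriv ℝ (l - (i+1)) uM x‖ ≤ M⁻¹ * S := by
      rw [hS, Finset.mul_sum]
      refine Finset.sum_le_sum fun i hi => ?_
      have hil : i + 1 ≤ l := Finset.mem_range.1 hi
      have e1 : ‖iteratedFDeriv ℝ (i+1) χ x‖ ≤ |D (i+1)| := (hD _ x).trans (le_abs_self _)
      have e2 : ‖iteratedFDeriv ℝ (l - (i+1)) uM x‖ ≤ M⁻¹ * Cm := by
        refine (huMd _ (by omega) x).trans (mul_le_mul_of_nonneg_right ?_ hCm0)
        rw [inv_mul_eq_div, inv_eq_one_div, div_le_div_iff₀ (by positivity) hM, one_mul, ← pow_succ]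
        exact pow_le_pow_right₀ hM1 (by omega)
      calc _ ≤ (l.choose (i+1) : ℝ) * |D (i+1)| * (M⁻¹ * Cm) := by gcongr
        _ = _ := by ring
    linarith
  have hub : ∀ x, ‖opApply B l u x‖ ≤ R := by
    intro x
    refine (norm_opApply_le B l hu x).trans (mul_le_mul_of_nonneg_left ?_ hCB0)
    linarith [hCj l le_rfl x]
  have hg : Continuous fun x => z + opApply B l ψ1 x :=
    continuous_const.add (opApply_contDiff B l hψ1.1).continuous
  obtain ⟨ψ2, hψ2, hle⟩ := insert_cont hΦ h hg (half_pos hε)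
  have hstep1 : Qf B l Φ z ≤ (∫ x in unitCube n, Qf B l Φ (z + opApply B l ψ1 x)) + ε/2 := by
    refine (Qf_le (h.all B l hΦ z) (hψ1.add hψ2)).trans (le_trans (le_of_eq ?_) hle)
    unfold Jf
    congr 1; ext x
    rw [opApply_add B l hψ1.1 hψ2.1, add_assoc]
  -- compare
  have hcM : Continuous fun x : Dom n => opApply B l u (M • x) := hcu.comp (by fun_prop)
  have hio : ∀ {f : Dom n → V}, Continuous f → IntegrableOn f (unitCube n) := fun hf =>
    (hf.continuousOn.integrableOn_compact closedUnitCube_compact).mono_set unitCube_subset_closed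
  have hstep2 := (abs_le.1 (lip_integral_diff hQ volume_unitCube_lt_top (hio hg)
    (hio (continuous_const.add hcM) : IntegrableOn (fun x => z + opApply B l u (M • x)) _))).2
  have hdiff : ∫ x in unitCube n, ‖(z + opApply B l ψ1 x) - (z + opApply B l u (M • x))‖ ≤ 2 * R * θ := by
    have hle : ∀ x ∈ unitCube n, ‖(z + opApply B l ψ1 x) - (z + opApply B l u (M • x))‖ ≤
        (unitCube n \ K0).indicator (fun _ => 2 * R) x := by
      intro x hx
      by_cases hxK : x ∈ K0
      · simp [hψ1K x hxK, hxK]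
      · rw [Set.indicator_of_mem (show x ∈ unitCube n \ K0 from ⟨hx, hxK⟩), add_sub_add_left_eq_sub]
        exact (norm_sub_le _ _).trans (by linarith [hψ1b x, hub (M • x)])
    have hms : MeasurableSet (unitCube n \ K0) := unitCube_meas.diff hK0c.measurableSet
    have hi : Integrable ((unitCube n \ K0).indicator (fun _ : Dom n => 2 * R)) := by
      rw [integrable_indicator_iff hms]
      exact integrableOn_const (hK0v.trans (by simp)).ne
    calc _ ≤ ∫ x in unitCube n, (unitCube n \ K0).indicator (fun _ => 2 * R) x :=
          setIntegral_mono_on ((hio hg).sub (hio (continuous_const.add hcM))).norm hi.integrableOn unitCube_meas hle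
      _ ≤ ∫ x, (unitCube n \ K0).indicator (fun _ => 2 * R) x :=
          setIntegral_le_integral hi (ae_of_all _ fun x => Set.indicator_nonneg (fun _ _ => by positivity) x)
      _ = volume.real (unitCube n \ K0) * (2 * R) := by
          rw [integral_indicator hms]; simp
      _ ≤ θ * (2 * R) := by
          refine mul_le_mul_of_nonneg_right ?_ (by positivity)
          exact ENNReal.toReal_le_of_le_ofReal hθ0.le hK0v.le
      _ = _ := by ring
  have hper : ∫ x in unitCube n, Qf B l Φ (z + opApply B l u (M • x)) =
      ∫ x in unitCube n, Qf B l Φ (z + opApply B l u x) := by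
    rw [integral_unitCube_eq_sum m (lip_integrableOn hQ volume_unitCube_lt_top
      (hio (continuous_const.add hcM) : IntegrableOn (fun x => z + opApply B l u (M • x)) _))]
    have : ∀ k ∈ Fm n m, ∫ x in cell M k, Qf B l Φ (z + opApply B l u (M • x)) =
        (M^n)⁻¹ * ∫ x in unitCube n, Qf B l Φ (z + opApply B l u x) := by
      intro k _
      rw [← smul_eq_mul, ← integral_cell hM k]
      refine integral_congr_ae (ae_of_all _ fun x => ?_)
      have h1 := zper_opApply (B := B) (l := l) hp (M • x - zc k) k
      have h2 : (M • x - zc k + fun i => ((k i : ℤ) : ℝ)) = M • x := sub_add_cancel _ _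
      rw [h2] at h1
      show Qf B l Φ (z + opApply B l u (M • x)) = Qf B l Φ (z + opApply B l u (M • x - zc k))
      rw [h1]
    rw [Finset.sum_congr rfl this, Finset.sum_const, Fm_card, nsmul_eq_mul]
    push_cast
    rw [← hMd]
    exact mul_inv_cancel_left₀ (pow_pos hM n).ne' _
  have hfin : (K:ℝ) * (2 * R * θ) ≤ ε / 2 := by
    have : (K:ℝ) * (2 * R * θ) = (K * (2*R)) * θ := by ring
    rw [this, hθ, mul_div_assoc', div_le_iff₀ (by positivity)]
    nlinarith
  have := mul_le_mul_of_nonneg_left hdiff K.2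
  rw [hper] at hstep2
  have e : ((K:NNReal):ℝ) = K.1 := rfl
  rw [e] at hstep2 hfin
  linarith

end Qsec

section Fsec
variable {n : ℕ}

lemma setOf_Ioc_ae : ({x : Dom n | ∀ i, x i ∈ Set.Ioc ((fun _ : Fin n => -(1/2:ℝ)) i) ((fun _ : Fin n => -(1/2:ℝ)) i + 1)} : Set (Dom n)) =ᵐ[volume] unitCube n := by
  have h1 : ({x : Dom n | ∀ i, x i ∈ Set.Ioc ((fun _ : Fin n => -(1/2:ℝ)) i) ((fun _ : Fin n => -(1/2:ℝ)) i + 1)} : Set (Dom n)) =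
      Set.pi Set.univ fun i => Set.Ioc (-(1/2:ℝ)) (1/2) := by
    ext x; simp only [Set.mem_pi, Set.mem_univ, forall_true_left, Set.mem_setOf_eq]
    norm_num
  rw [h1]
  exact (Measure.univ_pi_Ioc_ae_eq_Icc (μ := fun _ : Fin n => (volume : Measure ℝ))).trans
    (Measure.univ_pi_Ioo_ae_eq_Icc (μ := fun _ : Fin n => (volume : Measure ℝ))).symm

def dotp (ξ : Fin n → ℤ) (x : Dom n) : ℝ := ∑ i, (2 * Real.pi * ξ i) * x i

lemma mFourier_coe (ξ : Fin n → ℤ) (x : Dom n) :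
    UnitAddTorus.mFourier ξ (fun i => (x i : UnitAddCircle)) = Complex.exp (dotp ξ x * Complex.I) := by
  simp only [UnitAddTorus.mFourier, ContinuousMap.coe_mk, fourier_coe_apply, dotp]
  rw [← Complex.exp_sum]
  congr 1
  push_cast
  rw [Finset.sum_mul]
  refine Finset.sum_congr rfl fun i _ => ?_
  ring

lemma exists_torus_lift {f : Dom n → ℝ} (hf : Continuous f) (hp : ZPeriodic f) :
    ∃ F : C(UnitAddTorus (Fin n), ℂ), ∀ x : Dom n, F (fun i => (x i : UnitAddCircle)) = (f x : ℂ) := by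
  let π : Dom n → UnitAddTorus (Fin n) := Pi.map (fun _ (x:ℝ) => (x : UnitAddCircle))
  have hπ : IsOpenQuotientMap π := IsOpenQuotientMap.piMap fun _ => QuotientAddGroup.isOpenQuotientMap_mk
  have hfac : ∀ x y, π x = π y → f x = f y := by
    intro x y hxy
    have : ∀ i, ∃ m : ℤ, x i = y i + m := by
      intro i
      have h := congr_fun hxy i
      simp only [π, Pi.map_apply] at h
      rw [← sub_eq_zero, ← AddCircle.coe_sub, AddCircle.coe_eq_zero_iff] at h
      obtain ⟨m, hm⟩ := h
      refine ⟨m, ?_⟩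
      simp only [zsmul_eq_mul, mul_one] at hm
      linarith
    choose m hm using this
    rw [show x = y + fun i => (m i : ℝ) from funext hm, hp]
  let F0 : UnitAddTorus (Fin n) → ℂ := fun y => (f (Function.surjInv hπ.surjective y) : ℂ)
  have hF : ∀ x, F0 (π x) = (f x : ℂ) := fun x => by
    simp only [F0]
    rw [hfac _ x (Function.surjInv_eq hπ.surjective (π x))]
  refine ⟨⟨F0, ?_⟩, hF⟩
  rw [hπ.isQuotientMap.continuous_iff]
  exact (Complex.continuous_ofReal.comp hf).congr fun x => (hF x).symm

lemma fourier_scalar {f : Dom n → ℝ} (hf : Continuous f) (hp : ZPeriodic f) {δ : ℝ} (hδ : 0 < δ) :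
    ∀ᶠ s : Finset (Fin n → ℤ) in atTop, ∫ x in unitCube n,
      |f x - ∑ ξ ∈ s, ((∫ y in unitCube n, f y * Real.cos (dotp ξ y)) * Real.cos (dotp ξ x) +
        (∫ y in unitCube n, f y * Real.sin (dotp ξ y)) * Real.sin (dotp ξ x))| < δ := by
  obtain ⟨F, hF⟩ := exists_torus_lift hf hp
  letI iM : MeasureSpace UnitAddCircle := ⟨AddCircle.haarAddCircle⟩
  haveI : Measure.IsAddHaarMeasure (volume : Measure UnitAddCircle) :=
    inferInstanceAs (Measure.IsAddHaarMeasure AddCircle.haarAddCircle)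
  haveI : IsProbabilityMeasure (volume : Measure UnitAddCircle) :=
    inferInstanceAs (IsProbabilityMeasure AddCircle.haarAddCircle)
  let c : (Fin n → ℤ) → ℂ := fun ξ => UnitAddTorus.mFourierCoeff F ξ
  have hs : HasSum (fun ξ => c ξ • UnitAddTorus.mFourierLp 2 ξ) (ContinuousMap.toLp 2 volume ℂ F) := by
    have := UnitAddTorus.hasSum_mFourier_series_L2 (ContinuousMap.toLp 2 volume ℂ F)
    simp only [UnitAddTorus.mFourierCoeff_toLp] at this
    exact this
  have hc : ∀ ξ, c ξ = ((∫ y in unitCube n, f y * Real.cos (dotp ξ y) : ℝ) : ℂ) -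
      ((∫ y in unitCube n, f y * Real.sin (dotp ξ y) : ℝ) : ℂ) * Complex.I := by
    intro ξ
    simp only [c]
    rw [UnitAddTorus.mFourierCoeff_eq_integral F ξ (fun _ => -(1/2:ℝ)), setIntegral_congr_set setOf_Ioc_ae]
    have hi : ∀ {g : Dom n → ℝ}, Continuous g → IntegrableOn g (unitCube n) := fun hf =>
      (hf.continuousOn.integrableOn_compact closedUnitCube_compact).mono_set unitCube_subset_closed
    have hd : Continuous (dotp ξ : Dom n → ℝ) := by unfold dotp; fun_prop
    have h1 := hi (hf.mul (Real.continuous_cos.comp hd))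
    have h2 := hi (hf.mul (Real.continuous_sin.comp hd))
    rw [← integral_complex_ofReal, ← integral_complex_ofReal, ← integral_mul_const, ← integral_sub]
    · refine integral_congr_ae (ae_of_all _ fun x => ?_)
      simp only
      rw [hF, mFourier_coe]
      have : ((dotp (-ξ) x : ℝ) : ℂ) = -((dotp ξ x : ℝ):ℂ) := by
        simp [dotp]
      rw [this, Complex.exp_mul_I, Complex.cos_neg, Complex.sin_neg, smul_eq_mul]
      push_cast
      ring
    · exact h1.ofReal
    · exact (h2.ofReal (𝕜 := ℂ)).mul_const _
  filter_upwards [(Metric.tendsto_nhds.1 hs) δ hδ] with s hs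
  let G : C(UnitAddTorus (Fin n), ℂ) := F - ∑ ξ ∈ s, c ξ • UnitAddTorus.mFourier ξ
  have hG : ‖ContinuousMap.toLp 2 (volume : Measure (UnitAddTorus (Fin n))) ℂ G‖ < δ := by
    rw [dist_comm, dist_eq_norm] at hs
    have e : ContinuousMap.toLp 2 (volume : Measure (UnitAddTorus (Fin n))) ℂ G =
        ContinuousMap.toLp 2 volume ℂ F - ∑ b ∈ s, c b • UnitAddTorus.mFourierLp 2 b := by
      simp only [G]
      rw [map_sub, map_sum]
      rfl
    rw [e]
    exact hs
  have hG1 : ∫ y, ‖G y‖ < δ := by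
    refine lt_of_le_of_lt ?_ hG
    rw [Lp.norm_def, eLpNorm_congr_ae (ContinuousMap.coeFn_toLp _ G)]
    have hm : MemLp G 2 (volume : Measure (UnitAddTorus (Fin n))) :=
      (memLp_congr_ae (ContinuousMap.coeFn_toLp _ G)).1 (Lp.memLp (ContinuousMap.toLp 2 (volume : Measure (UnitAddTorus (Fin n))) ℂ G))
    rw [integral_norm_eq_lintegral_enorm hm.1, ← eLpNorm_one_eq_lintegral_enorm]
    exact ENNReal.toReal_mono hm.2.ne (eLpNorm_le_eLpNorm_of_exponent_le (by norm_num) hm.1)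
  rw [UnitAddTorus.integral_preimage _ (fun _ => -(1/2:ℝ)), setIntegral_congr_set setOf_Ioc_ae] at hG1
  refine lt_of_le_of_lt ?_ hG1
  have hi : ∀ {g : Dom n → ℝ}, Continuous g → IntegrableOn g (unitCube n) := fun hf =>
      (hf.continuousOn.integrableOn_compact closedUnitCube_compact).mono_set unitCube_subset_closed
  have hd : ∀ ξ, Continuous (dotp ξ : Dom n → ℝ) := by intro ξ; unfold dotp; fun_prop
  refine integral_mono (hi ?_) (hi ?_) fun x => ?_
  · refine (hf.sub (continuous_finset_sum _ fun ξ _ => ?_)).abs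
    exact (continuous_const.mul (Real.continuous_cos.comp (hd ξ))).add
      (continuous_const.mul (Real.continuous_sin.comp (hd ξ)))
  · refine (G.continuous.comp ?_).norm
    exact continuous_pi fun i => (AddCircle.continuous_mk' 1).comp (continuous_apply i)
  · refine le_trans (le_of_eq ?_) (Complex.abs_re_le_norm _)
    congr 1
    simp only [G, ContinuousMap.sub_apply, ContinuousMap.sum_apply, ContinuousMap.smul_apply, hF, mFourier_coe,
      Complex.sub_re, Complex.ofReal_re, Complex.re_sum, hc, smul_eq_mul]
    congr 1
    refine Finset.sum_congr rfl fun ξ _ => ?_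
    rw [Complex.exp_mul_I, ← Complex.ofReal_cos, ← Complex.ofReal_sin]
    simp [Complex.cos_ofReal_re, Complex.sin_ofReal_re]

end Fsec

section Fsec
variable {n : ℕ} {U V W : Type*} [NormedAddCommGroup V] [NormedSpace ℝ V] [NormedAddCommGroup W] [NormedSpace ℝ W]
  [NormedAddCommGroup U] [NormedSpace ℝ U]

lemma closed_ae_unitCube : closedUnitCube n =ᵐ[volume] unitCube n := by
  have := (Measure.univ_pi_Ioo_ae_eq_Icc (μ := fun _ : Fin n => (volume : Measure ℝ)) (f := fun _ => -(1/2)) (g := fun _ => 1/2)).symm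
  rw [← Set.pi_univ_Icc] at this
  exact this

lemma integral_pderiv_zero [CompleteSpace V] {F : Dom n → V} (hF : ContDiff ℝ (⊤ : ℕ∞) F) (hp : ZPeriodic F) (j : Fin n) :
    ∫ x in unitCube n, pderivDir j F x = 0 := by
  rw [← setIntegral_congr_set closed_ae_unitCube]
  cases n with
  | zero => exact j.elim0
  | succ n =>
    have hd := hF.differentiable (by simp)
    have hc := hF.continuous_fderiv (by simp)
    have key := integral_divergence_of_hasFDerivAt_off_countable' (E := V) (fun _ : Fin (n+1) => -(1/2:ℝ)) (fun _ => 1/2)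
      (by intro i; norm_num) (fun i => if i = j then F else 0)
      (fun i x => if i = j then fderiv ℝ F x else 0) ∅ Set.countable_empty
      (by intro i; split_ifs
          · exact hF.continuous.continuousOn
          · exact continuousOn_const)
      (by intro x _ i; split_ifs
          · exact (hd x).hasFDerivAt
          · exact hasFDerivAt_const _ _)
      (by
        refine ContinuousOn.integrableOn_compact isCompact_Icc (Continuous.continuousOn ?_)
        refine continuous_finset_sum _ fun i _ => ?_
        split_ifs
        · exact hc.clm_apply continuous_const
        · exact continuous_const)
    have hset : Set.Icc (fun _ : Fin (n+1) => -(1/2:ℝ)) (fun _ => 1/2) = closedUnitCube (n+1) := by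
      rw [← Set.pi_univ_Icc]; rfl
    rw [hset] at key
    have hL : ∀ x : Dom (n+1), ∑ i : Fin (n+1), (if i = j then fderiv ℝ F x else 0) (Pi.single i 1) = pderivDir j F x := by
      intro x
      rw [Finset.sum_eq_single j]
      · simp [pderivDir]
      · intro i _ hi; simp [hi]
      · simp
    simp only [hL] at key
    rw [key]
    refine Finset.sum_eq_zero fun i _ => ?_
    rw [sub_eq_zero]
    congr 1
    ext y
    by_cases hij : i = j
    · simp only [hij, if_true]
      rw [← hp (j.insertNth (-(1/2:ℝ)) y) (Pi.single j 1)]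
      congr 1
      ext m
      refine Fin.succAboveCases j ?_ (fun m => ?_) m
      · simp; norm_num
      · simp
    · simp [hij]

lemma zper_pderiv {F : Dom n → V} (hp : ZPeriodic F) (j : Fin n) : ZPeriodic (pderivDir j F) := by
  intro x m
  unfold pderivDir
  rw [← fderiv_comp_add_right]
  congr 2
  ext y; exact hp y m

lemma hasFDerivAt_plane {h h' : ℝ → ℝ} (hh : ∀ s, HasDerivAt h (h' s) s) (ζ : Dom n) (x : Dom n) :
    HasFDerivAt (fun x : Dom n => h (∑ i, ζ i * x i)) (h' (∑ i, ζ i * x i) • (∑ i, ζ i • (ContinuousLinearMap.proj i : Dom n →L[ℝ] ℝ))) x := by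
  refine (hh _).comp_hasFDerivAt x ?_
  have h1 := (∑ i, ζ i • (ContinuousLinearMap.proj i : Dom n →L[ℝ] ℝ)).hasFDerivAt (x := x)
  refine h1.congr_of_eventuallyEq (Eventually.of_forall fun y => ?_)
  simp

lemma plane_apply (ζ : Dom n) (j : Fin n) : (∑ i, ζ i • (ContinuousLinearMap.proj i : Dom n →L[ℝ] ℝ)) (Pi.single j 1) = ζ j := by
  simp [Pi.single_apply]

variable [CompleteSpace V]

lemma parts_plane (h : ℕ → ℝ → ℝ) (hh : ∀ m s, HasDerivAt (h m) (h (m+1) s) s)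
    (hs : ∀ m, ContDiff ℝ (⊤ : ℕ∞) (h m)) (ζ : Dom n)
    (hper : ∀ m, ZPeriodic fun x : Dom n => h m (∑ i, ζ i * x i))
    {v : Dom n → V} (hv : ContDiff ℝ (⊤ : ℕ∞) v) (hp : ZPeriodic v) (α : Fin n → ℕ) (q : ℕ) :
    ∫ x in unitCube n, h q (∑ i, ζ i * x i) • mderiv α v x =
      ((-1)^(∑ i, α i) * ∏ i, ζ i ^ α i) • ∫ x in unitCube n, h (q + ∑ i, α i) (∑ i, ζ i * x i) • v x := by
  have hsm : ∀ m, ContDiff ℝ (⊤ : ℕ∞) fun x : Dom n => h m (∑ i, ζ i * x i) := fun m =>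
    (hs m).comp (by fun_prop)
  have hio : ∀ {f : Dom n → V}, Continuous f → IntegrableOn f (unitCube n) := fun hf =>
    (hf.continuousOn.integrableOn_compact closedUnitCube_compact).mono_set unitCube_subset_closed
  let P : ℕ → (Dom n → V) → (Dom n → ℝ) → Prop := fun m f g =>
    ContDiff ℝ (⊤ : ℕ∞) f ∧ ZPeriodic f ∧ ∃ c : ℝ, (∀ x, g x = c * Real.exp (∑ i, ζ i * x i)) ∧
      ∀ q, ∫ x in unitCube n, h q (∑ i, ζ i * x i) • f x =
        ((-1)^m * c) • ∫ x in unitCube n, h (q + m) (∑ i, ζ i * x i) • v x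
  have h0 : P 0 v (fun x => Real.exp (∑ i, ζ i * x i) • (1:ℝ)) :=
    ⟨hv, hp, 1, fun x => by simp, fun q => by simp⟩
  have hstep : ∀ m f g j, P m f g → P (m+1) (pderivDir j f) (pderivDir j g) := by
    rintro m f g j ⟨hf, hfp, c, hg, hq⟩
    refine ⟨pderivDir_contDiff j hf, zper_pderiv hfp j, ζ j * c, fun x => ?_, fun q => ?_⟩
    · have : g = fun x => c * Real.exp (∑ i, ζ i * x i) := funext hg
      have hd := (hasFDerivAt_plane (h := Real.exp) (fun s => Real.hasDerivAt_exp s) ζ x).const_mul c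
      rw [this, pderivDir, hd.fderiv]
      rw [ContinuousLinearMap.smul_apply, ContinuousLinearMap.smul_apply, plane_apply]
      simp only [smul_eq_mul]; ring
    · have hz := integral_pderiv_zero ((hsm q).smul hf) (fun x m => by simp only [Pi.smul_apply']; rw [hfp x m]; exact congrArg (fun c : ℝ => c • f x) (hper q x m)) j
      have hd : ∀ x, pderivDir j ((fun x : Dom n => h q (∑ i, ζ i * x i)) • f) x =
          h q (∑ i, ζ i * x i) • pderivDir j f x + ζ j • (h (q+1) (∑ i, ζ i * x i) • f x) := by
        intro x
        have hd := (hasFDerivAt_plane (hh q) ζ x).smul ((hf.differentiable (by simp) x).hasFDerivAt)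
        rw [pderivDir]
        erw [hd.fderiv]
        simp only [ContinuousLinearMap.add_apply, ContinuousLinearMap.smul_apply, ContinuousLinearMap.smulRight_apply, plane_apply, pderivDir]
        congr 1
        rw [smul_smul, smul_eq_mul, mul_comm]
      have hi1 : IntegrableOn (fun x : Dom n => h q (∑ i, ζ i * x i) • pderivDir j f x) (unitCube n) := hio ((hsm q).continuous.smul (pderivDir_contDiff j hf).continuous)
      have hi2 : IntegrableOn (fun x : Dom n => ζ j • (h (q+1) (∑ i, ζ i * x i) • f x)) (unitCube n) := hio (((hsm (q+1)).continuous.smul hf.continuous).const_smul (ζ j))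
      rw [integral_congr_ae (ae_of_all _ hd), integral_add hi1 hi2, integral_smul, hq (q+1)] at hz
      rw [eq_neg_of_add_eq_zero_left hz, smul_smul, ← neg_smul, show q + 1 + m = q + (m+1) by ring]
      congr 1
      ring
  obtain ⟨-, -, c, hc, hq⟩ := mderiv_induct₂ P hstep α h0
  have := hc 0
  rw [mderiv_plane α (fun _ => Real.exp) (fun _ s => Real.hasDerivAt_exp s)] at this
  simp at this
  rw [hq, this]

end Fsec

section Fsec
variable {n : ℕ} {U V W : Type*} [NormedAddCommGroup V] [InnerProductSpace ℝ V] [FiniteDimensional ℝ V] [NormedAddCommGroup W] [NormedSpace ℝ W]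
  [NormedAddCommGroup U] [NormedSpace ℝ U]

def tg (φ : ℝ) (m : ℕ) (s : ℝ) : ℝ := Real.cos (s + φ + m * (Real.pi / 2))

lemma tg_deriv (φ : ℝ) (m : ℕ) (s : ℝ) : HasDerivAt (tg φ m) (tg φ (m+1) s) s := by
  have h : HasDerivAt (fun s : ℝ => s + φ + m * (Real.pi / 2)) 1 s :=
    ((hasDerivAt_id s).add_const φ).add_const _
  have := (Real.hasDerivAt_cos (s + φ + m * (Real.pi / 2))).comp s h
  have e : tg φ (m+1) s = -Real.sin (s + φ + m * (Real.pi / 2)) * 1 := by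
    unfold tg
    push_cast
    rw [show s + φ + ((m:ℝ) + 1) * (Real.pi/2) = (s + φ + m * (Real.pi/2)) + Real.pi/2 by ring, Real.cos_add_pi_div_two]
    ring
  rw [e]
  exact this

lemma tg_smooth (φ : ℝ) (m : ℕ) : ContDiff ℝ (⊤ : ℕ∞) (tg φ m) := by
  unfold tg; fun_prop

def zf (ξ : Fin n → ℤ) : Dom n := fun i => 2 * Real.pi * ξ i

lemma tg_per (φ : ℝ) (m : ℕ) (ξ : Fin n → ℤ) : ZPeriodic fun x : Dom n => tg φ m (∑ i, zf ξ i * x i) := by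
  intro x p
  have : ∑ i, zf ξ i * (x + fun i => (p i : ℝ)) i = ∑ i, zf ξ i * x i + (∑ i, ξ i * p i : ℤ) * (2 * Real.pi) := by
    push_cast
    rw [Finset.sum_mul, ← Finset.sum_add_distrib]
    refine Finset.sum_congr rfl fun i _ => ?_
    simp only [zf, Pi.add_apply]; ring
  simp only [this, tg]
  rw [show ∑ i, zf ξ i * x i + (∑ i, ξ i * p i : ℤ) * (2 * Real.pi) + φ + m * (Real.pi/2) =
    (∑ i, zf ξ i * x i + φ + m * (Real.pi/2)) + (∑ i, ξ i * p i : ℤ) * (2 * Real.pi) by ring, Real.cos_add_int_mul_two_pi]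

lemma tg_cos (k : ℕ) (s : ℝ) : tg (-(k * (Real.pi/2))) k s = Real.cos s := by
  simp [tg]

lemma tg_sin (k : ℕ) (s : ℝ) : tg (-(k * (Real.pi/2)) - Real.pi/2) k s = Real.sin s := by
  rw [tg, show s + (-(k * (Real.pi/2)) - Real.pi/2) + k * (Real.pi/2) = s - Real.pi/2 by ring, Real.cos_sub_pi_div_two]

lemma coeff_symbol (A : (Fin n → ℕ) → (V →L[ℝ] W)) (k : ℕ) {v : Dom n → V} (hv : ContDiff ℝ (⊤ : ℕ∞) v)
    (hp : ZPeriodic v) (hA : ∀ x, opApply A k v x = 0) (ξ : Fin n → ℤ) (φ : ℝ) [CompleteSpace W] :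
    opSymbol A k (zf ξ) (∫ x in unitCube n, tg φ k (∑ i, zf ξ i * x i) • v x) = 0 := by
  have hio : ∀ {f : Dom n → V}, Continuous f → IntegrableOn f (unitCube n) := fun hf =>
    (hf.continuousOn.integrableOn_compact closedUnitCube_compact).mono_set unitCube_subset_closed
  have hcs : Continuous fun x : Dom n => tg φ 0 (∑ i, zf ξ i * x i) := (tg_smooth φ 0).continuous.comp (by fun_prop)
  have h1 : ∫ x in unitCube n, tg φ 0 (∑ i, zf ξ i * x i) • opApply A k v x = 0 := by
    simp [hA]
  have h2 : ∫ x in unitCube n, tg φ 0 (∑ i, zf ξ i * x i) • opApply A k v x =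
      ((-1:ℝ)^k) • opSymbol A k (zf ξ) (∫ x in unitCube n, tg φ k (∑ i, zf ξ i * x i) • v x) := by
    simp only [opApply, Finset.smul_sum, opSymbol, ContinuousLinearMap.sum_apply]
    have hi : ∀ α, IntegrableOn (fun x : Dom n => tg φ 0 (∑ i, zf ξ i * x i) • mderiv α v x) (unitCube n) := fun α =>
      hio (hcs.smul (mderiv_contDiff α hv).continuous)
    have hc : ∀ (α : Fin n → ℕ) (x : Dom n), tg φ 0 (∑ i, zf ξ i * x i) • A α (mderiv α v x) =
        A α (tg φ 0 (∑ i, zf ξ i * x i) • mderiv α v x) := fun α x => by rw [map_smul]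
    simp only [hc]
    rw [integral_finset_sum _ fun α _ => (A α).integrable_comp (hi α)]
    refine Finset.sum_congr rfl fun α hα => ?_
    rw [(A α).integral_comp_comm (hi α), parts_plane (tg φ) (tg_deriv φ) (tg_smooth φ) (zf ξ) (fun m => tg_per φ m ξ) hv hp,
      degSet_sum hα, map_smul, ContinuousLinearMap.smul_apply, smul_smul, zero_add]
  rw [h1] at h2
  rcases smul_eq_zero.1 h2.symm with h | h
  · exact absurd h (by simp)
  · exact h

lemma exists_pot {A : (Fin n → ℕ) → (V →L[ℝ] W)} {k : ℕ} {B : (Fin n → ℕ) → (U →L[ℝ] V)} {l : ℕ}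
    (hex : ExactPotential A k B l) (ξ : Fin n → ℤ) (hξ : ξ ≠ 0) (a : V) (ha : opSymbol A k (zf ξ) a = 0) (φ : ℝ) :
    ∃ u : Dom n → U, ContDiff ℝ (⊤ : ℕ∞) u ∧ ZPeriodic u ∧ ∀ x, opApply B l u x = tg φ l (dotp ξ x) • a := by
  have hz : (zf ξ : Dom n) ≠ 0 := by
    intro h
    apply hξ
    ext i
    have := congr_fun h i
    simpa [zf, Real.pi_ne_zero] using this
  have hm : a ∈ LinearMap.ker (opSymbol A k (zf ξ) : V →ₗ[ℝ] W) := ha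
  rw [hex _ hz] at hm
  obtain ⟨b, hb⟩ := hm
  refine ⟨fun x => tg φ 0 (∑ i, zf ξ i * x i) • b, ?_, ?_, ?_⟩
  · exact ((tg_smooth φ 0).comp (by fun_prop)).smul contDiff_const
  · intro x m
    exact congrArg (fun c : ℝ => c • b) (tg_per φ 0 ξ x m)
  · intro x
    rw [opApply_plane B l (tg φ) (tg_deriv φ)]
    have hb' : opSymbol B l (zf ξ) b = a := hb
    rw [hb']; rfl

lemma opApply_zero_add (B : (Fin n → ℕ) → (U →L[ℝ] V)) (l : ℕ) {u w : Dom n → U} (hu : ContDiff ℝ (⊤ : ℕ∞) u) (hw : ContDiff ℝ (⊤ : ℕ∞) w) (x : Dom n) :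
    opApply B l (fun x => u x + w x) x = opApply B l u x + opApply B l w x := by
  first
  | exact opApply_add B l hu hw x
  | rw [opApply_add B l hu hw]

lemma fourier_approx {A : (Fin n → ℕ) → (V →L[ℝ] W)} {k : ℕ} {B : (Fin n → ℕ) → (U →L[ℝ] V)} {l : ℕ} [CompleteSpace W]
    (hex : ExactPotential A k B l) {v : Dom n → V} (hv : ContDiff ℝ (⊤ : ℕ∞) v)
    (hp : ZPeriodic v) (hmean : ∫ x in unitCube n, v x = 0) (hA : ∀ x, opApply A k v x = 0) {δ : ℝ} (hδ : 0 < δ) :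
    ∃ u : Dom n → U, ContDiff ℝ (⊤ : ℕ∞) u ∧ ZPeriodic u ∧ ∫ x in unitCube n, ‖v x - opApply B l u x‖ ≤ δ := by
  have hio : ∀ {f : Dom n → V}, Continuous f → IntegrableOn f (unitCube n) := fun hf =>
    (hf.continuousOn.integrableOn_compact closedUnitCube_compact).mono_set unitCube_subset_closed
  have hdc : ∀ ξ, Continuous (dotp ξ : Dom n → ℝ) := by intro ξ; unfold dotp; fun_prop
  let a : (Fin n → ℤ) → V := fun ξ => ∫ x in unitCube n, Real.cos (dotp ξ x) • v x
  let b : (Fin n → ℤ) → V := fun ξ => ∫ x in unitCube n, Real.sin (dotp ξ x) • v x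
  have ha : ∀ ξ, opSymbol A k (zf ξ) (a ξ) = 0 := fun ξ => by
    have := coeff_symbol A k hv hp hA ξ (-(k * (Real.pi/2)))
    simp only [tg_cos] at this; exact this
  have hb : ∀ ξ, opSymbol A k (zf ξ) (b ξ) = 0 := fun ξ => by
    have := coeff_symbol A k hv hp hA ξ (-(k * (Real.pi/2)) - Real.pi/2)
    simp only [tg_sin] at this; exact this
  have hex1 : ∀ ξ, ∃ u : Dom n → U, ContDiff ℝ (⊤ : ℕ∞) u ∧ ZPeriodic u ∧
      ∀ x, opApply B l u x = Real.cos (dotp ξ x) • a ξ + Real.sin (dotp ξ x) • b ξ := by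
    intro ξ
    by_cases hξ : ξ = 0
    · refine ⟨fun _ => 0, contDiff_const, fun _ _ => rfl, fun x => ?_⟩
      have h0 : ∀ y : Dom n, dotp ξ y = 0 := fun y => by simp [dotp, hξ]
      simp [a, h0, hmean, opApply_zero]
    · obtain ⟨u1, h1, p1, e1⟩ := exists_pot hex ξ hξ _ (ha ξ) (-(l * (Real.pi/2)))
      obtain ⟨u2, h2, p2, e2⟩ := exists_pot hex ξ hξ _ (hb ξ) (-(l * (Real.pi/2)) - Real.pi/2)
      refine ⟨fun x => u1 x + u2 x, h1.add h2, fun x m => by simp only [p1 x m, p2 x m], fun x => ?_⟩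
      rw [opApply_zero_add B l h1 h2, e1, e2, tg_cos, tg_sin]
  choose u hu hup hue using hex1
  let e := stdOrthonormalBasis ℝ V
  have hN : 0 < (Module.finrank ℝ V : ℝ) + 1 := by positivity
  have hev := (eventually_all (ι := Fin (Module.finrank ℝ V))).2 fun i => fourier_scalar (f := fun x => inner ℝ (e i) (v x))
    (continuous_const.inner hv.continuous) (fun x m => by simp only [hp x m]) (div_pos hδ hN)
  obtain ⟨s, hs⟩ := hev.exists
  have hue' : ∀ x, opApply B l (fun x => ∑ ξ ∈ s, u ξ x) x = ∑ ξ ∈ s, (Real.cos (dotp ξ x) • a ξ + Real.sin (dotp ξ x) • b ξ) := by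
    intro x
    rw [opApply_sum B l s (fun ξ _ => hu ξ)]
    exact Finset.sum_congr rfl fun ξ _ => hue ξ x
  have hsm : ContDiff ℝ (⊤ : ℕ∞) fun x => ∑ ξ ∈ s, u ξ x := ContDiff.sum fun ξ _ => hu ξ
  refine ⟨fun x => ∑ ξ ∈ s, u ξ x, hsm, fun x m => Finset.sum_congr rfl fun ξ _ => hup ξ x m, ?_⟩
  have hcd : Continuous fun x => v x - opApply B l (fun x => ∑ ξ ∈ s, u ξ x) x :=
    hv.continuous.sub (opApply_contDiff B l hsm).continuous
  have hns : ∀ w : V, ‖w‖ ≤ ∑ i, |inner ℝ (e i) w| := by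
    intro w
    conv_lhs => rw [← e.sum_repr' w]
    refine (norm_sum_le _ _).trans (Finset.sum_le_sum fun i _ => ?_)
    rw [norm_smul, e.orthonormal.1 i, mul_one, Real.norm_eq_abs]
  have hio' : ∀ {f : Dom n → ℝ}, Continuous f → IntegrableOn f (unitCube n) := fun hf =>
    (hf.continuousOn.integrableOn_compact closedUnitCube_compact).mono_set unitCube_subset_closed
  calc ∫ x in unitCube n, ‖v x - opApply B l (fun x => ∑ ξ ∈ s, u ξ x) x‖
      ≤ ∫ x in unitCube n, ∑ i, |inner ℝ (e i) (v x - opApply B l (fun x => ∑ ξ ∈ s, u ξ x) x)| := by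
        refine integral_mono (hio hcd).norm (hio' ?_) fun x => hns _
        exact continuous_finset_sum _ fun i _ => (continuous_const.inner hcd).abs
    _ = ∑ i, ∫ x in unitCube n, |inner ℝ (e i) (v x - opApply B l (fun x => ∑ ξ ∈ s, u ξ x) x)| :=
        integral_finset_sum _ fun i _ => hio' (continuous_const.inner hcd).abs
    _ ≤ ∑ i : Fin (Module.finrank ℝ V), δ / ((Module.finrank ℝ V : ℝ) + 1) := by
        refine Finset.sum_le_sum fun i _ => le_trans (le_of_eq ?_) (hs i).le
        congr 1; ext x
        congr 1
        rw [hue', inner_sub_right, inner_sum]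
        congr 1
        refine Finset.sum_congr rfl fun ξ _ => ?_
        have q1 : ∫ y in unitCube n, inner ℝ (e i) (v y) * Real.cos (dotp ξ y) = inner ℝ (e i) (a ξ) := by
          simp only [a]
          rw [← integral_inner (f := fun x => Real.cos (dotp ξ x) • v x) (hio ((Real.continuous_cos.comp (hdc ξ)).smul hv.continuous))]
          simp only [inner_smul_right, mul_comm]
        have q2 : ∫ y in unitCube n, inner ℝ (e i) (v y) * Real.sin (dotp ξ y) = inner ℝ (e i) (b ξ) := by
          simp only [b]
          rw [← integral_inner (f := fun x => Real.sin (dotp ξ x) • v x) (hio ((Real.continuous_sin.comp (hdc ξ)).smul hv.continuous))]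
          simp only [inner_smul_right, mul_comm]
        rw [q1, q2, inner_add_right, inner_smul_right, inner_smul_right, mul_comm, mul_comm (Real.sin _)]
    _ ≤ δ := by
        rw [Finset.sum_const, Finset.card_univ, Fintype.card_fin, nsmul_eq_mul, mul_div_assoc', div_le_iff₀ hN]
        nlinarith

theorem Qf_aqc {A : (Fin n → ℕ) → (V →L[ℝ] W)} {k : ℕ} {B : (Fin n → ℕ) → (U →L[ℝ] V)} {l : ℕ} [CompleteSpace W]
    (hex : ExactPotential A k B l) {K : NNReal} {Φ : V → ℝ} (hΦ : LipschitzWith K Φ) {z0 : V} (h : QBdd B l Φ z0) :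
    AQuasiconvex A k (Qf B l Φ) := by
  have hQ := Qf_lip hΦ h
  refine ⟨hQ.continuous, fun z v hv hp hm hA => ?_⟩
  have hio : ∀ {f : Dom n → V}, Continuous f → IntegrableOn f (unitCube n) := fun hf =>
    (hf.continuousOn.integrableOn_compact closedUnitCube_compact).mono_set unitCube_subset_closed
  refine le_of_forall_pos_le_add fun ε hε => ?_
  obtain ⟨u, hu, hup, hle⟩ := fourier_approx hex hv hp hm hA (show 0 < ε / (K + 1) by positivity)
  have h1 := Qf_le_periodic hΦ h z hu hup
  have h2 := (abs_le.1 (lip_integral_diff hQ volume_unitCube_lt_top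
    (hio (continuous_const.add hv.continuous) : IntegrableOn (fun x => z + v x) _)
    (hio (continuous_const.add (opApply_contDiff B l hu).continuous) : IntegrableOn (fun x => z + opApply B l u x) _))).1
  simp only [add_sub_add_left_eq_sub] at h2
  have h3 : (K:ℝ) * ∫ x in unitCube n, ‖v x - opApply B l u x‖ ≤ ε := by
    calc _ ≤ (K:ℝ) * (ε / (K+1)) := mul_le_mul_of_nonneg_left hle K.2
      _ ≤ ε := by
        rw [mul_div_assoc', div_le_iff₀ (by positivity)]
        nlinarith
  linarith

end Fsec

section HB
variable {n : ℕ} {U V : Type*} [NormedAddCommGroup V] [NormedSpace ℝ V]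
  [NormedAddCommGroup U] [NormedSpace ℝ U] (B : (Fin n → ℕ) → (U →L[ℝ] V)) (l : ℕ)

lemma Jf_integrable {K : NNReal} {Φ : V → ℝ} (hΦ : LipschitzWith K Φ) (a : V) {u : Dom n → U} (hu : CcSmooth (unitCube n) u) :
    IntegrableOn (fun x => Φ (a + opApply B l u x)) (unitCube n) :=
  lip_integrableOn hΦ volume_unitCube_lt_top (integrableOn_const_add volume_unitCube_lt_top a
    ((opApply_integrable B l hu).integrableOn))

lemma Jf_ins {K : NNReal} {Φ : V → ℝ} (hΦ : LipschitzWith K Φ) (a : V) (m : ℕ) {u : (Fin n → ℤ) → Dom n → U}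
    (hu : ∀ k, CcSmooth (unitCube n) (u k)) :
    CcSmooth (unitCube n) (ins l (2 * m + 1 : ℝ) (Fm n m) u) ∧
    Jf B l Φ a (ins l (2 * m + 1 : ℝ) (Fm n m) u) = ∑ k ∈ Fm n m, ((2 * m + 1 : ℝ)^n)⁻¹ * Jf B l Φ a (u k) := by
  have hM : (0:ℝ) < 2 * m + 1 := by positivity
  have hc : CcSmooth (unitCube n) (ins l (2 * m + 1 : ℝ) (Fm n m) u) :=
    ins_ccSmooth l hM (fun k _ => hu k) fun k hk => cell_subset_unitCube hk
  refine ⟨hc, ?_⟩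
  rw [Jf, integral_unitCube_eq_sum m (Jf_integrable B l hΦ a hc)]
  refine Finset.sum_congr rfl fun k hk => ?_
  have := integral_cell hM k (fun y => Φ (a + opApply B l (u k) y))
  rw [smul_eq_mul] at this
  rw [Jf, ← this]
  refine setIntegral_congr_fun (cell_meas _ k) fun x hx => ?_
  rw [ins_op_on B l hM (fun k _ => hu k) hk hx]

lemma exists_tile {u : Dom n → U} (hu : CcSmooth (unitCube n) u) {ε : ℝ} (hε : 0 < ε) :
    ∃ w : Dom n → U, CcSmooth (unitCube n) w ∧ sobNorm l w < ε ∧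
      ∀ (K : NNReal) (Φ : V → ℝ) (a : V), LipschitzWith K Φ → Jf B l Φ a w = Jf B l Φ a u := by
  obtain ⟨m, hm⟩ := exists_nat_gt (sobNorm l u / ε)
  have hM : (0:ℝ) < 2 * m + 1 := by positivity
  have hm0 : (0:ℝ) ≤ m := by positivity
  have hcard : ((Fm n m).card : ℝ) = (2 * m + 1 : ℝ)^n := by rw [Fm_card]; push_cast; rfl
  have hpos : (0:ℝ) < (2 * m + 1 : ℝ)^n := by positivity
  refine ⟨ins l (2 * m + 1 : ℝ) (Fm n m) (fun _ => u), ?_, ?_, fun K Φ a hΦ => ?_⟩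
  · exact ins_ccSmooth l hM (fun k _ => hu) fun k hk => cell_subset_unitCube hk
  · refine (ins_sob l (by linarith) (fun k _ => hu)).trans_lt ?_
    rw [Finset.sum_const, nsmul_eq_mul, hcard, mul_inv_cancel_left₀ hpos.ne', inv_mul_lt_iff₀ hM]
    rw [div_lt_iff₀ hε] at hm
    nlinarith
  · rw [(Jf_ins B l hΦ a m (fun _ => hu)).2, Finset.sum_const, nsmul_eq_mul, hcard, mul_inv_cancel_left₀ hpos.ne']

variable {ι : Type*} [Fintype ι] {K : NNReal} {Φ : ι → V → ℝ}

def Sset (Φ : ι → V → ℝ) (a : V) : Set (ι → ℝ) :=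
  {s | ∃ u : Dom n → U, CcSmooth (unitCube n) u ∧ s = fun i => Jf B l (Φ i) a u}

lemma Sset_convex (hn : 0 < n) (hΦ : ∀ i, LipschitzWith K (Φ i)) (a : V) : Convex ℝ (closure (Sset B l Φ a)) := by
  intro x hx y hy θ θ' hθ hθ' hsum
  rw [← closure_closure]
  refine map_mem_closure₂ (f := fun x y : ι → ℝ => θ • x + θ' • y) (by fun_prop) hx hy ?_
  rintro _ ⟨u1, hu1, rfl⟩ _ ⟨u2, hu2, rfl⟩
  have hθ1 : θ ≤ 1 := by linarith
  set s1 : ι → ℝ := fun i => Jf B l (Φ i) a u1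
  set s2 : ι → ℝ := fun i => Jf B l (Φ i) a u2
  let N : ℕ → ℕ := fun m => (2*m+1)^n
  let j : ℕ → ℕ := fun m => ⌊θ * N m⌋₊
  have hN0 : ∀ m, (0:ℝ) < N m := fun m => by simp only [N]; positivity
  have hjN : ∀ m, j m ≤ N m := fun m => Nat.floor_le_of_le (by nlinarith [hN0 m])
  have hNt : Tendsto (fun m => (N m : ℝ)) atTop atTop := by
    refine tendsto_atTop_mono (f := fun m : ℕ => (m:ℝ)) (fun m => ?_) tendsto_natCast_atTop_atTop
    have : m ≤ (2*m+1)^n := (by omega : m ≤ 2*m+1).trans (Nat.le_self_pow hn.ne' _)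
    exact_mod_cast this
  have hlim : Tendsto (fun m => (j m : ℝ) / N m) atTop (𝓝 θ) :=
    (tendsto_nat_floor_mul_div_atTop hθ).comp hNt
  have hmem : ∀ m, ((j m : ℝ)/N m) • s1 + (1 - (j m : ℝ)/N m) • s2 ∈ Sset B l Φ a := by
    intro m
    classical
    have hcard : (Fm n m).card = N m := Fm_card m
    obtain ⟨G, hG, hGc⟩ := Finset.exists_subset_card_eq (s := Fm n m) (n := j m) (by rw [hcard]; exact hjN m)
    let u : (Fin n → ℤ) → Dom n → U := fun k => if k ∈ G then u1 else u2
    have hu : ∀ k, CcSmooth (unitCube n) (u k) := fun k => by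
      simp only [u]; split_ifs <;> assumption
    refine ⟨_, (Jf_ins B l (LipschitzWith.const (0:ℝ) : LipschitzWith 0 (fun _ : V => (0:ℝ))) a m hu).1, ?_⟩
    ext i
    rw [(Jf_ins B l (hΦ i) a m hu).2]
    have hNr : (2 * m + 1 : ℝ)^n = N m := by simp only [N]; push_cast; rfl
    rw [hNr, ← Finset.sum_sdiff hG]
    have e1 : ∑ k ∈ Fm n m \ G, (N m : ℝ)⁻¹ * Jf B l (Φ i) a (u k) = ∑ k ∈ Fm n m \ G, (N m : ℝ)⁻¹ * s2 i :=
      Finset.sum_congr rfl fun k hk => by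
        have := (Finset.mem_sdiff.1 hk).2
        simp [u, this, s2]
    have e2 : ∑ k ∈ G, (N m : ℝ)⁻¹ * Jf B l (Φ i) a (u k) = ∑ k ∈ G, (N m : ℝ)⁻¹ * s1 i :=
      Finset.sum_congr rfl fun k hk => by simp [u, hk, s1]
    rw [e1, e2, Finset.sum_const, Finset.sum_const, Finset.card_sdiff_of_subset hG, hGc, hcard, nsmul_eq_mul, nsmul_eq_mul,
      Nat.cast_sub (hjN m)]
    have := (hN0 m).ne'
    simp only [Pi.add_apply, Pi.smul_apply, smul_eq_mul]
    field_simp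
    ring
  have ht : Tendsto (fun m => ((j m : ℝ)/N m) • s1 + (1 - (j m : ℝ)/N m) • s2) atTop (𝓝 (θ • s1 + θ' • s2)) := by
    have : θ' = 1 - θ := by linarith
    rw [this]
    exact (hlim.smul_const s1).add ((tendsto_const_nhds.sub hlim).smul_const s2)
  exact mem_closure_of_tendsto ht (Eventually.of_forall hmem)

lemma hb_sep (hn : 0 < n) (hΦ : ∀ i, LipschitzWith K (Φ i)) (a : V) (P : ι → ℝ) {r : ℝ} (hr : 0 ≤ r)
    (H : ∀ c : ι → ℝ, QBdd B l (fun z => ∑ i, c i * Φ i z) a →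
      Qf B l (fun z => ∑ i, c i * Φ i z) a ≤ ∑ i, c i * P i + r * ∑ i, |c i|) {δ ε : ℝ} (hδ : 0 < δ) (hε : 0 < ε) :
    ∃ u : Dom n → U, CcSmooth (unitCube n) u ∧ sobNorm l u < ε ∧ ∀ i, |P i - Jf B l (Φ i) a u| ≤ r + δ := by
  have key : ∃ q, q ∈ Metric.closedBall P r ∧ q ∈ closure (Sset B l Φ a) := by
    by_contra hne
    push Not at hne
    obtain ⟨f, s, t, hs, hst, ht⟩ := geometric_hahn_banach_compact_closed (convex_closedBall P r)
      (isCompact_closedBall P r) (Sset_convex B l hn hΦ a) isClosed_closure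
      (Set.disjoint_left.2 hne)
    classical
    let c : ι → ℝ := fun i => f (Pi.single i 1)
    have hf : ∀ x : ι → ℝ, f x = ∑ i, c i * x i := by
      intro x
      conv_lhs => rw [← Finset.univ_sum_single x]
      rw [map_sum]
      refine Finset.sum_congr rfl fun i _ => ?_
      have : Pi.single i (x i) = x i • (Pi.single i 1 : ι → ℝ) := by
        rw [← Pi.single_smul, smul_eq_mul, mul_one]
      rw [this, map_smul, smul_eq_mul, mul_comm]
    have hJ : ∀ u : Dom n → U, CcSmooth (unitCube n) u → t ≤ Jf B l (fun z => ∑ i, c i * Φ i z) a u := by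
      intro u hu
      have h1 := (ht _ (subset_closure ⟨u, hu, rfl⟩)).le
      rw [hf] at h1
      refine h1.trans (le_of_eq ?_)
      unfold Jf
      rw [integral_finset_sum _ fun i _ => (Jf_integrable B l (hΦ i) a hu).const_mul (c i)]
      exact Finset.sum_congr rfl fun i _ => (integral_const_mul _ _).symm
    have h2 := H c ⟨t, hJ⟩
    have h3 := le_Qf hJ
    have h4 := hs (fun i => P i + r * SignType.sign (c i)) (by
      rw [Metric.mem_closedBall, dist_pi_le_iff hr]
      intro i
      rw [Real.dist_eq, add_sub_cancel_left, abs_mul, abs_of_nonneg hr]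
      have : |((SignType.sign (c i) : SignType) : ℝ)| ≤ 1 := by
        rcases SignType.sign (c i) <;> simp
      nlinarith)
    rw [hf] at h4
    have h5 : ∑ i, c i * (P i + r * SignType.sign (c i)) = ∑ i, c i * P i + r * ∑ i, |c i| := by
      rw [Finset.mul_sum, ← Finset.sum_add_distrib]
      refine Finset.sum_congr rfl fun i _ => ?_
      rw [mul_add, ← self_mul_sign (c i)]; ring
    linarith
  obtain ⟨q, hq1, hq2⟩ := key
  obtain ⟨_, ⟨u, hu, rfl⟩, hd⟩ := Metric.mem_closure_iff.1 hq2 δ hδ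
  obtain ⟨w, hw, hws, hwJ⟩ := exists_tile B l hu hε
  refine ⟨w, hw, hws, fun i => ?_⟩
  rw [hwJ K (Φ i) a (hΦ i), ← Real.dist_eq]
  have h1 : dist (P i) (q i) ≤ r := (dist_le_pi_dist P q i).trans (by rw [dist_comm]; exact hq1)
  have h2 : dist (q i) (Jf B l (Φ i) a u) ≤ δ := (dist_le_pi_dist q _ i).trans hd.le
  exact (dist_triangle _ _ _).trans (add_le_add h1 h2)

end HB

section CLS
variable {V : Type*} [NormedAddCommGroup V] [NormedSpace ℝ V]

lemma TLipUnit.bounds {Φ : V → ℝ} (h : TLipUnit Φ) :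
    (∀ z, ‖z‖ ≤ 1 → |Tfun Φ z| ≤ 1) ∧
    (∀ z w, ‖z‖ ≤ 1 → ‖w‖ ≤ 1 → |Tfun Φ z - Tfun Φ w| ≤ ‖z - w‖) := by
  obtain ⟨K, hK, hs⟩ := h
  have hd : ∀ z w, ‖z‖ ≤ 1 → ‖w‖ ≤ 1 → |Tfun Φ z - Tfun Φ w| ≤ K * ‖z - w‖ := by
    intro z w hz hw
    have := hK.dist_le_mul z (by simpa using hz) w (by simpa using hw)
    rwa [Real.dist_eq, dist_eq_norm] at this
  have hnn : 0 ≤ ⨆ zh ∈ Metric.closedBall (0:V) 1, |Tfun Φ zh| :=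
    Real.iSup_nonneg fun z => Real.iSup_nonneg fun _ => abs_nonneg _
  have hK1 : (K:ℝ) ≤ 1 := by linarith
  refine ⟨fun z hz => ?_, fun z w hz hw => (hd z w hz hw).trans ?_⟩
  · have hb : BddAbove (Set.range fun zh : V => ⨆ (_ : zh ∈ Metric.closedBall (0:V) 1), |Tfun Φ zh|) := by
      refine ⟨|Tfun Φ 0| + 1, ?_⟩
      rintro _ ⟨w, rfl⟩
      refine Real.iSup_le (fun hw => ?_) (by positivity)
      have hw' : ‖w‖ ≤ 1 := by simpa using hw
      have h1 := hd w 0 hw' (by simp)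
      rw [sub_zero] at h1
      have h2 : (K:ℝ) * ‖w‖ ≤ 1 := by
        have := K.coe_nonneg
        have := norm_nonneg w
        nlinarith
      have := abs_sub_abs_le_abs_sub (Tfun Φ w) (Tfun Φ 0)
      linarith
    have h1 := le_ciSup hb z
    simp only [Metric.mem_closedBall, dist_zero_right, hz, ciSup_unique] at h1
    simp only [Metric.mem_closedBall, dist_zero_right] at hs
    have := K.coe_nonneg
    linarith
  · have := norm_nonneg (z - w)
    nlinarith

lemma Phi_eq_T (Φ : V → ℝ) (z : V) :
    ‖(1 + ‖z‖)⁻¹ • z‖ < 1 ∧ Φ z = (1 + ‖z‖) * Tfun Φ ((1 + ‖z‖)⁻¹ • z) := by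
  have h0 := norm_nonneg z
  have hp : 0 < 1 + ‖z‖ := by linarith
  have hn : ‖(1 + ‖z‖)⁻¹ • z‖ = (1 + ‖z‖)⁻¹ * ‖z‖ := by
    rw [norm_smul, Real.norm_of_nonneg (by positivity)]
  have h1 : ‖(1 + ‖z‖)⁻¹ • z‖ < 1 := by
    rw [hn, inv_mul_lt_iff₀ hp]; linarith
  refine ⟨h1, ?_⟩
  rw [Tfun, if_pos h1, transf, hn]
  have h2 : 1 - (1 + ‖z‖)⁻¹ * ‖z‖ = (1 + ‖z‖)⁻¹ := by field_simp; ring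
  rw [h2, inv_inv, smul_smul, mul_inv_cancel₀ hp.ne', one_smul, mul_inv_cancel_left₀ hp.ne']

lemma TLipUnit.growth {Φ : V → ℝ} (h : TLipUnit Φ) (z : V) : |Φ z| ≤ 1 + ‖z‖ := by
  obtain ⟨h1, h2⟩ := Phi_eq_T Φ z
  have h0 := norm_nonneg z
  rw [h2, abs_mul, abs_of_nonneg (by positivity)]
  have := h.bounds.1 _ h1.le
  nlinarith

lemma TLipUnit.lip {Φ : V → ℝ} (h : TLipUnit Φ) : LipschitzWith 3 Φ := by
  refine LipschitzWith.of_dist_le_mul fun z w => ?_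
  rw [Real.dist_eq, dist_eq_norm]
  obtain ⟨h1, h2⟩ := Phi_eq_T Φ z
  obtain ⟨k1, k2⟩ := Phi_eq_T Φ w
  have hz0 := norm_nonneg z
  have hw0 := norm_nonneg w
  have hp : 0 < 1 + ‖z‖ := by linarith
  have hq : 0 < 1 + ‖w‖ := by linarith
  have hT := h.bounds.2 _ _ h1.le k1.le
  have hB := h.bounds.1 _ h1.le
  set a := Tfun Φ ((1 + ‖z‖)⁻¹ • z)
  set b := Tfun Φ ((1 + ‖w‖)⁻¹ • w)
  have e1 : Φ z - Φ w = (‖z‖ - ‖w‖) * a + (1 + ‖w‖) * (a - b) := by rw [h2, k2]; ring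
  have hnn := abs_norm_sub_norm_le z w
  have e2 : (1 + ‖w‖) * ‖(1 + ‖z‖)⁻¹ • z - (1 + ‖w‖)⁻¹ • w‖ ≤ 2 * ‖z - w‖ := by
    have : (1 + ‖w‖) * ‖(1 + ‖z‖)⁻¹ • z - (1 + ‖w‖)⁻¹ • w‖
        = ‖(z - w) + (‖w‖ - ‖z‖) • ((1 + ‖z‖)⁻¹ • z)‖ := by
      rw [← Real.norm_of_nonneg hq.le, ← norm_smul, Real.norm_of_nonneg hq.le, smul_sub, smul_smul, smul_smul, smul_smul,
        mul_inv_cancel₀ hq.ne', one_smul]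
      congr 1
      have : (1 + ‖w‖) * (1 + ‖z‖)⁻¹ = 1 + (‖w‖ - ‖z‖) * (1 + ‖z‖)⁻¹ := by field_simp; ring
      rw [this, add_smul, one_smul]; abel
    rw [this]
    refine (norm_add_le _ _).trans ?_
    rw [norm_smul, Real.norm_eq_abs, abs_sub_comm]
    have := norm_nonneg ((1 + ‖z‖)⁻¹ • z)
    have := abs_nonneg (‖z‖ - ‖w‖)
    nlinarith
  rw [e1]
  refine (abs_add_le _ _).trans ?_
  rw [abs_mul, abs_mul, abs_of_pos hq]
  have i1 : |‖z‖ - ‖w‖| * |a| ≤ ‖z - w‖ := by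
    have := abs_nonneg (‖z‖ - ‖w‖)
    nlinarith [abs_nonneg a]
  have i2 : (1 + ‖w‖) * |a - b| ≤ 2 * ‖z - w‖ := (mul_le_mul_of_nonneg_left hT hq.le).trans e2
  push_cast
  linarith

lemma MemH.tendsto {Φ : V → ℝ} (h : MemH Φ) (w : V) :
    Tendsto (fun t : ℝ => Φ (t • w) / t) atTop (𝓝 (rrec Φ w)) := by
  obtain ⟨g, hg⟩ := h.2.2
  have := (TendstoLocallyUniformly.tendstoLocallyUniformlyOn (s := Set.univ)
    (F := fun (t : ℝ) (z : V) => Φ (t • z) / t) hg).tendsto_at (Set.mem_univ w)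
  rwa [rrec, this.limsup_eq]

lemma TLipUnit.rrec_le {Φ : V → ℝ} (h : TLipUnit Φ) {w : V} (hw : ‖w‖ = 1) : |rrec Φ w| ≤ 1 := by
  have := h.bounds.1 w hw.le
  rwa [Tfun, if_neg (by simp [hw])] at this

lemma Phi0_memH : MemH (fun z : V => 1 + ‖z‖) := by
  refine ⟨by fun_prop, ⟨1, fun z => ?_⟩, fun z => ‖z‖, ?_⟩
  · rw [abs_of_nonneg (by positivity)]; linarith
  · refine TendstoUniformly.tendstoLocallyUniformly ?_
    rw [Metric.tendstoUniformly_iff]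
    intro ε hε
    filter_upwards [eventually_gt_atTop (0:ℝ), eventually_gt_atTop ε⁻¹] with t ht hte z
    rw [Real.dist_eq, norm_smul, Real.norm_of_nonneg ht.le]
    have : ‖z‖ - (1 + t * ‖z‖) / t = - t⁻¹ := by field_simp; ring
    rw [this, abs_neg, abs_of_pos (by positivity)]
    exact inv_lt_of_inv_lt₀ hε hte

lemma Phi0_T (z : V) (hz : ‖z‖ ≤ 1) : Tfun (fun z : V => 1 + ‖z‖) z = 1 := by
  rw [Tfun]
  split_ifs with h
  · rw [transf, norm_smul, Real.norm_of_nonneg (by rw [inv_nonneg]; linarith)]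
    have : 1 - ‖z‖ ≠ 0 := by linarith
    field_simp; ring
  · have hz1 : ‖z‖ = 1 := le_antisymm hz (not_lt.1 h)
    have : Tendsto (fun t : ℝ => (1 + ‖t • z‖) / t) atTop (𝓝 1) := by
      have : Tendsto (fun t : ℝ => t⁻¹ + 1) atTop (𝓝 (0 + 1)) := tendsto_inv_atTop_zero.add_const 1
      rw [zero_add] at this
      refine this.congr' ?_
      filter_upwards [eventually_gt_atTop (0:ℝ)] with t ht
      rw [norm_smul, hz1, Real.norm_of_nonneg ht.le]
      field_simp
    exact this.limsup_eq

lemma Phi0_TLip : TLipUnit (fun z : V => 1 + ‖z‖) := by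
  refine ⟨0, ?_, ?_⟩
  · refine LipschitzOnWith.of_dist_le_mul fun z hz w hw => ?_
    rw [Phi0_T z (by simpa using hz), Phi0_T w (by simpa using hw)]
    simp
  · have : (⨆ zh ∈ Metric.closedBall (0:V) 1, |Tfun (fun z : V => 1 + ‖z‖) zh|) ≤ 1 := by
      refine Real.iSup_le (fun z => Real.iSup_le (fun hz => ?_) zero_le_one) zero_le_one
      rw [Phi0_T z (by simpa using hz)]; simp
    simpa using this

lemma class_net [FiniteDimensional ℝ V] {δ : ℝ} (hδ : 0 < δ) :
    ∃ S : Finset (V → ℝ), (∀ Φ ∈ S, MemH Φ ∧ TLipUnit Φ) ∧ (fun z : V => 1 + ‖z‖) ∈ S ∧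
      ∀ Ψ : V → ℝ, MemH Ψ → TLipUnit Ψ → ∃ Φ ∈ S, (∀ z, |Ψ z - Φ z| ≤ δ * (1 + ‖z‖)) ∧
        ∀ w : V, ‖w‖ = 1 → |rrec Ψ w - rrec Φ w| ≤ δ := by
  classical
  haveI : ProperSpace V := FiniteDimensional.proper_real V
  obtain ⟨N, hNs, hNf, hN⟩ := Metric.finite_approx_of_totallyBounded
    ((isCompact_closedBall (0:V) 1).totallyBounded) (δ/4) (by positivity)
  haveI := hNf.fintype
  let ev : (V → ℝ) → (N → ℝ) := fun Φ s => Tfun Φ s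
  let E : Set (N → ℝ) := ev '' {Φ | MemH Φ ∧ TLipUnit Φ}
  have hE : TotallyBounded E := by
    refine (isCompact_closedBall (0 : N → ℝ) 1).totallyBounded.subset ?_
    rintro _ ⟨Φ, hΦ, rfl⟩
    rw [mem_closedBall_zero_iff, pi_norm_le_iff_of_nonneg zero_le_one]
    intro s
    exact hΦ.2.bounds.1 s (by simpa using hNs s.2)
  obtain ⟨t, htE, htf, ht⟩ := Metric.finite_approx_of_totallyBounded hE (δ/4) (by positivity)
  obtain ⟨S', hS'c, hS'f, hS't⟩ : ∃ S' ⊆ {Φ : V → ℝ | MemH Φ ∧ TLipUnit Φ}, S'.Finite ∧ ev '' S' = t :=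
    Set.exists_subset_image_finite_and (p := fun x => x = t).1 ⟨t, htE, htf, rfl⟩
  refine ⟨insert (fun z : V => 1 + ‖z‖) hS'f.toFinset, ?_, Finset.mem_insert_self _ _, ?_⟩
  · intro Φ hΦ
    rw [Finset.mem_insert] at hΦ
    rcases hΦ with rfl | hΦ
    · exact ⟨Phi0_memH, Phi0_TLip⟩
    · exact hS'c (by simpa using hΦ)
  · intro Ψ hΨ hΨ'
    have h1 := ht (Set.mem_image_of_mem ev (show Ψ ∈ {Φ : V → ℝ | MemH Φ ∧ TLipUnit Φ} from ⟨hΨ, hΨ'⟩))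
    rw [← hS't] at h1
    simp only [Set.mem_iUnion, Set.mem_image, exists_prop, exists_exists_and_eq_and] at h1
    obtain ⟨Φ, hΦ, hd⟩ := h1
    have hΦc := hS'c hΦ
    have key : ∀ z, ‖z‖ ≤ 1 → |Tfun Ψ z - Tfun Φ z| ≤ δ := by
      intro z hz
      have := hN (show z ∈ Metric.closedBall (0:V) 1 by simpa using hz)
      simp only [Set.mem_iUnion, exists_prop] at this
      obtain ⟨s, hs, hzs⟩ := this
      have hs1 : ‖s‖ ≤ 1 := by simpa using hNs hs
      rw [Metric.mem_ball, dist_eq_norm] at hzs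
      have a1 := hΨ'.bounds.2 z s hz hs1
      have a2 := hΦc.2.bounds.2 z s hz hs1
      have a3 : |Tfun Ψ s - Tfun Φ s| ≤ δ/4 := by
        have := (dist_le_pi_dist (ev Ψ) (ev Φ) ⟨s, hs⟩).trans (Metric.mem_ball.1 hd).le
        rwa [Real.dist_eq] at this
      rw [abs_le] at *
      constructor <;> linarith [a1.1, a1.2, a2.1, a2.2, a3.1, a3.2]
    refine ⟨Φ, by simp [hΦ], fun z => ?_, fun w hw => ?_⟩
    · obtain ⟨h1, h2⟩ := Phi_eq_T Ψ z
      rw [h2, (Phi_eq_T Φ z).2, ← mul_sub, abs_mul, abs_of_nonneg (by positivity), mul_comm δ]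
      exact mul_le_mul_of_nonneg_left (key _ h1.le) (by positivity)
    · have := key w hw.le
      rwa [Tfun, if_neg (by simp [hw]), Tfun, if_neg (by simp [hw])] at this

end CLS

section UR
variable {V : Type*} [NormedAddCommGroup V] [NormedSpace ℝ V]

lemma urec_bd {K : NNReal} {f : V → ℝ} (hf : LipschitzWith K f) (w : V) :
    ∀ᶠ p : ℝ × V in atTop ×ˢ 𝓝 w, |f (p.1 • p.2) / p.1| ≤ |f 0| + K * (‖w‖ + 1) := by
  filter_upwards [(eventually_ge_atTop (1:ℝ)).prod_mk (Metric.ball_mem_nhds w one_pos)] with p hp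
  obtain ⟨h1, h2⟩ := hp
  have h2' : ‖p.2‖ ≤ ‖w‖ + 1 := by
    have h2 : dist p.2 w < 1 := h2
    rw [dist_eq_norm] at h2
    have := norm_sub_norm_le p.2 w
    linarith
  have hp0 : 0 < p.1 := by linarith
  rw [abs_div, abs_of_pos hp0, div_le_iff₀ hp0]
  have := lip_abs hf (p.1 • p.2) 0
  rw [sub_zero, norm_smul, Real.norm_of_nonneg hp0.le] at this
  have h3 := abs_sub_abs_le_abs_sub (f (p.1 • p.2)) (f 0)
  have h4 := abs_nonneg (f 0)
  have h5 := K.coe_nonneg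
  have h6 : (K:ℝ) * (p.1 * ‖p.2‖) ≤ K * (p.1 * (‖w‖ + 1)) := by gcongr
  nlinarith

lemma urec_bdd {K : NNReal} {f : V → ℝ} (hf : LipschitzWith K f) (w : V) :
    IsBoundedUnder (· ≤ ·) (atTop ×ˢ 𝓝 w) (fun p : ℝ × V => f (p.1 • p.2) / p.1) :=
  ⟨_, eventually_map.2 ((urec_bd hf w).mono fun _ h => (abs_le.1 h).2)⟩

lemma urec_cobdd {K : NNReal} {f : V → ℝ} (hf : LipschitzWith K f) (w : V) :
    IsCoboundedUnder (· ≤ ·) (atTop ×ˢ 𝓝 w) (fun p : ℝ × V => f (p.1 • p.2) / p.1) :=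
  IsBoundedUnder.isCoboundedUnder_le
    ⟨_, eventually_map.2 ((urec_bd hf w).mono fun _ h => (abs_le.1 h).1)⟩

lemma urec_lip {K : NNReal} {f : V → ℝ} (hf : LipschitzWith K f) : LipschitzWith K (urec f) := by
  refine LipschitzWith.of_le_add_mul K fun w w' => ?_
  refine le_of_forall_pos_lt_add fun e he => ?_
  have h1 : ∀ᶠ p : ℝ × V in atTop ×ˢ 𝓝 w', f (p.1 • p.2) / p.1 < urec f w' + e / 2 :=
    eventually_lt_of_limsup_lt (by rw [← urec]; linarith) (urec_bdd hf w')
  have ht : Tendsto (fun p : ℝ × V => (p.1, p.2 - w + w')) (atTop ×ˢ 𝓝 w) (atTop ×ˢ 𝓝 w') := by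
    refine tendsto_fst.prodMk ?_
    have : Tendsto (fun z : V => z - w + w') (𝓝 w) (𝓝 (w - w + w')) := by
      apply Continuous.tendsto; fun_prop
    simp only [sub_self, zero_add] at this
    exact this.comp tendsto_snd
  have h2 := ht.eventually h1
  have : urec f w ≤ urec f w' + e/2 + K * dist w w' := by
    refine limsup_le_of_le (urec_cobdd hf w) ?_
    filter_upwards [h2, tendsto_fst.eventually (eventually_gt_atTop (0:ℝ))] with p hp hp0
    have h3 := (abs_le.1 (lip_abs hf (p.1 • p.2) (p.1 • (p.2 - w + w')))).2
    have e1 : p.1 • p.2 - p.1 • (p.2 - w + w') = p.1 • (w - w') := by rw [← smul_sub]; congr 1; abel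
    rw [e1, norm_smul, Real.norm_of_nonneg hp0.le, ← dist_eq_norm] at h3
    rw [div_lt_iff₀ hp0] at hp
    rw [div_le_iff₀ hp0]
    nlinarith
  linarith

lemma urec_le {K : NNReal} {f Φ : V → ℝ} (hf : LipschitzWith K f) (hΦ : LipschitzWith K Φ) (hle : ∀ z, f z ≤ Φ z)
    {w : V} {r : ℝ} (hr : Tendsto (fun t : ℝ => Φ (t • w) / t) atTop (𝓝 r)) : urec f w ≤ r := by
  have h1 : Tendsto (fun p : ℝ × V => Φ (p.1 • w) / p.1 + K * ‖p.2 - w‖) (atTop ×ˢ 𝓝 w) (𝓝 (r + K * ‖w - w‖)) := by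
    refine (hr.comp tendsto_fst).add ?_
    have : Tendsto (fun z : V => (K:ℝ) * ‖z - w‖) (𝓝 w) (𝓝 (K * ‖w - w‖)) := by
      apply Continuous.tendsto; fun_prop
    exact this.comp tendsto_snd
  rw [sub_self, norm_zero, mul_zero, add_zero] at h1
  rw [← h1.limsup_eq]
  refine limsup_le_limsup ?_ (urec_cobdd hf w) h1.isBoundedUnder_le
  filter_upwards [tendsto_fst.eventually (eventually_gt_atTop (0:ℝ))] with p hp0
  have h3 := (abs_le.1 (lip_abs hΦ (p.1 • p.2) (p.1 • w))).2
  rw [← smul_sub, norm_smul, Real.norm_of_nonneg hp0.le] at h3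
  have := hle (p.1 • p.2)
  rw [div_add' _ _ _ hp0.ne', div_le_div_iff_of_pos_right hp0]
  linarith

lemma rrec_cont {Φ : V → ℝ} (h : TLipUnit Φ) : Continuous (fun w : Metric.sphere (0:V) 1 => rrec Φ (w:V)) := by
  have : LipschitzWith 1 (fun w : Metric.sphere (0:V) 1 => rrec Φ (w:V)) := by
    refine LipschitzWith.of_dist_le_mul fun w w' => ?_
    have hw : ‖(w:V)‖ = 1 := by simp
    have hw' : ‖(w':V)‖ = 1 := by simp
    have := h.bounds.2 w w' hw.le hw'.le
    rw [Tfun, if_neg (by simp [hw]), Tfun, if_neg (by simp [hw'])] at this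
    rw [Real.dist_eq, Subtype.dist_eq, dist_eq_norm]
    simpa using this
  exact this.continuous
end UR

section YM
variable {n : ℕ} {V : Type*} [NormedAddCommGroup V] [InnerProductSpace ℝ V]
  [FiniteDimensional ℝ V] [MeasurableSpace V] [BorelSpace V] {Ω : Set (Dom n)} (Y : YoungMeasure n V Ω)
  {E : Type*} [NormedAddCommGroup E] [NormedSpace ℝ E]

lemma aesm_param {T : Type*} [MeasurableSpace T] {κ : Dom n → Measure T} (hκ : Measurable κ) 
    {F : T → E} (hF : StronglyMeasurable F) :
    ∃ G : Dom n → E, StronglyMeasurable G ∧ ∀ x, IsProbabilityMeasure (κ x) → G x = ∫ z, F z ∂κ x := by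
  classical
  have hS : MeasurableSet {x | κ x Set.univ = 1} :=
    (Measure.measurable_coe MeasurableSet.univ).comp hκ (measurableSet_singleton 1)
  let k : ProbabilityTheory.Kernel (Dom n) T :=
    ⟨fun x => if κ x Set.univ = 1 then κ x else 0, Measurable.ite hS hκ measurable_const⟩
  haveI : ProbabilityTheory.IsFiniteKernel k := by
    refine ⟨1, by simp, fun x => ?_⟩
    show (if κ x Set.univ = 1 then κ x else 0) Set.univ ≤ 1
    split_ifs with h
    · exact h.le
    · simp
  refine ⟨_, StronglyMeasurable.integral_kernel (κ := k) hF, fun x hx => ?_⟩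
  show (∫ z, F z ∂(if κ x Set.univ = 1 then κ x else 0)) = _
  rw [if_pos hx.measure_univ]

namespace YoungMeasure

def mO (x : Dom n) : ℝ := (∫⁻ z, ‖z‖₊ ∂(Y.osc x)).toReal

lemma mO_int : IntegrableOn Y.mO Ω := by
  refine integrable_toReal_of_lintegral_ne_top ?_ Y.moment.ne
  exact ((Measure.measurable_lintegral (by fun_prop)).comp Y.osc_meas).aemeasurable

lemma osc_good : ∀ᵐ x ∂(volume.restrict Ω), IsProbabilityMeasure (Y.osc x) ∧ Integrable (fun z => z) (Y.osc x) := by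
  have hm : Measurable (fun x => ∫⁻ z, ‖z‖₊ ∂(Y.osc x)) :=
    (Measure.measurable_lintegral (by fun_prop)).comp Y.osc_meas
  filter_upwards [Y.osc_prob, ae_lt_top hm Y.moment.ne] with x h1 h2
  exact ⟨h1, aestronglyMeasurable_id, h2⟩

lemma mO_eq (x : Dom n) : Y.mO x = ∫ z, ‖z‖ ∂(Y.osc x) := by
  rw [integral_norm_eq_lintegral_enorm (f := fun z : V => z) aestronglyMeasurable_id]; rfl

lemma osc_F {x : Dom n} (h : IsProbabilityMeasure (Y.osc x) ∧ Integrable (fun z => z) (Y.osc x)) {F : V → E} {C : ℝ}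
    (hF : StronglyMeasurable F) (hC : ∀ z, ‖F z‖ ≤ C * (1 + ‖z‖)) :
    Integrable F (Y.osc x) ∧ ‖∫ z, F z ∂(Y.osc x)‖ ≤ C * (1 + Y.mO x) := by
  haveI := h.1
  have hi : Integrable (fun z => C * (1 + ‖z‖)) (Y.osc x) := ((integrable_const 1).add h.2.norm).const_mul C
  refine ⟨hi.mono' hF.aestronglyMeasurable (ae_of_all _ hC), ?_⟩
  refine (norm_integral_le_of_norm_le hi (ae_of_all _ hC)).trans (le_of_eq ?_)
  rw [integral_const_mul, integral_add (integrable_const 1) h.2.norm, Y.mO_eq]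
  simp

lemma osc_int (hΩ : volume Ω < ⊤) {F : V → E} {C : ℝ}
    (hF : StronglyMeasurable F) (hC : ∀ z, ‖F z‖ ≤ C * (1 + ‖z‖)) :
    IntegrableOn (fun x => ∫ z, F z ∂(Y.osc x)) Ω := by
  haveI : IsFiniteMeasure (volume.restrict Ω) := ⟨by simpa using hΩ⟩
  obtain ⟨G, hG, hGe⟩ := aesm_param Y.osc_meas hF
  refine Integrable.mono' (g := fun x => C * (1 + Y.mO x)) (((integrable_const 1).add Y.mO_int).const_mul C) ?_ ?_
  · refine ⟨G, hG, ?_⟩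
    filter_upwards [Y.osc_prob] with x hx
    exact (hGe x hx).symm
  · filter_upwards [Y.osc_good] with x hx
    exact (Y.osc_F hx hF hC).2

lemma lamA_nonneg (x : Dom n) : 0 ≤ Y.lamA x := ENNReal.toReal_nonneg

lemma lamA_int : Integrable Y.lamA := by
  haveI := Y.conc_finite
  exact Measure.integrable_toReal_rnDeriv

lemma ang_good : ∀ᵐ x, Y.lamA x ≠ 0 → IsProbabilityMeasure (Y.ang x) := by
  have h1 : ∀ᵐ x ∂(volume.withDensity (Y.conc.rnDeriv volume)), IsProbabilityMeasure (Y.ang x) :=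
    (Measure.absolutelyContinuous_of_le (Measure.withDensity_rnDeriv_le _ _)).ae_le Y.ang_prob
  rw [ae_withDensity_iff (Measure.measurable_rnDeriv _ _)] at h1
  filter_upwards [h1] with x hx h
  exact hx fun h0 => h (by rw [lamA, h0]; rfl)

lemma ang_F {x : Dom n} (h : Y.lamA x ≠ 0 → IsProbabilityMeasure (Y.ang x)) {F : Metric.sphere (0:V) 1 → E} {C : ℝ}
    (hC : ∀ z, ‖F z‖ ≤ C) :
    ‖Y.lamA x • ∫ z, F z ∂(Y.ang x)‖ ≤ C * Y.lamA x := by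
  by_cases h0 : Y.lamA x = 0
  · simp [h0]
  haveI := h h0
  rw [norm_smul, Real.norm_of_nonneg (Y.lamA_nonneg x), mul_comm]
  refine mul_le_mul_of_nonneg_right ?_ (Y.lamA_nonneg x)
  simpa using norm_integral_le_of_norm_le_const (μ := Y.ang x) (ae_of_all _ hC)

lemma ang_int {F : Metric.sphere (0:V) 1 → E} {C : ℝ}
    (hF : StronglyMeasurable F) (hC : ∀ z, ‖F z‖ ≤ C) :
    Integrable (fun x => Y.lamA x • ∫ z, F z ∂(Y.ang x)) := by
  obtain ⟨G, hG, hGe⟩ := aesm_param Y.ang_meas hF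
  refine Integrable.mono' (g := fun x => C * Y.lamA x) (Y.lamA_int.const_mul C) ?_ ?_
  · refine AEStronglyMeasurable.congr (f := fun x => Y.lamA x • G x)
      (Y.lamA_int.aestronglyMeasurable.smul hG.aestronglyMeasurable) ?_
    filter_upwards [Y.ang_good] with x hx
    by_cases h0 : Y.lamA x = 0
    · simp [h0]
    · rw [hGe x (hx h0)]
  · filter_upwards [Y.ang_good] with x hx
    exact Y.ang_F hx hC

def pp (Φ : V → ℝ) (x : Dom n) : ℝ :=
  (∫ z, Φ z ∂(Y.osc x)) + Y.lamA x * ∫ w, rrec Φ (w : V) ∂(Y.ang x)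

def qq (x : Dom n) : ℝ := 1 + Y.mO x + Y.lamA x

lemma qq_int (hΩ : volume Ω < ⊤) : IntegrableOn Y.qq Ω := by
  haveI : IsFiniteMeasure (volume.restrict Ω) := ⟨by simpa using hΩ⟩
  exact ((integrable_const 1).add Y.mO_int).add Y.lamA_int.integrableOn

lemma qq_nonneg (x : Dom n) : 0 ≤ Y.qq x := by
  have : 0 ≤ Y.mO x := ENNReal.toReal_nonneg
  have := Y.lamA_nonneg x
  unfold qq; linarith

lemma baryAC_int (hΩ : volume Ω < ⊤) : IntegrableOn Y.baryAC Ω := by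
  refine (Y.osc_int hΩ (C := 1) (F := fun z => z) stronglyMeasurable_id fun z => ?_).add
    (Y.ang_int (C := 1) (F := fun w => (w:V)) ?_ fun w => ?_).integrableOn
  · simp
  · exact continuous_subtype_val.stronglyMeasurable
  · simp

lemma pp_int (hΩ : volume Ω < ⊤) {Φ : V → ℝ} (h : TLipUnit Φ) : IntegrableOn (Y.pp Φ) Ω := by
  refine (Y.osc_int hΩ (C := 1) (F := Φ) h.lip.continuous.stronglyMeasurable fun z => ?_).add
    (Y.ang_int (C := 1) (F := fun w => rrec Φ (w:V)) (rrec_cont h).stronglyMeasurable fun w => ?_).integrableOn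
  · rw [one_mul]; exact h.growth z
  · exact h.rrec_le (by simp)

lemma ae_good : ∀ᵐ x ∂(volume.restrict Ω), (IsProbabilityMeasure (Y.osc x) ∧ Integrable (fun z => z) (Y.osc x)) ∧
    (Y.lamA x ≠ 0 → IsProbabilityMeasure (Y.ang x)) := by
  filter_upwards [Y.osc_good, ae_restrict_of_ae Y.ang_good] with x h1 h2 using ⟨h1, h2⟩

lemma pp_le {Φ : V → ℝ} (h : TLipUnit Φ) : ∀ᵐ x ∂(volume.restrict Ω), |Y.pp Φ x| ≤ Y.qq x := by
  filter_upwards [Y.ae_good] with x hx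
  have h1 := (Y.osc_F hx.1 (C := 1) (F := Φ) h.lip.continuous.stronglyMeasurable (by
    intro z; rw [one_mul]; exact h.growth z)).2
  have h2 := Y.ang_F hx.2 (C := 1) (F := fun w => rrec Φ (w:V)) (fun w => h.rrec_le (by simp))
  rw [Real.norm_eq_abs] at h1 h2
  refine (abs_add_le _ _).trans ?_
  rw [smul_eq_mul] at h2
  unfold qq; linarith

lemma pp_diff {Φ Ψ : V → ℝ} (h : TLipUnit Φ) (h' : TLipUnit Ψ) {δ : ℝ} (hd : ∀ z, |Ψ z - Φ z| ≤ δ * (1 + ‖z‖))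
    (hd' : ∀ w : V, ‖w‖ = 1 → |rrec Ψ w - rrec Φ w| ≤ δ) :
    ∀ᵐ x ∂(volume.restrict Ω), |Y.pp Ψ x - Y.pp Φ x| ≤ δ * Y.qq x := by
  filter_upwards [Y.ae_good] with x hx
  have hg : ∀ {Φ : V → ℝ}, TLipUnit Φ → Integrable Φ (Y.osc x) := fun {Φ} h =>
    (Y.osc_F hx.1 (C := 1) (F := Φ) h.lip.continuous.stronglyMeasurable (by
    intro z; rw [one_mul]; exact h.growth z)).1
  have h1 := (Y.osc_F hx.1 (C := δ) (F := fun z => Ψ z - Φ z)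
    (h'.lip.continuous.sub h.lip.continuous).stronglyMeasurable hd).2
  have h2 := Y.ang_F hx.2 (C := δ) (F := fun w => rrec Ψ (w:V) - rrec Φ (w:V)) (fun w => hd' w (by simp))
  rw [integral_sub (hg h') (hg h)] at h1
  have h3 : Y.lamA x • ∫ w, (rrec Ψ (w:V) - rrec Φ (w:V)) ∂(Y.ang x) =
      Y.lamA x * (∫ w, rrec Ψ (w:V) ∂(Y.ang x)) - Y.lamA x * ∫ w, rrec Φ (w:V) ∂(Y.ang x) := by
    by_cases h0 : Y.lamA x = 0
    · simp [h0]
    haveI := hx.2 h0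
    rw [integral_sub, smul_eq_mul, mul_sub]
    · exact (rrec_cont h').integrable_of_hasCompactSupport (HasCompactSupport.of_compactSpace _)
    · exact (rrec_cont h).integrable_of_hasCompactSupport (HasCompactSupport.of_compactSpace _)
  rw [h3] at h2
  rw [Real.norm_eq_abs] at h1 h2
  unfold pp qq
  rw [abs_le] at *
  constructor <;> linarith [h1.1, h1.2, h2.1, h2.2]

end YoungMeasure
end YM

section JC
variable {n : ℕ} {U V W : Type*} [NormedAddCommGroup V] [InnerProductSpace ℝ V] [FiniteDimensional ℝ V]
  [MeasurableSpace V] [BorelSpace V]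
  [NormedAddCommGroup W] [NormedSpace ℝ W] [CompleteSpace W]
  [NormedAddCommGroup U] [NormedSpace ℝ U]

def Kc {ι : Type*} [Fintype ι] (c : ι → ℝ) : NNReal := ⟨3 * ∑ i, |c i|, by positivity⟩

lemma comb_lip {ι : Type*} [Fintype ι] {Φ : ι → V → ℝ} (h : ∀ i, TLipUnit (Φ i)) (c : ι → ℝ) :
    LipschitzWith (Kc c) (fun z => ∑ i, c i * Φ i z) := by
  refine LipschitzWith.of_dist_le_mul fun z w => ?_
  rw [Real.dist_eq, dist_eq_norm, ← Finset.sum_sub_distrib]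
  refine (Finset.abs_sum_le_sum_abs _ _).trans ?_
  show _ ≤ (3 * ∑ i, |c i|) * _
  rw [Finset.mul_sum, Finset.sum_mul]
  refine Finset.sum_le_sum fun i _ => ?_
  rw [← mul_sub, abs_mul]
  have := lip_abs (h i).lip z w
  push_cast at this
  have := mul_le_mul_of_nonneg_left this (abs_nonneg (c i))
  linarith

lemma jensen_pt {A : (Fin n → ℕ) → (V →L[ℝ] W)} {k : ℕ} {B : (Fin n → ℕ) → (U →L[ℝ] V)} {l : ℕ}
    (hex : ExactPotential A k B l) {Ω : Set (Dom n)} (Y : YoungMeasure n V Ω) (hJ : Y.JensenAE A k)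
    {ι : Type*} [Fintype ι] {Φ : ι → V → ℝ} (h : ∀ i, MemH (Φ i) ∧ TLipUnit (Φ i)) (c : ι → ℝ) {a : V}
    (hb : QBdd B l (fun z => ∑ i, c i * Φ i z) a) :
    ∀ᵐ x ∂(volume.restrict Ω), Qf B l (fun z => ∑ i, c i * Φ i z) (Y.baryAC x) ≤ ∑ i, c i * Y.pp (Φ i) x := by
  have hL := comb_lip (fun i => (h i).2) c
  have hQ := Qf_lip hL hb
  have hlg : LinearGrowth (Qf B l (fun z => ∑ i, c i * Φ i z)) := by
    refine ⟨|Qf B l (fun z => ∑ i, c i * Φ i z) 0| + Kc c, fun z => ?_⟩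
    have := lip_abs hQ z 0
    rw [sub_zero] at this
    have h3 := abs_sub_abs_le_abs_sub (Qf B l (fun z => ∑ i, c i * Φ i z) z) (Qf B l (fun z => ∑ i, c i * Φ i z) 0)
    have := abs_nonneg (Qf B l (fun z => ∑ i, c i * Φ i z) 0)
    have := (Kc c).coe_nonneg
    have := norm_nonneg z
    nlinarith
  filter_upwards [hJ _ (Qf_aqc hex hL hb) hlg, Y.ae_good] with x hx hg
  refine hx.trans ?_
  have hi : ∀ i, Integrable (Φ i) (Y.osc x) := fun i =>
    (Y.osc_F hg.1 (C := 1) (F := Φ i) (h i).2.lip.continuous.stronglyMeasurable (by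
    intro z; rw [one_mul]; exact (h i).2.growth z)).1
  obtain ⟨cc, hcc⟩ := hlg
  have hiQ := (Y.osc_F hg.1 hQ.continuous.stronglyMeasurable hcc).1
  have e1 : ∫ z, Qf B l (fun z => ∑ i, c i * Φ i z) z ∂(Y.osc x) ≤ ∑ i, c i * ∫ z, Φ i z ∂(Y.osc x) := by
    have : ∑ i, c i * ∫ z, Φ i z ∂(Y.osc x) = ∫ z, ∑ i, c i * Φ i z ∂(Y.osc x) := by
      rw [integral_finset_sum _ fun i _ => (hi i).const_mul _]
      simp only [integral_const_mul]
    rw [this]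
    exact integral_mono hiQ (integrable_finset_sum _ fun i _ => (hi i).const_mul _)
      fun z => Qf_le_self (hb.all B l hL z)
  have e2 : Y.lamA x * ∫ w, urec (Qf B l (fun z => ∑ i, c i * Φ i z)) (w : V) ∂(Y.ang x)
      ≤ ∑ i, c i * (Y.lamA x * ∫ w, rrec (Φ i) (w:V) ∂(Y.ang x)) := by
    by_cases h0 : Y.lamA x = 0
    · simp [h0]
    haveI := hg.2 h0
    have hri : ∀ i, Integrable (fun w : Metric.sphere (0:V) 1 => rrec (Φ i) (w:V)) (Y.ang x) := fun i =>
      (rrec_cont (h i).2).integrable_of_hasCompactSupport (HasCompactSupport.of_compactSpace _)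
    have : ∑ i, c i * (Y.lamA x * ∫ w, rrec (Φ i) (w:V) ∂(Y.ang x))
        = Y.lamA x * ∫ w, ∑ i, c i * rrec (Φ i) (w:V) ∂(Y.ang x) := by
      rw [integral_finset_sum _ fun i _ => (hri i).const_mul _, Finset.mul_sum]
      simp only [integral_const_mul]
      exact Finset.sum_congr rfl fun i _ => by ring
    rw [this]
    refine mul_le_mul_of_nonneg_left ?_ (Y.lamA_nonneg x)
    refine integral_mono ?_ (integrable_finset_sum _ fun i _ => (hri i).const_mul _) fun w => ?_
    · exact ((urec_lip hQ).continuous.comp continuous_subtype_val).integrable_of_hasCompactSupport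
        (HasCompactSupport.of_compactSpace _)
    · refine urec_le hQ hL (fun z => Qf_le_self (hb.all B l hL z)) ?_
      have := tendsto_finset_sum Finset.univ fun i (_ : i ∈ Finset.univ) => ((h i).1.tendsto (w:V)).const_mul (c i)
      refine this.congr fun t => ?_
      rw [Finset.sum_div]
      exact Finset.sum_congr rfl fun i _ => by ring
  have e3 : ∑ i, c i * Y.pp (Φ i) x = ∑ i, c i * (∫ z, Φ i z ∂(Y.osc x)) +
      ∑ i, c i * (Y.lamA x * ∫ w, rrec (Φ i) (w:V) ∂(Y.ang x)) := by
    rw [← Finset.sum_add_distrib]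
    exact Finset.sum_congr rfl fun i _ => by unfold YoungMeasure.pp; ring
  rw [e3]
  exact add_le_add e1 e2

lemma jensen_cell {A : (Fin n → ℕ) → (V →L[ℝ] W)} {k : ℕ} {B : (Fin n → ℕ) → (U →L[ℝ] V)} {l : ℕ}
    (hex : ExactPotential A k B l) {Ω : Set (Dom n)} (hΩ : volume Ω < ⊤) (Y : YoungMeasure n V Ω) (hJ : Y.JensenAE A k)
    {ι : Type*} [Fintype ι] {Φ : ι → V → ℝ} (h : ∀ i, MemH (Φ i) ∧ TLipUnit (Φ i)) {Q : Set (Dom n)} (hQΩ : Q ⊆ Ω)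
    {N : ℝ} (hN : 0 < N) (hQN : volume.real Q = N⁻¹) (a : V) (c : ι → ℝ)
    (hb : QBdd B l (fun z => ∑ i, c i * Φ i z) a) :
    Qf B l (fun z => ∑ i, c i * Φ i z) a ≤ ∑ i, c i * (N * ∫ x in Q, Y.pp (Φ i) x)
      + (3 * (N * ∫ x in Q, ‖Y.baryAC x - a‖)) * ∑ i, |c i| := by
  have hL := comb_lip (fun i => (h i).2) c
  have hQ := Qf_lip hL hb
  have hvQ : volume Q < ⊤ := (measure_mono hQΩ).trans_lt hΩ
  haveI : IsFiniteMeasure (volume.restrict Q) := ⟨by simpa using hvQ⟩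
  have hp : ∀ i, IntegrableOn (Y.pp (Φ i)) Q := fun i => (Y.pp_int hΩ (h i).2).mono_set hQΩ
  have hz : IntegrableOn (fun x => ‖Y.baryAC x - a‖) Q :=
    (((Y.baryAC_int hΩ).mono_set hQΩ).sub (integrable_const a)).norm
  have h1 : ∫ x in Q, Qf B l (fun z => ∑ i, c i * Φ i z) a ≤
      ∫ x in Q, (∑ i, c i * Y.pp (Φ i) x + (Kc c : ℝ) * ‖Y.baryAC x - a‖) := by
    refine integral_mono_ae (integrable_const _) ?_ ?_
    · exact (integrable_finset_sum _ fun i _ => (hp i).const_mul _).add (hz.const_mul _)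
    · filter_upwards [ae_restrict_of_ae_restrict_of_subset hQΩ (jensen_pt hex Y hJ h c hb)] with x hx
      have := (abs_le.1 (lip_abs hQ a (Y.baryAC x))).2
      rw [norm_sub_rev] at this
      linarith
  rw [integral_add (integrable_finset_sum _ fun i _ => (hp i).const_mul _) (hz.const_mul _),
    integral_finset_sum _ fun i _ => (hp i).const_mul _] at h1
  simp only [integral_const_mul, integral_const, smul_eq_mul, Measure.real, Measure.restrict_apply MeasurableSet.univ, Set.univ_inter] at h1
  rw [← Measure.real, hQN, inv_mul_le_iff₀ hN] at h1
  refine h1.trans (le_of_eq ?_)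
  rw [mul_add, Finset.mul_sum]
  congr 1
  · exact Finset.sum_congr rfl fun i _ => by ring
  · show N * ((3 * ∑ i, |c i|) * _) = _
    ring
end JC

section MO
variable {n : ℕ} {V : Type*} [NormedAddCommGroup V] [NormedSpace ℝ V] [CompleteSpace V]

open ContinuousLinearMap in
lemma moll_conv {ρ : Dom n → ℝ} (hρ : IsStdMollifier n ρ) {f : Dom n → V} (hf : Integrable f)
    {Ω : Set (Dom n)} (hΩ : volume Ω < ⊤) {ε : ℝ} (hε : 0 < ε) :
    ∃ t0 > (0:ℝ), ∀ t ∈ Set.Ioc (0:ℝ) t0,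
      Integrable (fun x => ∫ y, mollK ρ t (x - y) • f y) ∧
      ∫ x in Ω, ‖(∫ y, mollK ρ t (x - y) • f y) - f x‖ < ε := by
  haveI : IsFiniteMeasure (volume.restrict Ω) := ⟨by simpa using hΩ⟩
  obtain ⟨g, hgc, hfg, hgcont, hgi⟩ := hf.exists_hasCompactSupport_integral_sub_le (show 0 < ε/4 by positivity)
  have huc := hgc.uniformContinuous_of_continuous hgcont
  set N : ℝ := volume.real Ω with hN
  have hN0 : 0 ≤ N := measureReal_nonneg
  obtain ⟨t0, ht0, ht0'⟩ := Metric.uniformContinuous_iff.1 huc (ε / (4 * (N + 1))) (by positivity)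
  refine ⟨t0, ht0, fun t ht => ?_⟩
  have htp : 0 < t := ht.1
  have hk1 : ∫ x, mollK ρ t x = 1 := by
    unfold mollK
    rw [integral_const_mul, Measure.integral_comp_inv_smul_of_nonneg _ _ htp.le, hρ.2.2.2.2]
    simp [htp.ne']
  have hki : Integrable (mollK ρ t) := integrable_of_integral_eq_one hk1
  have hk0 : ∀ x, 0 ≤ mollK ρ t x := fun x => mul_nonneg (by positivity) (hρ.2.1 _)
  have hks : Function.support (mollK ρ t) ⊆ Metric.ball 0 t := by
    intro x hx
    have h1 : ρ (t⁻¹ • x) ≠ 0 := fun h => hx (by simp [mollK, h])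
    have h2 := hρ.2.2.1 (subset_tsupport _ h1)
    rw [mem_ball_zero_iff, pi_norm_lt_iff htp]
    intro i
    have h3 := h2 i (Set.mem_univ i)
    simp only [Pi.smul_apply, smul_eq_mul] at h3
    rw [Set.mem_Icc, le_inv_mul_iff₀ htp, inv_mul_le_iff₀ htp] at h3
    rw [Real.norm_eq_abs, abs_lt]
    constructor <;> linarith [h3.1, h3.2]
  have hconv : ∀ x, (∫ y, mollK ρ t (x - y) • f y) = convolution (mollK ρ t) f (lsmul ℝ ℝ) volume x :=
    fun x => convolution_lsmul_swap.symm
  simp only [hconv]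
  have hci : Integrable (convolution (mollK ρ t) f (lsmul ℝ ℝ) volume) := hki.integrable_convolution _ hf
  refine ⟨hci, ?_⟩
  have hd : Integrable (fun x => ‖f x - g x‖) := (hf.sub hgi).norm
  have hdc : Integrable (convolution (mollK ρ t) (fun x => ‖f x - g x‖) (lsmul ℝ ℝ) volume) := hki.integrable_convolution _ hd
  have hdci : ∫ x, convolution (mollK ρ t) (fun x => ‖f x - g x‖) (lsmul ℝ ℝ) volume x = ∫ x, ‖f x - g x‖ := by
    rw [integral_convolution (lsmul ℝ ℝ) hki hd, hk1]; simp
  have hpt : ∀ᵐ x, ‖convolution (mollK ρ t) f (lsmul ℝ ℝ) volume x - f x‖ ≤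
      convolution (mollK ρ t) (fun x => ‖f x - g x‖) (lsmul ℝ ℝ) volume x + ε / (4 * (N + 1)) + ‖f x - g x‖ := by
    filter_upwards [hki.ae_convolution_exists (lsmul ℝ ℝ) hf, hki.ae_convolution_exists (lsmul ℝ ℝ) hgi] with x h1 h2
    have e1 : ‖convolution (mollK ρ t) f (lsmul ℝ ℝ) volume x - convolution (mollK ρ t) g (lsmul ℝ ℝ) volume x‖ ≤
        convolution (mollK ρ t) (fun x => ‖f x - g x‖) (lsmul ℝ ℝ) volume x := by
      unfold convolution
      rw [← integral_sub h1 h2]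
      refine (norm_integral_le_integral_norm _).trans (le_of_eq (integral_congr_ae (ae_of_all _ fun y => ?_)))
      simp only [lsmul_apply]
      rw [← smul_sub, norm_smul, Real.norm_of_nonneg (hk0 y), smul_eq_mul]
    have e2 : dist (convolution (mollK ρ t) g (lsmul ℝ ℝ) volume x) (g x) ≤ ε / (4 * (N + 1)) :=
      dist_convolution_le (by positivity) hks hk0 hk1 hgcont.aestronglyMeasurable fun y hy =>
        (ht0' ((Metric.mem_ball.1 hy).trans_le ht.2)).le
    rw [dist_eq_norm] at e2
    have e3 : convolution (mollK ρ t) f (lsmul ℝ ℝ) volume x - f x =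
      (convolution (mollK ρ t) f (lsmul ℝ ℝ) volume x - convolution (mollK ρ t) g (lsmul ℝ ℝ) volume x) +
      (convolution (mollK ρ t) g (lsmul ℝ ℝ) volume x - g x) + (g x - f x) := by abel
    rw [e3]
    refine (norm_add₃_le).trans ?_
    rw [norm_sub_rev (g x)]
    linarith
  have h1 : ∫ x in Ω, ‖convolution (mollK ρ t) f (lsmul ℝ ℝ) volume x - f x‖ ≤
      ∫ x in Ω, (convolution (mollK ρ t) (fun x => ‖f x - g x‖) (lsmul ℝ ℝ) volume x + ε / (4 * (N + 1)) + ‖f x - g x‖) :=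
    integral_mono_ae (hci.sub hf).norm.integrableOn
      ((hdc.integrableOn.add (integrable_const _)).add hd.integrableOn) (ae_restrict_of_ae hpt)
  have h2 : ∫ x in Ω, convolution (mollK ρ t) (fun x => ‖f x - g x‖) (lsmul ℝ ℝ) volume x ≤ ε / 4 := by
    refine (setIntegral_le_integral hdc (ae_of_all _ fun x => ?_)).trans (hdci.le.trans hfg)
    exact integral_nonneg fun y => by
      simp only [lsmul_apply, smul_eq_mul]
      exact mul_nonneg (hk0 y) (norm_nonneg _)
  have h3 : ∫ x in Ω, ‖f x - g x‖ ≤ ε / 4 := (setIntegral_le_integral hd (ae_of_all _ fun x => norm_nonneg _)).trans hfg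
  have i1 : Integrable (fun x => convolution (mollK ρ t) (fun x => ‖f x - g x‖) (lsmul ℝ ℝ) volume x + ε / (4 * (N + 1))) (volume.restrict Ω) :=
    hdc.integrableOn.add (integrable_const _)
  rw [integral_add i1 hd.integrableOn, integral_add hdc.integrableOn (integrable_const _)] at h1
  have h4 : ∫ x in Ω, (ε / (4 * (N + 1))) ≤ ε / 4 := by
    rw [integral_const, smul_eq_mul]
    simp only [Measure.real, Measure.restrict_apply MeasurableSet.univ, Set.univ_inter]
    rw [← Measure.real, ← hN, mul_div_assoc', div_le_div_iff₀ (by positivity) (by positivity)]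
    nlinarith
  linarith

end MO

section GEO
variable {n : ℕ}

lemma etaLipUnit.bounds {Ω : Set (Dom n)} (hΩb : Bornology.IsBounded Ω) {η : Dom n → ℝ} (h : etaLipUnit Ω η) :
    (∀ x ∈ Ω, |η x| ≤ 1) ∧ (∀ x ∈ Ω, ∀ y ∈ Ω, |η x - η y| ≤ dist x y) := by
  obtain ⟨K, hK, hs⟩ := h
  have hnn : 0 ≤ ⨆ x ∈ closure Ω, |η x| :=
    Real.iSup_nonneg fun z => Real.iSup_nonneg fun _ => abs_nonneg _
  have hK1 : (K:ℝ) ≤ 1 := by linarith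
  have hK0 := K.coe_nonneg
  refine ⟨fun x hx => ?_, fun x hx y hy => ?_⟩
  · have hxc := subset_closure hx
    have hb : BddAbove (Set.range fun y : Dom n => ⨆ (_ : y ∈ closure Ω), |η y|) := by
      refine ⟨|η x| + Metric.diam (closure Ω), ?_⟩
      rintro _ ⟨w, rfl⟩
      refine Real.iSup_le (fun hw => ?_) (by positivity)
      have h1 := hK.dist_le_mul w hw x hxc
      have h2 := Metric.dist_le_diam_of_mem hΩb.closure hw hxc
      rw [Real.dist_eq] at h1
      have := abs_sub_abs_le_abs_sub (η w) (η x)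
      have := dist_nonneg (x := w) (y := x)
      nlinarith
    have h1 := le_ciSup hb x
    simp only [hxc, ciSup_unique] at h1
    linarith
  · have h1 := hK.dist_le_mul x (subset_closure hx) y (subset_closure hy)
    rw [Real.dist_eq] at h1
    have := dist_nonneg (x := x) (y := y)
    nlinarith

lemma center_mem {M : ℝ} (hM : 0 < M) (k : Fin n → ℤ) : M⁻¹ • zc k ∈ cell M k := by
  rw [mem_cell]
  intro i
  simp only [Pi.smul_apply, smul_eq_mul, zc]
  rw [mul_inv_cancel_left₀ hM.ne']
  norm_num

lemma cells_finite {Ω : Set (Dom n)} (hΩb : Bornology.IsBounded Ω) {M : ℝ} (hM : 0 < M) :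
    {k : Fin n → ℤ | cell M k ⊆ Ω}.Finite := by
  obtain ⟨R, hR⟩ := hΩb.exists_norm_le
  obtain ⟨m, hm⟩ := exists_int_gt (M * R)
  refine (Set.finite_Icc (fun _ : Fin n => -m) (fun _ => m)).subset fun k hk => ?_
  have h1 := hR _ (hk (center_mem hM k))
  have h2 : ∀ i, |(k i : ℝ)| ≤ m := by
    intro i
    have h3 := (norm_le_pi_norm (M⁻¹ • zc k) i).trans h1
    simp only [Pi.smul_apply, smul_eq_mul, zc, norm_mul, Real.norm_eq_abs, abs_inv, abs_of_pos hM] at h3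
    rw [inv_mul_le_iff₀ hM] at h3
    linarith
  refine ⟨fun i => ?_, fun i => ?_⟩
  · have := (abs_le.1 (h2 i)).1
    exact_mod_cast this
  · have := (abs_le.1 (h2 i)).2
    exact_mod_cast this

lemma exists_mesh {Ω : Set (Dom n)} (hΩo : IsOpen Ω) (hΩb : Bornology.IsBounded Ω) {b : Dom n → ℝ}
    (hb : IntegrableOn b Ω) (hb0 : ∀ x, 0 ≤ b x) {s δ : ℝ} (hs : 0 < s) (hδ : 0 < δ) :
    ∃ M : ℝ, 1 ≤ M ∧ M⁻¹ < s ∧ ∃ F : Finset (Fin n → ℤ), (∀ k ∈ F, cell M k ⊆ Ω) ∧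
      ∫ x in Ω \ ⋃ k ∈ F, cell M k, b x < δ := by
  classical
  have hMp : ∀ m : ℕ, (0:ℝ) < (m:ℝ) + 1 := fun m => by positivity
  let F : ℕ → Finset (Fin n → ℤ) := fun m => (cells_finite hΩb (hMp m)).toFinset
  let R : ℕ → Set (Dom n) := fun m => Ω \ ⋃ k ∈ F m, cell ((m:ℝ)+1) k
  have hRm : ∀ m, MeasurableSet (R m) := fun m =>
    hΩo.measurableSet.diff (Finset.measurableSet_biUnion _ fun k _ => cell_meas _ k)
  have hinv : Tendsto (fun m : ℕ => ((m:ℝ)+1)⁻¹) atTop (𝓝 0) := by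
    simpa using tendsto_one_div_add_atTop_nhds_zero_nat (𝕜 := ℝ)
  have hlim : Tendsto (fun m => ∫ x in Ω, (R m).indicator b x) atTop (𝓝 (∫ x in Ω, (0:ℝ))) := by
    refine tendsto_integral_of_dominated_convergence b (fun m => hb.1.indicator (hRm m)) hb (fun m => ae_of_all _ fun x => ?_) ?_
    · rw [Real.norm_eq_abs]
      by_cases h : x ∈ R m
      · rw [Set.indicator_of_mem h, abs_of_nonneg (hb0 x)]
      · rw [Set.indicator_of_notMem h, abs_zero]; exact hb0 x
    · have hae : ∀ᵐ x : Dom n, ∀ m : ℕ, ∃ k, x ∈ cell ((m:ℝ)+1) k := ae_all_iff.2 fun m => ae_mem_cell (hMp m)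
      filter_upwards [ae_restrict_of_ae hae, ae_restrict_mem hΩo.measurableSet] with x hx hxΩ
      obtain ⟨r, hr, hrb⟩ := Metric.isOpen_iff.1 hΩo x hxΩ
      refine tendsto_const_nhds.congr' ?_
      filter_upwards [hinv.eventually (gt_mem_nhds hr)] with m hm
      obtain ⟨k, hk⟩ := hx m
      rw [Set.indicator_of_notMem]
      intro hxR
      refine hxR.2 (Set.mem_biUnion (x := k) ?_ hk)
      simp only [F, Finset.mem_coe, Set.Finite.mem_toFinset, Set.mem_setOf_eq]
      exact fun y hy => hrb (Metric.mem_ball.2 ((cell_bounded (hMp m) k hy hk).trans_lt hm))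
  rw [integral_zero] at hlim
  obtain ⟨m, h1, h2⟩ := ((hlim.eventually (gt_mem_nhds hδ)).and (hinv.eventually (gt_mem_nhds hs))).exists
  refine ⟨(m:ℝ)+1, by linarith [Nat.cast_nonneg (α := ℝ) m], h2, F m, fun k hk => by simpa [F] using hk, ?_⟩
  rw [setIntegral_indicator (hRm m)] at h1
  have : Ω ∩ R m = R m := Set.inter_eq_right.2 Set.diff_subset
  rwa [this] at h1
end GEO

section CORE
variable {n : ℕ} {U V W : Type*} [NormedAddCommGroup V] [InnerProductSpace ℝ V] [FiniteDimensional ℝ V]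
  [MeasurableSpace V] [BorelSpace V]
  [NormedAddCommGroup W] [NormedSpace ℝ W] [CompleteSpace W]
  [NormedAddCommGroup U] [NormedSpace ℝ U]

lemma core1 (hn : 0 < n) {A : (Fin n → ℕ) → (V →L[ℝ] W)} {k : ℕ} {B : (Fin n → ℕ) → (U →L[ℝ] V)} {l : ℕ}
    (hex : ExactPotential A k B l) {Ω : Set (Dom n)} (hΩo : IsOpen Ω) (hΩb : Bornology.IsBounded Ω)
    (Y : YoungMeasure n V Ω) (hJ : Y.JensenAE A k)
    {ι : Type*} [Fintype ι] {Φ : ι → V → ℝ} (h : ∀ i, MemH (Φ i) ∧ TLipUnit (Φ i))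
    {ε s τ : ℝ} (hε : 0 < ε) (hs : 0 < s) (hτ : 0 < τ) :
    ∃ (M : ℝ) (F : Finset (Fin n → ℤ)) (ψ : Dom n → U) (e : (Fin n → ℤ) → ℝ), 0 < M ∧ M⁻¹ < s ∧
      CcSmooth Ω ψ ∧ sobNorm l ψ < ε ∧ (∀ k ∈ F, cell M k ⊆ Ω) ∧
      (∀ x, (∀ k ∈ F, x ∉ cell M k) → opApply B l ψ x = 0) ∧
      (∀ k ∈ F, ∀ i, |(∫ x in cell M k, Y.pp (Φ i) x) - ∫ x in cell M k, Φ i (Y.baryAC x + opApply B l ψ x)| ≤ e k) ∧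
      ∑ k ∈ F, e k ≤ τ ∧
      ∫ x in Ω \ ⋃ k ∈ F, cell M k, (Y.qq x + (1 + ‖Y.baryAC x‖)) < τ := by
  have hΩv : volume Ω < ⊤ := hΩb.measure_lt_top
  haveI : IsFiniteMeasure (volume.restrict Ω) := ⟨by simpa using hΩv⟩
  set z := Y.baryAC with hzdef
  have hz : IntegrableOn z Ω := Y.baryAC_int hΩv
  have hzi : Integrable (Ω.indicator z) := hz.integrable_indicator hΩo.measurableSet
  obtain ⟨g, hgc, hfg, hgcont, hgi⟩ := hzi.exists_hasCompactSupport_integral_sub_le (show 0 < τ/24 by positivity)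
  have huc := hgc.uniformContinuous_of_continuous hgcont
  set N : ℝ := volume.real Ω with hN
  have hN0 : 0 ≤ N := measureReal_nonneg
  set d := τ / (24 * (N+1)) with hd
  have hd0 : 0 < d := by positivity
  obtain ⟨s0, hs0, hs0'⟩ := Metric.uniformContinuous_iff.1 huc d hd0
  have hbi : IntegrableOn (fun x => Y.qq x + (1 + ‖z x‖)) Ω :=
    (Y.qq_int hΩv).add ((integrable_const 1).add hz.norm)
  obtain ⟨M, hM1, hMs, F, hF, hR⟩ := exists_mesh hΩo hΩb hbi
    (fun x => add_nonneg (Y.qq_nonneg x) (by positivity)) (lt_min hs hs0) hτ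
  have hM : 0 < M := by linarith
  have hMn : 0 < M^n := by positivity
  let a : (Fin n → ℤ) → V := fun k => g (M⁻¹ • zc k)
  have hzc : ∀ k ∈ F, IntegrableOn z (cell M k) := fun k hk => hz.mono_set (hF k hk)
  have hu : ∀ k : Fin n → ℤ, ∃ u : Dom n → U, k ∈ F → CcSmooth (unitCube n) u ∧ sobNorm l u < ε / (F.card + 1) ∧
      ∀ i, |(M^n * ∫ x in cell M k, Y.pp (Φ i) x) - Jf B l (Φ i) (a k) u| ≤ 3 * (M^n * ∫ x in cell M k, ‖z x - a k‖) + d := by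
    intro k
    by_cases hk : k ∈ F
    · obtain ⟨u, h1, h2, h3⟩ := hb_sep B l hn (fun i => (h i).2.lip) (a k) (fun i => M^n * ∫ x in cell M k, Y.pp (Φ i) x)
        (r := 3 * (M^n * ∫ x in cell M k, ‖z x - a k‖)) (by positivity)
        (fun c hc => jensen_cell hex hΩv Y hJ h (hF k hk) hMn (volumeReal_cell hM k) (a k) c hc) hd0
        (show 0 < ε / (F.card + 1) by positivity)
      exact ⟨u, fun _ => ⟨h1, h2, h3⟩⟩
    · exact ⟨0, fun h => absurd h hk⟩
  choose u hu using hu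
  have hus : ∀ k ∈ F, CcSmooth (unitCube n) (u k) := fun k hk => (hu k hk).1
  refine ⟨M, F, ins l M F u, fun k => 6 * (∫ x in cell M k, ‖z x - a k‖) + d * (M^n)⁻¹, hM, hMs.trans_le (min_le_left _ _),
    ins_ccSmooth l hM hus hF, ?_, hF, fun x hx => ins_op_off B l hM hus hx, ?_, ?_, hR⟩
  · refine (ins_sob l hM1 hus).trans_lt ?_
    have h1 : ∑ k ∈ F, (M^n)⁻¹ * sobNorm l (u k) ≤ ∑ k ∈ F, ε / (F.card + 1) := by
      refine Finset.sum_le_sum fun k hk => ?_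
      have h2 := (hu k hk).2.1.le
      have h3 := sobNorm_nonneg l (u k)
      have h4 : (M^n)⁻¹ ≤ 1 := inv_le_one_of_one_le₀ (one_le_pow₀ hM1)
      nlinarith
    have h0 : 0 ≤ ∑ k ∈ F, (M^n)⁻¹ * sobNorm l (u k) := Finset.sum_nonneg fun k _ =>
      mul_nonneg (by positivity) (sobNorm_nonneg l (u k))
    have h5 : M⁻¹ ≤ 1 := inv_le_one_of_one_le₀ hM1
    have h6 : M⁻¹ * ∑ k ∈ F, (M^n)⁻¹ * sobNorm l (u k) ≤ ∑ k ∈ F, (M^n)⁻¹ * sobNorm l (u k) :=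
      mul_le_of_le_one_left h0 h5
    have h7 : ∑ k ∈ F, ε / ((F.card:ℝ) + 1) < ε := by
      rw [Finset.sum_const, nsmul_eq_mul, mul_div_assoc', div_lt_iff₀ (by positivity)]
      nlinarith
    linarith
  · intro k hk i
    have h1 := paste B l hM hus hk (h i).2.lip (a k) (hzc k hk)
    have h2 := (hu k hk).2.2 i
    have h3 : |(∫ x in cell M k, Y.pp (Φ i) x) - (M^n)⁻¹ * Jf B l (Φ i) (a k) (u k)| ≤
        3 * (∫ x in cell M k, ‖z x - a k‖) + d * (M^n)⁻¹ := by
      have e1 : (∫ x in cell M k, Y.pp (Φ i) x) - (M^n)⁻¹ * Jf B l (Φ i) (a k) (u k) =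
        (M^n)⁻¹ * ((M^n * ∫ x in cell M k, Y.pp (Φ i) x) - Jf B l (Φ i) (a k) (u k)) := by field_simp
      rw [e1, abs_mul, abs_of_pos (by positivity)]
      refine (mul_le_mul_of_nonneg_left h2 (by positivity)).trans (le_of_eq ?_)
      field_simp
    push_cast at h1
    rw [abs_le] at *
    constructor <;> linarith [h1.1, h1.2, h3.1, h3.2]
  · rw [Finset.sum_add_distrib, ← Finset.mul_sum]
    have hUΩ : (⋃ k ∈ F, cell M k) ⊆ Ω := Set.iUnion₂_subset hF
    have hone : ∑ k ∈ F, (M^n)⁻¹ ≤ N := by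
      have h1Ω : IntegrableOn (fun _ : Dom n => (1:ℝ)) Ω := integrable_const 1
      have e1 := integral_biUnion_cell M F (f := fun _ => (1:ℝ)) fun k hk => h1Ω.mono_set (hF k hk)
      simp only [integral_const, smul_eq_mul, mul_one, Measure.real, Measure.restrict_apply MeasurableSet.univ, Set.univ_inter] at e1
      have e2 : ∀ k, (volume (cell M k)).toReal = (M^n)⁻¹ := fun k => volumeReal_cell hM k
      simp only [e2] at e1
      rw [← e1]
      exact ENNReal.toReal_mono hΩv.ne (measure_mono hUΩ)
    have hzg : IntegrableOn (fun x => ‖z x - g x‖ + d) Ω := ((hz.sub hgi.integrableOn).norm).add (integrable_const d)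
    have h1 : ∑ k ∈ F, ∫ x in cell M k, ‖z x - a k‖ ≤ τ / 12 := by
      calc ∑ k ∈ F, ∫ x in cell M k, ‖z x - a k‖ ≤ ∑ k ∈ F, ∫ x in cell M k, (‖z x - g x‖ + d) := by
            refine Finset.sum_le_sum fun k hk => ?_
            haveI : IsFiniteMeasure (volume.restrict (cell M k)) := ⟨by simpa using volume_cell_lt_top hM k⟩
            refine setIntegral_mono_on ((hzc k hk).sub (integrable_const (a k))).norm (hzg.mono_set (hF k hk)) (cell_meas M k) fun x hx => ?_
            have h2 : dist (g x) (a k) < d := hs0' ((cell_bounded hM k hx (center_mem hM k)).trans_lt (hMs.trans_le (min_le_right _ _)))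
            rw [dist_eq_norm] at h2
            have : z x - a k = (z x - g x) + (g x - a k) := by abel
            rw [this]
            exact (norm_add_le _ _).trans (by linarith)
        _ = ∫ x in ⋃ k ∈ F, cell M k, (‖z x - g x‖ + d) :=
            (integral_biUnion_cell M F fun k hk => hzg.mono_set (hF k hk)).symm
        _ ≤ ∫ x in Ω, (‖z x - g x‖ + d) :=
            setIntegral_mono_set hzg (ae_of_all _ fun x => by positivity) hUΩ.eventuallyLE
        _ = (∫ x in Ω, ‖z x - g x‖) + N * d := by
            have i0 : Integrable (fun x => ‖z x - g x‖) (volume.restrict Ω) := (hz.sub hgi.integrableOn).norm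
            rw [integral_add i0 (integrable_const d), integral_const]
            simp [Measure.real, hN]
        _ ≤ τ / 24 + τ / 24 := by
            refine add_le_add ?_ ?_
            · have e1 : ∫ x in Ω, ‖z x - g x‖ = ∫ x in Ω, ‖Ω.indicator z x - g x‖ :=
                setIntegral_congr_fun hΩo.measurableSet fun x hx => by simp [Set.indicator_of_mem hx]
              rw [e1]
              exact (setIntegral_le_integral (hzi.sub hgi).norm (ae_of_all _ fun x => norm_nonneg _)).trans hfg
            · rw [hd, mul_div_assoc', div_le_div_iff₀ (by positivity) (by positivity)]
              nlinarith
        _ = τ / 12 := by ring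
    have h2 : ∑ k ∈ F, d * (M^n)⁻¹ ≤ τ / 24 := by
      rw [← Finset.mul_sum]
      refine (mul_le_mul_of_nonneg_left hone hd0.le).trans ?_
      rw [hd, div_mul_eq_mul_div, div_le_div_iff₀ (by positivity) (by positivity)]
      nlinarith
    linarith
end CORE

section ETA
variable {n : ℕ}

lemma etaLipUnit.aesm {Ω : Set (Dom n)} (hΩo : IsOpen Ω) {η : Dom n → ℝ} (h : etaLipUnit Ω η) :
    AEStronglyMeasurable η (volume.restrict Ω) := by
  obtain ⟨K, hK, -⟩ := h
  exact (hK.continuousOn.mono subset_closure).aestronglyMeasurable hΩo.measurableSet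

lemma eta_mul_int {Ω : Set (Dom n)} (hΩo : IsOpen Ω) {η G : Dom n → ℝ}
    (hm : AEStronglyMeasurable η (volume.restrict Ω)) (hη : ∀ x ∈ Ω, |η x| ≤ 1) (hG : IntegrableOn G Ω) :
    IntegrableOn (fun x => η x * G x) Ω := by
  refine Integrable.mono hG (hm.mul hG.1) ?_
  filter_upwards [ae_restrict_mem hΩo.measurableSet] with x hx
  rw [norm_mul]
  exact mul_le_of_le_one_left (norm_nonneg _) (hη x hx)

lemma eta_bound {Ω : Set (Dom n)} (hΩo : IsOpen Ω) {η G Q : Dom n → ℝ}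
    (hη : ∀ x ∈ Ω, |η x| ≤ 1) (hQ : IntegrableOn Q Ω)
    (hGQ : ∀ᵐ x ∂(volume.restrict Ω), |G x| ≤ Q x) : |∫ x in Ω, η x * G x| ≤ ∫ x in Ω, Q x := by
  rw [← Real.norm_eq_abs]
  refine norm_integral_le_of_norm_le hQ ?_
  filter_upwards [hGQ, ae_restrict_mem hΩo.measurableSet] with x hx hxΩ
  rw [norm_mul]
  exact (mul_le_of_le_one_left (norm_nonneg _) (hη x hxΩ)).trans hx

lemma cells_eta {Ω : Set (Dom n)} (hΩo : IsOpen Ω) {M : ℝ} (hM : 0 < M) {F : Finset (Fin n → ℤ)}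
    (hF : ∀ k ∈ F, cell M k ⊆ Ω) {η G Q : Dom n → ℝ}
    (hm : AEStronglyMeasurable η (volume.restrict Ω)) (hη : ∀ x ∈ Ω, |η x| ≤ 1)
    (hηl : ∀ x ∈ Ω, ∀ y ∈ Ω, |η x - η y| ≤ dist x y) (hG : IntegrableOn G Ω) (hQ : IntegrableOn Q Ω)
    (hGQ : ∀ᵐ x ∂(volume.restrict Ω), |G x| ≤ Q x) {e : (Fin n → ℤ) → ℝ}
    (he : ∀ k ∈ F, |∫ x in cell M k, G x| ≤ e k) :
    |∫ x in Ω, η x * G x| ≤ ∑ k ∈ F, e k + M⁻¹ * (∫ x in Ω, Q x) + ∫ x in Ω \ ⋃ k ∈ F, cell M k, Q x := by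
  have hUΩ : (⋃ k ∈ F, cell M k) ⊆ Ω := Set.iUnion₂_subset hF
  have hUm : MeasurableSet (⋃ k ∈ F, cell M k) := Finset.measurableSet_biUnion _ fun k _ => cell_meas _ k
  have hηG := eta_mul_int hΩo hm hη hG
  have hR := hΩo.measurableSet.diff hUm
  have hsplit : ∫ x in Ω, η x * G x = (∑ k ∈ F, ∫ x in cell M k, η x * G x) + ∫ x in Ω \ ⋃ k ∈ F, cell M k, η x * G x := by
    rw [← integral_biUnion_cell M F fun k hk => hηG.mono_set (hF k hk)]
    have := integral_inter_add_diff hUm hηG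
    rw [Set.inter_eq_right.2 hUΩ] at this
    exact this.symm
  have h1 : |∫ x in Ω \ ⋃ k ∈ F, cell M k, η x * G x| ≤ ∫ x in Ω \ ⋃ k ∈ F, cell M k, Q x := by
    rw [← Real.norm_eq_abs]
    refine norm_integral_le_of_norm_le (hQ.mono_set Set.diff_subset) ?_
    filter_upwards [ae_restrict_of_ae_restrict_of_subset Set.diff_subset hGQ, ae_restrict_mem hR] with x hx hxR
    rw [norm_mul]
    exact (mul_le_of_le_one_left (norm_nonneg _) (hη x hxR.1)).trans hx
  have h2 : ∀ k ∈ F, |∫ x in cell M k, η x * G x| ≤ e k + M⁻¹ * ∫ x in cell M k, Q x := by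
    intro k hk
    have hGk := hG.mono_set (hF k hk)
    have hηGk := hηG.mono_set (hF k hk)
    have hc := hF k hk (center_mem hM k)
    have e1 : ∫ x in cell M k, η x * G x = η (M⁻¹ • zc k) * (∫ x in cell M k, G x) +
        ∫ x in cell M k, (η x - η (M⁻¹ • zc k)) * G x := by
      rw [← integral_const_mul, ← integral_add (hGk.const_mul _)]
      · congr 1; ext x; ring
      · have := hηGk.sub (hGk.const_mul (η (M⁻¹ • zc k)))
        refine this.congr (ae_of_all _ fun x => ?_)
        simp only [Pi.sub_apply]; ring
    have e2 : |∫ x in cell M k, (η x - η (M⁻¹ • zc k)) * G x| ≤ M⁻¹ * ∫ x in cell M k, Q x := by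
      rw [← integral_const_mul, ← Real.norm_eq_abs]
      refine norm_integral_le_of_norm_le ((hQ.mono_set (hF k hk)).const_mul _) ?_
      filter_upwards [ae_restrict_of_ae_restrict_of_subset (hF k hk) hGQ, ae_restrict_mem (cell_meas M k)] with x hx hxk
      rw [norm_mul, Real.norm_eq_abs, Real.norm_eq_abs]
      exact mul_le_mul ((hηl x (hF k hk hxk) _ hc).trans (cell_bounded hM k hxk (center_mem hM k))) hx (abs_nonneg _) (by positivity)
    rw [e1]
    refine (abs_add_le _ _).trans (add_le_add ?_ e2)
    rw [abs_mul]
    exact (mul_le_of_le_one_left (abs_nonneg _) (hη _ hc)).trans (he k hk)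
  have h3 : ∑ k ∈ F, ∫ x in cell M k, Q x ≤ ∫ x in Ω, Q x := by
    rw [← integral_biUnion_cell M F fun k hk => hQ.mono_set (hF k hk)]
    refine setIntegral_mono_set hQ ?_ hUΩ.eventuallyLE
    filter_upwards [hGQ] with x hx using (abs_nonneg _).trans hx
  have h4 : |∑ k ∈ F, ∫ x in cell M k, η x * G x| ≤ ∑ k ∈ F, e k + M⁻¹ * (∫ x in Ω, Q x) := by
    refine (Finset.abs_sum_le_sum_abs _ _).trans ((Finset.sum_le_sum h2).trans ?_)
    rw [Finset.sum_add_distrib, ← Finset.mul_sum]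
    have : M⁻¹ * (∑ k ∈ F, ∫ x in cell M k, Q x) ≤ M⁻¹ * (∫ x in Ω, Q x) := mul_le_mul_of_nonneg_left h3 (by positivity)
    linarith
  rw [hsplit]
  exact (abs_add_le _ _).trans (add_le_add h4 h1)
end ETA

section CORE2
variable {n : ℕ} {U V W : Type*} [NormedAddCommGroup V] [InnerProductSpace ℝ V] [FiniteDimensional ℝ V]
  [MeasurableSpace V] [BorelSpace V]
  [NormedAddCommGroup W] [NormedSpace ℝ W] [CompleteSpace W]
  [NormedAddCommGroup U] [NormedSpace ℝ U]

lemma core2 (hn : 0 < n) {A : (Fin n → ℕ) → (V →L[ℝ] W)} {k : ℕ} {B : (Fin n → ℕ) → (U →L[ℝ] V)} {l : ℕ}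
    (hex : ExactPotential A k B l) {Ω : Set (Dom n)} (hΩo : IsOpen Ω) (hΩb : Bornology.IsBounded Ω)
    (Y : YoungMeasure n V Ω) (hJ : Y.JensenAE A k) {ε : ℝ} (hε : 0 < ε) :
    ∃ ψ : Dom n → U, CcSmooth Ω ψ ∧ sobNorm l ψ < ε ∧
      ∀ (η : Dom n → ℝ) (Ψ : V → ℝ), MemH Ψ → etaLipUnit Ω η → TLipUnit Ψ →
        |(∫ x in Ω, η x * Y.pp Ψ x) - ∫ x in Ω, η x * Ψ (Y.baryAC x + opApply B l ψ x)| ≤ ε / 2 := by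
  have hΩv : volume Ω < ⊤ := hΩb.measure_lt_top
  haveI : IsFiniteMeasure (volume.restrict Ω) := ⟨by simpa using hΩv⟩
  have hqi := Y.qq_int hΩv
  set C := ∫ x in Ω, Y.qq x with hC
  have hC0 : 0 ≤ C := integral_nonneg fun x => Y.qq_nonneg x
  set D := 2 * C + 2 with hD
  have hD0 : 0 < D := by positivity
  obtain ⟨S, hS, hS0, hSn⟩ := class_net (V := V) (δ := ε / (8 * D)) (by positivity)
  set τ := min 1 (ε / 16) with hτ
  have hτ0 : 0 < τ := by positivity
  have hτ1 : τ ≤ 1 := min_le_left _ _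
  have hτ2 : τ ≤ ε / 16 := min_le_right _ _
  obtain ⟨M, F, ψ, e, hM, hMs, hψ, hsob, hF, hoff, hcell, hesum, hR⟩ :=
    core1 hn hex hΩo hΩb Y hJ (Φ := fun i : S => (i : V → ℝ)) (fun i => hS i i.2) hε
      (s := ε / (8 * D)) (by positivity) hτ0
  refine ⟨ψ, hψ, hsob, fun η Ψ hΨH hη hΨ => ?_⟩
  obtain ⟨hη1, hηl⟩ := hη.bounds hΩb
  have hηm := hη.aesm hΩo
  set w : Dom n → V := fun x => Y.baryAC x + opApply B l ψ x with hw
  have hwi : IntegrableOn w Ω := (Y.baryAC_int hΩv).add (opApply_integrable B l hψ).integrableOn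
  have hUΩ : (⋃ k ∈ F, cell M k) ⊆ Ω := Set.iUnion₂_subset hF
  have hUm : MeasurableSet (⋃ k ∈ F, cell M k) := Finset.measurableSet_biUnion _ fun k _ => cell_meas _ k
  have hRm := hΩo.measurableSet.diff hUm
  have hHi : ∀ {Φ : V → ℝ}, TLipUnit Φ → IntegrableOn (fun x => Φ (w x)) Ω := fun h => lip_integrableOn h.lip hΩv hwi
  have h0i : IntegrableOn (fun x => 1 + ‖w x‖) Ω := (integrable_const 1).add hwi.norm
  have hQi : IntegrableOn (fun x => Y.qq x + (1 + ‖w x‖)) Ω := hqi.add h0i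
  have hwR : ∀ x ∈ Ω \ ⋃ k ∈ F, cell M k, w x = Y.baryAC x := by
    intro x hx
    have : opApply B l ψ x = 0 := hoff x fun k hk hxk => hx.2 (Set.mem_biUnion (x := k) hk hxk)
    simp [hw, this]
  have hR' : ∫ x in Ω \ ⋃ k ∈ F, cell M k, (Y.qq x + (1 + ‖w x‖)) < τ := by
    rw [setIntegral_congr_fun hRm (g := fun x => Y.qq x + (1 + ‖Y.baryAC x‖)) fun x hx => by simp only [hwR x hx]]
    exact hR
  have hH0 : ∫ x in Ω, (1 + ‖w x‖) ≤ C + 2 := by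
    have hsplit := integral_inter_add_diff hUm h0i
    rw [Set.inter_eq_right.2 hUΩ, integral_biUnion_cell M F fun k hk => h0i.mono_set (hF k hk)] at hsplit
    have h1 : ∫ x in Ω \ ⋃ k ∈ F, cell M k, (1 + ‖w x‖) ≤ ∫ x in Ω \ ⋃ k ∈ F, cell M k, (Y.qq x + (1 + ‖w x‖)) :=
      integral_mono (h0i.mono_set Set.diff_subset) (hQi.mono_set Set.diff_subset) fun x => by
        have := Y.qq_nonneg x
        simp only; linarith
    have h2 : ∀ k ∈ F, ∫ x in cell M k, (1 + ‖w x‖) ≤ e k + ∫ x in cell M k, Y.qq x := by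
      intro k hk
      have e1 := hcell k hk ⟨_, hS0⟩
      have e2 : ∫ x in cell M k, Y.pp (fun z => 1 + ‖z‖) x ≤ ∫ x in cell M k, Y.qq x := by
        refine integral_mono_ae ((Y.pp_int hΩv Phi0_TLip).mono_set (hF k hk)) (hqi.mono_set (hF k hk)) ?_
        filter_upwards [ae_restrict_of_ae_restrict_of_subset (hF k hk) (Y.pp_le Phi0_TLip)] with x hx
        exact (le_abs_self _).trans hx
      have e3 := (abs_le.1 e1).1
      simp only at e3
      linarith
    have h3 := Finset.sum_le_sum h2
    rw [Finset.sum_add_distrib] at h3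
    have h4 : ∑ k ∈ F, ∫ x in cell M k, Y.qq x ≤ C := by
      rw [← integral_biUnion_cell M F fun k hk => hqi.mono_set (hF k hk)]
      exact setIntegral_mono_set hqi (ae_of_all _ fun x => Y.qq_nonneg x) hUΩ.eventuallyLE
    linarith
  have hQD : ∫ x in Ω, (Y.qq x + (1 + ‖w x‖)) ≤ D := by
    rw [integral_add hqi h0i]; linarith
  obtain ⟨Φ, hΦS, hd, hd'⟩ := hSn Ψ hΨH hΨ
  have hΦ := (hS Φ hΦS).2
  have iP := eta_mul_int hΩo hηm hη1 (Y.pp_int hΩv hΨ)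
  have iH := eta_mul_int hΩo hηm hη1 (hHi hΨ)
  have iG : ∀ {Φ : V → ℝ}, TLipUnit Φ → IntegrableOn (fun x => Y.pp Φ x - Φ (w x)) Ω := fun h => (Y.pp_int hΩv h).sub (hHi h)
  have E1 : |∫ x in Ω, η x * (Y.pp Φ x - Φ (w x))| ≤ ∑ k ∈ F, e k + M⁻¹ * (∫ x in Ω, (Y.qq x + (1 + ‖w x‖))) +
      ∫ x in Ω \ ⋃ k ∈ F, cell M k, (Y.qq x + (1 + ‖w x‖)) := by
    refine cells_eta hΩo hM hF hηm hη1 hηl (iG hΦ) hQi ?_ ?_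
    · filter_upwards [Y.pp_le hΦ] with x hx
      exact (abs_sub _ _).trans (add_le_add hx (hΦ.growth _))
    · intro k hk
      rw [integral_sub ((Y.pp_int hΩv hΦ).mono_set (hF k hk)) ((hHi hΦ).mono_set (hF k hk))]
      exact hcell k hk ⟨Φ, hΦS⟩
  have E2 : |∫ x in Ω, η x * ((Y.pp Ψ x - Ψ (w x)) - (Y.pp Φ x - Φ (w x)))| ≤
      ∫ x in Ω, ε / (8 * D) * (Y.qq x + (1 + ‖w x‖)) := by
    refine eta_bound hΩo hη1 (hQi.const_mul _) ?_
    filter_upwards [Y.pp_diff hΦ hΨ hd hd'] with x hx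
    have h1 := hd (w x)
    rw [abs_le] at *
    constructor <;> linarith [hx.1, hx.2, h1.1, h1.2]
  rw [integral_const_mul] at E2
  have hdD : ε / (8 * D) * D = ε / 8 := by field_simp
  have b1 : ε / (8 * D) * (∫ x in Ω, (Y.qq x + (1 + ‖w x‖))) ≤ ε / 8 := by
    rw [← hdD]; exact mul_le_mul_of_nonneg_left hQD (by positivity)
  have b2 : M⁻¹ * (∫ x in Ω, (Y.qq x + (1 + ‖w x‖))) ≤ ε / 8 := by
    rw [← hdD]
    exact mul_le_mul hMs.le hQD (integral_nonneg fun x => add_nonneg (Y.qq_nonneg x) (by positivity)) (by positivity)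
  have e0 : (∫ x in Ω, η x * Y.pp Ψ x) - (∫ x in Ω, η x * Ψ (w x)) =
      (∫ x in Ω, η x * ((Y.pp Ψ x - Ψ (w x)) - (Y.pp Φ x - Φ (w x)))) + ∫ x in Ω, η x * (Y.pp Φ x - Φ (w x)) := by
    rw [← integral_sub iP iH, ← integral_add (f := fun x => η x * ((Y.pp Ψ x - Ψ (w x)) - (Y.pp Φ x - Φ (w x)))) (eta_mul_int hΩo hηm hη1 ((iG hΨ).sub (iG hΦ))) (eta_mul_int hΩo hηm hη1 (iG hΦ))]
    congr 1; ext x; ring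
  rw [e0]
  refine (abs_add_le _ _).trans ?_
  linarith

lemma final (hn : 0 < n) {A : (Fin n → ℕ) → (V →L[ℝ] W)} {k : ℕ} {B : (Fin n → ℕ) → (U →L[ℝ] V)} {l : ℕ}
    (hex : ExactPotential A k B l) {Ω : Set (Dom n)} (hΩo : IsOpen Ω) (hΩb : Bornology.IsBounded Ω)
    (Y : YoungMeasure n V Ω) (hJ : Y.JensenAE A k) {ρ : Dom n → ℝ} (hρ : IsStdMollifier n ρ) {ε : ℝ} (hε : 0 < ε) :
    ∃ tε > (0:ℝ), ∀ t ∈ Set.Ioc (0:ℝ) tε,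
      ∃ ψ : Dom n → U, CcSmooth Ω ψ ∧ sobNorm l ψ < ε ∧
      ∀ (η : Dom n → ℝ) (Ψ : V → ℝ), MemH Ψ → etaLipUnit Ω η → TLipUnit Ψ →
        |(∫ x in Ω, η x * Y.pp Ψ x) - ∫ x in Ω, η x * Ψ (Y.mollACpart ρ t x + opApply B l ψ x)| < ε := by
  have hΩv : volume Ω < ⊤ := hΩb.measure_lt_top
  have hz := Y.baryAC_int hΩv
  have hzi : Integrable (Ω.indicator Y.baryAC) := hz.integrable_indicator hΩo.measurableSet
  obtain ⟨ψ, hψ, hsob, hmain⟩ := core2 hn hex hΩo hΩb Y hJ hε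
  obtain ⟨t0, ht0, hmoll⟩ := moll_conv hρ hzi hΩv (show 0 < ε / 6 by positivity)
  refine ⟨t0, ht0, fun t ht => ⟨ψ, hψ, hsob, fun η Ψ hΨH hη hΨ => ?_⟩⟩
  obtain ⟨hη1, hηl⟩ := hη.bounds hΩb
  have hηm := hη.aesm hΩo
  have hmain := hmain η Ψ hΨH hη hΨ
  obtain ⟨hmi, hml⟩ := hmoll t ht
  have hme : ∀ x, (∫ y, mollK ρ t (x - y) • Ω.indicator Y.baryAC y) = Y.mollACpart ρ t x := by
    intro x
    rw [YoungMeasure.mollACpart, ← integral_indicator hΩo.measurableSet]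
    congr 1; ext y
    by_cases hy : y ∈ Ω <;> simp [hy]
  simp only [hme] at hmi hml
  have hml' : ∫ x in Ω, ‖Y.mollACpart ρ t x - Y.baryAC x‖ < ε / 6 := by
    rwa [setIntegral_congr_fun hΩo.measurableSet (g := fun x => ‖Y.mollACpart ρ t x - Ω.indicator Y.baryAC x‖)
      fun x hx => by simp [Set.indicator_of_mem hx]]
  have hBi : IntegrableOn (opApply B l ψ) Ω := (opApply_integrable B l hψ).integrableOn
  have i1 : IntegrableOn (fun x => Ψ (Y.baryAC x + opApply B l ψ x)) Ω := lip_integrableOn hΨ.lip hΩv (hz.add hBi)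
  have i2 : IntegrableOn (fun x => Ψ (Y.mollACpart ρ t x + opApply B l ψ x)) Ω :=
    lip_integrableOn hΨ.lip hΩv (hmi.integrableOn.add hBi)
  have idf : IntegrableOn (fun x => 3 * ‖Y.mollACpart ρ t x - Y.baryAC x‖) Ω := ((hmi.integrableOn.sub hz).norm).const_mul 3
  have E : |∫ x in Ω, η x * (Ψ (Y.baryAC x + opApply B l ψ x) - Ψ (Y.mollACpart ρ t x + opApply B l ψ x))| ≤
      ∫ x in Ω, 3 * ‖Y.mollACpart ρ t x - Y.baryAC x‖ := by
    refine eta_bound hΩo hη1 idf (ae_of_all _ fun x => ?_)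
    have := lip_abs hΨ.lip (Y.baryAC x + opApply B l ψ x) (Y.mollACpart ρ t x + opApply B l ψ x)
    rw [add_sub_add_right_eq_sub, norm_sub_rev] at this
    simpa using this
  rw [integral_const_mul] at E
  have e0 : ∫ x in Ω, η x * (Ψ (Y.baryAC x + opApply B l ψ x) - Ψ (Y.mollACpart ρ t x + opApply B l ψ x)) =
      (∫ x in Ω, η x * Ψ (Y.baryAC x + opApply B l ψ x)) - ∫ x in Ω, η x * Ψ (Y.mollACpart ρ t x + opApply B l ψ x) := by
    rw [← integral_sub (eta_mul_int hΩo hηm hη1 i1) (eta_mul_int hΩo hηm hη1 i2)]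
    congr 1; ext x; ring
  rw [e0] at E
  rw [abs_lt]
  rw [abs_le] at E hmain
  constructor <;> linarith [E.1, E.2, hmain.1, hmain.2]
end CORE2

/-! ## Statement 6: generation of the regular part (Lemma reggen) -/

theorem stmt6 {n k l : ℕ} (hn : 0 < n) (hk : 0 < k) (hl : 0 < l)
    {V W U : Type*} [NormedAddCommGroup V] [InnerProductSpace ℝ V] [FiniteDimensional ℝ V]
    [MeasurableSpace V] [BorelSpace V]
    [NormedAddCommGroup W] [InnerProductSpace ℝ W] [FiniteDimensional ℝ W]
    [NormedAddCommGroup U] [InnerProductSpace ℝ U] [FiniteDimensional ℝ U]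
    (A : (Fin n → ℕ) → (V →L[ℝ] W)) (B : (Fin n → ℕ) → (U →L[ℝ] V))
    (hspan : SpanningCone A k) (hexact : ExactPotential A k B l)
    (Ω : Set (Dom n)) (hΩo : IsOpen Ω) (hΩb : Bornology.IsBounded Ω)
    (hΩfr : volume (frontier Ω) = 0)
    (Y : YoungMeasure n V Ω) (hYfr : Y.conc (frontier Ω) = 0)
    (hAfree : Y.AFree A k) (hJen : Y.JensenAE A k)
    (ρ : Dom n → ℝ) (hρ : IsStdMollifier n ρ)
    (ε : ℝ) (hε : 0 < ε) :
    ∃ tε > (0:ℝ), ∀ t ∈ Set.Ioc (0:ℝ) tε,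
      ∃ ψ : Dom n → U, CcSmooth Ω ψ ∧ sobNorm l ψ < ε ∧
        ∀ (η : Dom n → ℝ) (Φ : V → ℝ), MemH Φ → etaLipUnit Ω η → TLipUnit Φ →
          |(∫ x in Ω, η x * ((∫ z, Φ z ∂(Y.osc x)) +
              Y.lamA x * ∫ w, rrec Φ (w : V) ∂(Y.ang x))) -
            ∫ x in Ω, η x * Φ (Y.mollACpart ρ t x + opApply B l ψ x)| < ε := by
  haveI : CompleteSpace W := FiniteDimensional.complete ℝ W
  exact final hn hexact hΩo hΩb Y hJen hρ hε


end
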